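/- arXiv:2010.01529 — 6 statements merged into one kernel-verified Lean document; each statement's English description precedes it below -/
import Mathlib

section
/- Let {F_t}_{t≥0} be a family of finite positive Borel measures on [0,∞) satisfying sup_{t≥0} ∫_{[0,∞)} (1+x) dF_t(x) < ∞, and suppose that for every φ ∈ C²_c([0,∞)) and every t ≥ 0, ∫_{[0,∞)} φ dF_t = ∫_{[0,∞)} φ dF₀ + ∫₀^t ( ∫_{[0,∞)²} L[φ](x,y) dF_s(x) dF_s(y) ) ds. Then: (i) F_t conserves mass and energy, i.e. ∫_{[0,∞)} dF_t = ∫_{[0,∞)} dF₀ and ∫_{[0,∞)} x dF_t(x) = ∫_{[0,∞)} x dF₀(x) for all t ≥ 0; and (ii) for every φ ∈ C²_c([0,∞)), the function t ↦ ∫_{[0,∞)} φ dF_t is continuously differentiable on [0,∞) with derivative (d/dt) ∫_{[0,∞)} φ dF_t = ∫_{[0,∞)²} L[φ](x,y) dF_t(x) dF_t(y) for all t ≥ 0. -/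
/-!
Everything rests on the bound `|L[φ](x,y)| ≤ 17 ‖φ''‖_∞ √(max x y)` (`abs_Liso_le`), which makes
the collision form `Q_φ(μ) = ∫∫ L[φ] dμ dμ` at most `17 ‖φ''‖_∞ C²` when `∫ (1 + x) dμ ≤ C`.

*Measurability in time.* The hypothesis does not say that `s ↦ Q_φ(F_s)` is integrable, and the
Bochner integral of a non-integrable function is `0`. Nevertheless `t ↦ ∫₀ᵗ g` is Borel for every
`g`, since it is continuous on the interval where `g` is integrable and zero beyond
(`measurable_primitive_max`). So `t ↦ ∫ φ dF_t` is Borel for all `φ ∈ C²_c`, hence `t ↦ F_t` is a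
measurable family (`measurable_family`), and `s ↦ Q_φ(F_s)` is measurable and bounded after all.

*Conservation.* With `χ` a cutoff, `χ(x/n)` and `x χ(x/n)` have second derivatives of order `n⁻²`
and `n⁻¹`, so the collision term vanishes in the limit, and dominated convergence gives
conservation of `∫ 1 dF_t` and `∫ x dF_t` (`WeakSol.conserved`).

*Differentiability.* `t ↦ ∫ φ dF_t` is continuous for `φ ∈ C²_c`, and the moment bound extends this
to bounded `C²` functions, in particular to characteristic functions. As the mass is constant,
Lévy's theorem yields weak continuity of `t ↦ F_t`, hence of `t ↦ F_t ⊗ F_t`. For `φ ∈ C²_c` the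
kernel `L[φ]` is bounded and continuous on `[0,∞)²`, so `t ↦ Q_φ(F_t)` is continuous
(`WeakSol.continuous_Q`), and the fundamental theorem of calculus concludes.
-/


open MeasureTheory Real Filter
open scoped Topology ENNReal

noncomputable section

/-- The isotropic Landau kernel
`L[φ](x,y) = (4π/√(max x y)) ((2/3)(φ''(x)+φ''(y)) min x y − (φ'(x)−φ'(y)) sgn(x−y))`,
with `L[φ](0,0) = 0` (via the convention `r/0 = 0`). -/
noncomputable def Liso (φ : ℝ → ℝ) (x y : ℝ) : ℝ :=
  (4 * π / Real.sqrt (max x y)) *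
    ((2 / 3) * (deriv (deriv φ) x + deriv (deriv φ) y) * min x y -
      (deriv φ x - deriv φ y) * Real.sign (x - y))

/-! ### The kernel -/

lemma Liso_eq (φ : ℝ → ℝ) (x y : ℝ) :
    Liso φ x y = (4 * π / Real.sqrt (max x y)) *
      ((2 / 3) * (deriv (deriv φ) x + deriv (deriv φ) y) * min x y -
        (deriv φ (max x y) - deriv φ (min x y))) := by
  unfold Liso
  rcases lt_trichotomy x y with h | h | h
  · rw [max_eq_right h.le, min_eq_left h.le, Real.sign_of_neg (by linarith)]; ring
  · subst h; simp
  · rw [max_eq_left h.le, min_eq_right h.le, Real.sign_of_pos (by linarith)]; ring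

lemma contDiff_two_derivs {φ : ℝ → ℝ} (hφ : ContDiff ℝ 2 φ) :
    Continuous (deriv φ) ∧ Differentiable ℝ (deriv φ) ∧ Continuous (deriv (deriv φ)) := by
  have h1 : ContDiff ℝ 1 (deriv φ) := by
    have h : ContDiff ℝ (1 + 1) φ := by simpa [one_add_one_eq_two] using hφ
    exact (contDiff_succ_iff_deriv.1 h).2.2
  exact ⟨h1.continuous, h1.differentiable (by simp), h1.continuous_deriv (by simp)⟩

/-- The growth estimate `|L[φ](x,y)| ≤ C₀ ‖φ''‖_∞ √(max x y)`, where `C₀ = 17 ≥ 16π/3`: by the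
mean value inequality the bracket in `L[φ]` is at most `‖φ''‖_∞ (4/3 min x y + |x - y|)`. -/
lemma abs_Liso_le {φ : ℝ → ℝ} (hφ : ContDiff ℝ 2 φ) {M : ℝ}
    (hM : ∀ x, |deriv (deriv φ) x| ≤ M) {x y : ℝ} (hx : 0 ≤ x) (hy : 0 ≤ y) :
    |Liso φ x y| ≤ 17 * M * √(max x y) := by
  have hM0 : 0 ≤ M := (abs_nonneg _).trans (hM 0)
  obtain ⟨-, hd, -⟩ := contDiff_two_derivs hφ
  rw [Liso_eq]
  set m := max x y
  set n := min x y
  have hn : 0 ≤ n := le_min hx hy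
  have hnm : n ≤ m := min_le_max
  have hm : 0 ≤ m := hn.trans hnm
  have h1 : |deriv φ m - deriv φ n| ≤ M * (m - n) := by
    have := Convex.norm_image_sub_le_of_norm_deriv_le (f := deriv φ) (C := M) (s := Set.univ)
      (x := n) (y := m) (fun z _ => hd z) (fun z _ => hM z) convex_univ trivial trivial
    rwa [Real.norm_eq_abs, Real.norm_eq_abs, abs_of_nonneg (a := m - n) (by linarith)] at this
  have h2 : |(2 / 3) * (deriv (deriv φ) x + deriv (deriv φ) y) * n| ≤ 4 / 3 * M * n := by
    rw [abs_mul, abs_of_nonneg hn]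
    gcongr
    have ha := abs_le.1 (hM x)
    have hb := abs_le.1 (hM y)
    rw [abs_le]; constructor <;> linarith
  rw [abs_mul]
  rcases hm.eq_or_lt with h0 | hpos
  · rw [← h0]; simp
  have hs : 0 < √m := Real.sqrt_pos.2 hpos
  have hB : |(2 / 3) * (deriv (deriv φ) x + deriv (deriv φ) y) * n - (deriv φ m - deriv φ n)|
      ≤ 4 / 3 * M * m := by
    refine (abs_sub _ _).trans ?_
    nlinarith [mul_le_mul_of_nonneg_left hnm hM0]
  have hpi : π ≤ 3.15 := Real.pi_lt_d2.le
  calc _ ≤ (4 * π / √m) * (4 / 3 * M * m) := by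
        rw [abs_of_nonneg (a := 4 * π / √m) (by positivity)]
        gcongr
    _ = (16 / 3 * π) * M * √m := by
        nth_rewrite 2 [← Real.mul_self_sqrt hm]
        field_simp
        ring
    _ ≤ 17 * M * √m := by
        gcongr
        linarith

/-- The kernel `L[φ]`, precomposed with the retraction of `ℝ²` onto `[0,∞)²`. -/
def Lext (φ : ℝ → ℝ) (p : ℝ × ℝ) : ℝ := Liso φ (max p.1 0) (max p.2 0)

lemma exists_bound_of_hasCompactSupport {f : ℝ → ℝ} (hf : Continuous f)
    (hs : HasCompactSupport f) : ∃ M, ∀ x, |f x| ≤ M :=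
  hs.exists_bound_of_continuous hf

lemma continuous_Lext {φ : ℝ → ℝ} (hφ : ContDiff ℝ 2 φ) (hs : HasCompactSupport φ) :
    Continuous (Lext φ) := by
  obtain ⟨h1, -, h2⟩ := contDiff_two_derivs hφ
  obtain ⟨M, hM⟩ := exists_bound_of_hasCompactSupport h2 hs.deriv.deriv
  rw [continuous_iff_continuousAt]
  intro p
  have hm0 : Continuous fun q : ℝ × ℝ => max (max q.1 0) (max q.2 0) := by fun_prop
  rcases (le_max_of_le_left (le_max_right p.1 0) :
    0 ≤ max (max p.1 0) (max p.2 0)).eq_or_lt with h | h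
  -- At a point retracted to the origin the growth estimate forces `L[φ] → 0 = L[φ](0,0)`.
  · have hval : Lext φ p = 0 := by
      unfold Lext; rw [Liso_eq, ← h]; simp
    unfold ContinuousAt
    rw [hval]
    refine squeeze_zero_norm (a := fun q : ℝ × ℝ => 17 * M * √(max (max q.1 0) (max q.2 0)))
      (fun q => abs_Liso_le hφ hM (le_max_right _ _) (le_max_right _ _)) ?_
    have hc : Continuous fun q : ℝ × ℝ => 17 * M * √(max (max q.1 0) (max q.2 0)) := by fun_prop
    have := hc.tendsto p
    rwa [← h, Real.sqrt_zero, mul_zero] at this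
  · have : Lext φ = fun q : ℝ × ℝ => (4 * π / √(max (max q.1 0) (max q.2 0))) *
      ((2 / 3) * (deriv (deriv φ) (max q.1 0) + deriv (deriv φ) (max q.2 0)) *
        min (max q.1 0) (max q.2 0) - (deriv φ (max (max q.1 0) (max q.2 0)) -
          deriv φ (min (max q.1 0) (max q.2 0)))) := by
      funext q; exact Liso_eq _ _ _
    rw [this]
    refine ContinuousAt.mul (ContinuousAt.div continuousAt_const ?_ (Real.sqrt_pos.2 h).ne') ?_
    · exact hm0.sqrt.continuousAt
    · exact Continuous.continuousAt (by fun_prop)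

lemma exists_bound_Lext {φ : ℝ → ℝ} (hφ : ContDiff ℝ 2 φ) (hs : HasCompactSupport φ) :
    ∃ B, ∀ p, |Lext φ p| ≤ B := by
  obtain ⟨h1, -, h2⟩ := contDiff_two_derivs hφ
  obtain ⟨M, hM⟩ := exists_bound_of_hasCompactSupport h2 hs.deriv.deriv
  obtain ⟨M₁, hM₁⟩ := exists_bound_of_hasCompactSupport h1 hs.deriv
  obtain ⟨M₂, hM₂⟩ := exists_bound_of_hasCompactSupport (f := fun x => deriv (deriv φ) x * x)
    (h2.mul continuous_id) hs.deriv.deriv.mul_right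
  have hM0 : 0 ≤ M := (abs_nonneg _).trans (hM 0)
  have hM10 : 0 ≤ M₁ := (abs_nonneg _).trans (hM₁ 0)
  have hM20 : 0 ≤ M₂ := (abs_nonneg _).trans (hM₂ 0)
  refine ⟨17 * M + 4 * π * (4 / 3 * M₂ + 2 * M₁), fun p => ?_⟩
  have hx : 0 ≤ max p.1 0 := le_max_right _ _
  have hy : 0 ≤ max p.2 0 := le_max_right _ _
  unfold Lext
  generalize max p.1 0 = x at hx ⊢
  generalize max p.2 0 = y at hy ⊢
  rcases le_total (max x y) 1 with h | h
  · have hb := abs_Liso_le hφ hM hx hy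
    have : √(max x y) ≤ 1 := Real.sqrt_le_one.2 h
    have h3 : 17 * M * √(max x y) ≤ 17 * M * 1 := by gcongr
    have : 0 ≤ 4 * π * (4 / 3 * M₂ + 2 * M₁) := by positivity
    linarith
  · rw [Liso_eq, abs_mul]
    have hn : 0 ≤ min x y := le_min hx hy
    have hA : |4 * π / √(max x y)| ≤ 4 * π := by
      rw [abs_of_nonneg (by positivity)]
      exact div_le_self (by positivity) (Real.one_le_sqrt.2 h)
    have key : ∀ z w, 0 ≤ w → w ≤ z → |deriv (deriv φ) z * w| ≤ M₂ := fun z w hw hwz => by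
      refine le_trans ?_ (hM₂ z)
      rw [abs_mul, abs_mul, abs_of_nonneg hw, abs_of_nonneg (hw.trans hwz)]
      gcongr
    have ka := abs_le.1 (key x _ hn (min_le_left x y))
    have kb := abs_le.1 (key y _ hn (min_le_right x y))
    have kc := abs_le.1 (hM₁ (max x y))
    have kd := abs_le.1 (hM₁ (min x y))
    have hB : |(2 / 3) * (deriv (deriv φ) x + deriv (deriv φ) y) * min x y -
        (deriv φ (max x y) - deriv φ (min x y))| ≤ 4 / 3 * M₂ + 2 * M₁ := by
      rw [abs_le]; constructor <;> nlinarith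
    have := mul_le_mul hA hB (abs_nonneg _) (by positivity)
    have : 0 ≤ 17 * M := by positivity
    linarith

/-! ### The collision form of a single measure -/

/-- `μ` is a finite measure carried by `[0,∞)` with `∫ (1 + x) dμ ≤ C`. -/
structure MomentBound (C : ℝ) (μ : Measure ℝ) : Prop where
  nonneg_const : 0 ≤ C
  finite : IsFiniteMeasure μ
  ae_nonneg : ∀ᵐ x ∂μ, 0 ≤ x
  lintegral_le : ∫⁻ x, ENNReal.ofReal (1 + x) ∂μ ≤ ENNReal.ofReal C

/-- The collision form `∫∫ L[φ](x,y) dμ(y) dμ(x)`. -/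
def Qform (φ : ℝ → ℝ) (μ : Measure ℝ) : ℝ := ∫ x, ∫ y, Liso φ x y ∂μ ∂μ

namespace MomentBound

variable {C : ℝ} {μ : Measure ℝ}

lemma integrable (h : MomentBound C μ) : Integrable (fun x => 1 + x) μ := by
  refine ⟨by fun_prop, ?_⟩
  rw [hasFiniteIntegral_iff_ofReal]
  · exact h.lintegral_le.trans_lt ENNReal.ofReal_lt_top
  · filter_upwards [h.ae_nonneg] with x hx
    simp only [Pi.zero_apply]; linarith

lemma integral_le (h : MomentBound C μ) : ∫ x, (1 + x) ∂μ ≤ C := by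
  rw [integral_eq_lintegral_of_nonneg_ae _ h.integrable.aestronglyMeasurable]
  · exact ENNReal.toReal_le_of_le_ofReal h.nonneg_const h.lintegral_le
  · filter_upwards [h.ae_nonneg] with x hx
    simp only [Pi.zero_apply]; linarith

lemma integrable_of_bounded (h : MomentBound C μ) {f : ℝ → ℝ} (hf : Continuous f) {B : ℝ}
    (hB : ∀ x, |f x| ≤ B) : Integrable f μ := by
  have := h.finite
  exact Integrable.of_bound hf.aestronglyMeasurable B (ae_of_all _ hB)

lemma integrable_Lext (h : MomentBound C μ) {φ : ℝ → ℝ} (hφ : ContDiff ℝ 2 φ)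
    (hs : HasCompactSupport φ) : Integrable (Lext φ) (μ.prod μ) := by
  have := h.finite
  obtain ⟨B, hB⟩ := exists_bound_Lext hφ hs
  exact Integrable.of_bound (continuous_Lext hφ hs).aestronglyMeasurable B (ae_of_all _ hB)

lemma Qform_eq (h : MomentBound C μ) {φ : ℝ → ℝ} (hφ : ContDiff ℝ 2 φ)
    (hs : HasCompactSupport φ) : Qform φ μ = ∫ p, Lext φ p ∂(μ.prod μ) := by
  have := h.finite
  rw [integral_prod _ (h.integrable_Lext hφ hs)]
  refine integral_congr_ae ?_
  filter_upwards [h.ae_nonneg] with x hx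
  refine integral_congr_ae ?_
  filter_upwards [h.ae_nonneg] with y hy
  simp [Lext, max_eq_left hx, max_eq_left hy]

/-- The collision form is controlled by `‖φ''‖_∞` and the first moment. -/
lemma abs_Qform_le (h : MomentBound C μ) {φ : ℝ → ℝ} (hφ : ContDiff ℝ 2 φ)
    (hs : HasCompactSupport φ) {M : ℝ} (hM : ∀ x, |deriv (deriv φ) x| ≤ M) :
    |Qform φ μ| ≤ 17 * M * C ^ 2 := by
  have := h.finite
  have hM0 : 0 ≤ M := (abs_nonneg _).trans (hM 0)
  rw [h.Qform_eq hφ hs]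
  have hint : Integrable (fun p : ℝ × ℝ => 17 * M * ((1 + p.1) * (1 + p.2))) (μ.prod μ) :=
    (h.integrable.mul_prod h.integrable).const_mul _
  have h1 : ∀ᵐ p ∂(μ.prod μ), 0 ≤ p.1 := Measure.quasiMeasurePreserving_fst.ae h.ae_nonneg
  have h2 : ∀ᵐ p ∂(μ.prod μ), 0 ≤ p.2 := Measure.quasiMeasurePreserving_snd.ae h.ae_nonneg
  have hle : ‖∫ p, Lext φ p ∂(μ.prod μ)‖ ≤ ∫ p, 17 * M * ((1 + p.1) * (1 + p.2)) ∂(μ.prod μ) := by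
    refine norm_integral_le_of_norm_le hint ?_
    filter_upwards [h1, h2] with p hp1 hp2
    refine (abs_Liso_le hφ hM (le_max_right _ _) (le_max_right _ _)).trans ?_
    rw [max_eq_left hp1, max_eq_left hp2]
    gcongr
    rw [Real.sqrt_le_left (by positivity)]
    have ha : max p.1 p.2 ≤ p.1 + p.2 := max_le (by linarith) (by linarith)
    have hb : p.1 + p.2 ≤ (1 + p.1) * (1 + p.2) := by nlinarith [mul_nonneg hp1 hp2]
    have hc : 1 ≤ (1 + p.1) * (1 + p.2) := by nlinarith [mul_nonneg hp1 hp2]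
    nlinarith
  refine hle.trans ?_
  rw [integral_const_mul, integral_prod_mul (fun x => 1 + x) (fun x => 1 + x)]
  have h0 : 0 ≤ ∫ x, (1 + x) ∂μ := integral_nonneg_of_ae (by
    filter_upwards [h.ae_nonneg] with x hx
    simp only [Pi.zero_apply]; linarith)
  rw [sq]
  exact mul_le_mul_of_nonneg_left
    (mul_le_mul h.integral_le h.integral_le h0 h.nonneg_const) (by positivity)

end MomentBound

/-! ### Cutoff functions -/

/-- The bump at `c` equal to `1` on the closed ball of radius `r` and supported in the ball of
radius `R`. -/
def bump (c r R : ℝ) (h0 : 0 < r) (h1 : r < R) : ContDiffBump c := ⟨r, R, h0, h1⟩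

/-- A fixed smooth cutoff, equal to `1` on `[-1,1]` and to `0` off `(-2,2)`. -/
def chi : ℝ → ℝ := bump 0 1 2 one_pos one_lt_two

lemma contDiff_chi : ContDiff ℝ 2 chi := (bump 0 1 2 one_pos one_lt_two).contDiff

lemma hasCompactSupport_chi : HasCompactSupport chi :=
  (bump 0 1 2 one_pos one_lt_two).hasCompactSupport

lemma chi_nonneg (x : ℝ) : 0 ≤ chi x := ContDiffBump.nonneg _

lemma chi_le_one (x : ℝ) : chi x ≤ 1 := ContDiffBump.le_one _

lemma chi_eq_one {x : ℝ} (hx : |x| ≤ 1) : chi x = 1 :=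
  ContDiffBump.one_of_mem_closedBall _ (by simpa [bump] using hx)

lemma one_sub_chi_le {x : ℝ} (hx : 0 ≤ x) : 1 - chi x ≤ x := by
  rcases le_total x 1 with h | h
  · rw [chi_eq_one (by rwa [abs_of_nonneg hx])]; linarith
  · linarith [chi_nonneg x]

lemma hasCompactSupport_scale {ψ : ℝ → ℝ} (hs : HasCompactSupport ψ) (N : ℝ) (hN : 0 < N) :
    HasCompactSupport (fun x => ψ (x / N)) := by
  have := hs.comp_homeomorph (Homeomorph.mulRight₀ N⁻¹ (inv_ne_zero hN.ne'))
  simpa [Function.comp_def, div_eq_mul_inv] using this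

lemma deriv_deriv_scale (ψ : ℝ → ℝ) (a N x : ℝ) :
    deriv (deriv (fun x => a * ψ (x / N))) x = a / N ^ 2 * deriv (deriv ψ) (x / N) := by
  have h (f : ℝ → ℝ) (b : ℝ) :
      deriv (fun x => b * f (x / N)) = fun x => b / N * deriv f (x / N) := by
    funext y
    simp only [div_eq_inv_mul]
    rw [deriv_const_mul_field, deriv_comp_mul_left]
    simp only [smul_eq_mul]
    ring
  rw [h, h]
  ring

lemma tendsto_chi_scale (x : ℝ) :
    Tendsto (fun n : ℕ => chi (x / (n + 1))) atTop (𝓝 1) := by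
  refine tendsto_const_nhds.congr' ?_
  filter_upwards [eventually_ge_atTop ⌈|x|⌉₊] with n hn
  have h1 : |x| ≤ n := (Nat.le_ceil _).trans (by exact_mod_cast hn)
  have h2 : (0 : ℝ) < n + 1 := by positivity
  rw [chi_eq_one]
  rw [abs_div, abs_of_pos h2, div_le_one h2]
  linarith

/-! ### Measurability in time -/

/-- The primitive of an arbitrary function is Borel on `[0,∞)`, even though the Bochner integral
takes the value `0` once `g` fails to be integrable: integrability on `[0,t]` holds exactly for
`t` in an interval, the primitive is continuous on it and constant off it. -/
lemma measurable_primitive_max (g : ℝ → ℝ) :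
    Measurable fun t : ℝ => ∫ s in (0 : ℝ)..max t 0, g s := by
  classical
  set S : Set ℝ := {t | 0 ≤ t ∧ IntervalIntegrable g volume 0 t} with hS
  have hdown : ∀ t ∈ S, Set.Icc 0 t ⊆ S := fun t ht s hs =>
    ⟨hs.1, ht.2.mono_set (by
      rw [Set.uIcc_of_le hs.1, Set.uIcc_of_le ht.1]
      exact Set.Icc_subset_Icc_right hs.2)⟩
  have hmeas : MeasurableSet S := by
    have : S.OrdConnected := ⟨fun a ha b hb c hc => hdown b hb ⟨ha.1.trans hc.1, hc.2⟩⟩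
    exact this.measurableSet
  have hcontIcc : ∀ t ∈ S, ContinuousOn (fun t : ℝ => ∫ s in (0 : ℝ)..t, g s) (Set.Icc 0 t) := by
    intro t ht
    have := intervalIntegral.continuousOn_primitive_interval' ht.2 Set.left_mem_uIcc
    rwa [Set.uIcc_of_le ht.1] at this
  have hcont : ContinuousOn (fun t : ℝ => ∫ s in (0 : ℝ)..t, g s) S := by
    intro t ht
    by_cases hex : ∃ t' ∈ S, t < t'
    · obtain ⟨t', ht', hlt⟩ := hex
      refine (hcontIcc t' ht' t ⟨ht.1, hlt.le⟩).mono_of_mem_nhdsWithin ?_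
      filter_upwards [self_mem_nhdsWithin, mem_nhdsWithin_of_mem_nhds (Iio_mem_nhds hlt)]
        with s hs hs'
      exact ⟨hs.1, le_of_lt hs'⟩
    · push Not at hex
      exact (hcontIcc t ht t ⟨ht.1, le_rfl⟩).mono fun s hs => ⟨hs.1, hex s hs⟩
  have hpw := hcont.measurable_piecewise (g := fun _ => (0 : ℝ)) continuousOn_const hmeas
  have heq : (fun t : ℝ => ∫ s in (0 : ℝ)..max t 0, g s) =
      fun t => S.piecewise (fun t : ℝ => ∫ s in (0 : ℝ)..t, g s) (fun _ => 0) (max t 0) := by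
    funext t
    by_cases h : max t 0 ∈ S
    · rw [Set.piecewise_eq_of_mem _ _ _ h]
    · rw [Set.piecewise_eq_of_notMem _ _ _ h]
      exact intervalIntegral.integral_undef fun hi => h ⟨le_max_right _ _, hi⟩
  rw [heq]
  exact hpw.comp (measurable_id.max measurable_const)

/-- A family of finite measures whose integrals against `C²_c` functions are measurable in the
parameter is measurable: bounded open intervals and the whole line are limits of bumps. -/
lemma measurable_family {G : ℝ → Measure ℝ} [∀ t, IsFiniteMeasure (G t)]
    (h : ∀ φ : ℝ → ℝ, ContDiff ℝ 2 φ → HasCompactSupport φ →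
      Measurable fun t => ∫ x, φ x ∂(G t)) : Measurable G := by
  -- A set whose indicator is a pointwise limit of `C²_c` functions with values in `[0,1]`.
  have key : ∀ (U : Set ℝ), MeasurableSet U → ∀ φ : ℕ → ℝ → ℝ, (∀ n, ContDiff ℝ 2 (φ n)) →
      (∀ n, HasCompactSupport (φ n)) → (∀ n x, |φ n x| ≤ 1) →
      (∀ x, Tendsto (fun n => φ n x) atTop (𝓝 (U.indicator (fun _ => 1) x))) →
      Measurable fun t => G t U := by
    intro U hU φ h1 h2 h3 h4
    have hreal : Measurable fun t => (G t).real U := by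
      refine measurable_of_tendsto_metrizable (fun n => h (φ n) (h1 n) (h2 n)) ?_
      rw [tendsto_pi_nhds]
      intro t
      have := tendsto_integral_of_dominated_convergence (μ := G t) (F := φ)
        (f := U.indicator (fun _ => (1 : ℝ))) (fun _ => (1 : ℝ))
        (fun n => (h1 n).continuous.aestronglyMeasurable) (integrable_const _)
        (fun n => ae_of_all _ (h3 n)) (ae_of_all _ h4)
      simpa [integral_indicator hU] using this
    have : (fun t => G t U) = fun t => ENNReal.ofReal ((G t).real U) := by
      funext t; simp
    rw [this]
    exact hreal.ennreal_ofReal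
  refine Measurable.measure_of_isPiSystem
    (BorelSpace.measurable_eq.trans Real.borel_eq_generateFrom_Ioo_rat)
    Real.isPiSystem_Ioo_rat ?_ ?_
  · intro s hs
    simp only [Set.mem_iUnion, Set.mem_singleton_iff] at hs
    obtain ⟨a, b, hab, rfl⟩ := hs
    have hab' : (a : ℝ) < b := by exact_mod_cast hab
    set r : ℝ := ((b : ℝ) - a) / 2 with hr
    have hr0 : 0 < r := by rw [hr]; linarith
    have hq : ∀ n : ℕ, (0 : ℝ) < (n + 1) / (n + 2) ∧ ((n : ℝ) + 1) / (n + 2) < 1 := fun n =>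
      ⟨by positivity, by rw [div_lt_one (by positivity)]; linarith⟩
    let φ : ℕ → ContDiffBump (((a : ℝ) + b) / 2) := fun n =>
      bump _ (r * ((n + 1) / (n + 2))) r (mul_pos hr0 (hq n).1)
        (mul_lt_of_lt_one_right hr0 (hq n).2)
    refine key _ measurableSet_Ioo (fun n => φ n) (fun n => (φ n).contDiff)
      (fun n => (φ n).hasCompactSupport)
      (fun n x => by rw [abs_of_nonneg (φ n).nonneg]; exact (φ n).le_one) ?_
    intro x
    have hball : Set.Ioo (a : ℝ) b = Metric.ball (((a : ℝ) + b) / 2) r := Real.Ioo_eq_ball _ _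
    rw [hball]
    by_cases hx : x ∈ Metric.ball (((a : ℝ) + b) / 2) r
    · rw [Set.indicator_of_mem hx]
      refine tendsto_const_nhds.congr' ?_
      have ht : Tendsto (fun n : ℕ => r * (((n : ℝ) + 1) / (n + 2))) atTop (𝓝 (r * 1)) := by
        refine Tendsto.const_mul _ ?_
        have h1 : Tendsto (fun n : ℕ => 1 - 1 / (((n + 1 : ℕ) : ℝ) + 1)) atTop (𝓝 (1 - 0)) :=
          tendsto_const_nhds.sub
            ((tendsto_add_atTop_iff_nat 1).2 tendsto_one_div_add_atTop_nhds_zero_nat)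
        rw [sub_zero] at h1
        refine h1.congr fun n => ?_
        push_cast
        field_simp
        ring
      rw [mul_one] at ht
      filter_upwards [ht.eventually (lt_mem_nhds (Metric.mem_ball.1 hx))] with n hn
      exact ((φ n).one_of_mem_closedBall (Metric.mem_closedBall.2 (le_of_lt hn))).symm
    · rw [Set.indicator_of_notMem hx]
      refine tendsto_const_nhds.congr fun n => ?_
      exact ((φ n).zero_of_le_dist (not_lt.1 fun hlt => hx (Metric.mem_ball.2 hlt))).symm
  · refine key _ MeasurableSet.univ (fun n x => chi (x / (n + 1))) (fun n => ?_) (fun n => ?_)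
      (fun n x => ?_) (fun x => ?_)
    · exact contDiff_chi.comp (by fun_prop)
    · exact hasCompactSupport_scale hasCompactSupport_chi _ (by positivity)
    · rw [abs_of_nonneg (chi_nonneg _)]; exact chi_le_one _
    · simpa using tendsto_chi_scale x

lemma measurable_Qform {C : ℝ} {G : ℝ → Measure ℝ} (hG : ∀ t, MomentBound C (G t))
    (hm : Measurable G) {φ : ℝ → ℝ} (hφ : ContDiff ℝ 2 φ) (hs : HasCompactSupport φ) :
    Measurable fun t => Qform φ (G t) := by
  have := fun t => (hG t).finite
  have heq : (fun t => Qform φ (G t)) = fun t => ∫ p, Lext φ p ∂((G t).prod (G t)) := by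
    funext t; exact (hG t).Qform_eq hφ hs
  rw [heq]
  let κ : ProbabilityTheory.Kernel ℝ ℝ := ⟨G, hm⟩
  have hκ : ProbabilityTheory.IsFiniteKernel κ := by
    refine ⟨ENNReal.ofReal C, ENNReal.ofReal_lt_top, fun t => ?_⟩
    refine le_trans ?_ (hG t).lintegral_le
    calc κ t Set.univ = ∫⁻ _, 1 ∂(G t) := by simp [κ]
      _ ≤ _ := by
        refine lintegral_mono_ae ?_
        filter_upwards [(hG t).ae_nonneg] with x hx
        rw [ENNReal.one_le_ofReal]; linarith
  have := (StronglyMeasurable.integral_kernel (κ := κ.prod κ)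
    (continuous_Lext hφ hs).stronglyMeasurable).measurable
  simpa [ProbabilityTheory.Kernel.prod_apply, κ] using this

/-! ### Weak solutions -/

/-- A weak solution in integrated form, as a family indexed by all of `ℝ` and frozen for negative
times: hence the upper limit `max t 0`. -/
structure WeakSol (C : ℝ) (G : ℝ → Measure ℝ) : Prop where
  moment : ∀ t, MomentBound C (G t)
  weak : ∀ φ : ℝ → ℝ, ContDiff ℝ 2 φ → HasCompactSupport φ → ∀ t : ℝ,
    ∫ x, φ x ∂(G t) = ∫ x, φ x ∂(G 0) + ∫ s in (0 : ℝ)..max t 0, Qform φ (G s)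

namespace WeakSol

variable {C : ℝ} {G : ℝ → Measure ℝ}

lemma measurable_Q (h : WeakSol C G) {φ : ℝ → ℝ} (hφ : ContDiff ℝ 2 φ)
    (hs : HasCompactSupport φ) : Measurable fun t => Qform φ (G t) := by
  have := fun t => (h.moment t).finite
  refine measurable_Qform h.moment (measurable_family fun ψ hψ hψs => ?_) hφ hs
  have heq : (fun t => ∫ x, ψ x ∂(G t)) = fun t =>
      ∫ x, ψ x ∂(G 0) + ∫ s in (0 : ℝ)..max t 0, Qform ψ (G s) := funext (h.weak ψ hψ hψs)
  rw [heq]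
  exact (measurable_primitive_max _).const_add _

lemma intervalIntegrable_Q (h : WeakSol C G) {φ : ℝ → ℝ} (hφ : ContDiff ℝ 2 φ)
    (hs : HasCompactSupport φ) (a b : ℝ) :
    IntervalIntegrable (fun t => Qform φ (G t)) volume a b := by
  obtain ⟨-, -, h2⟩ := contDiff_two_derivs hφ
  obtain ⟨M, hM⟩ := exists_bound_of_hasCompactSupport h2 hs.deriv.deriv
  refine (intervalIntegrable_const (c := 17 * M * C ^ 2)).mono_fun
    (h.measurable_Q hφ hs).aestronglyMeasurable (ae_of_all _ fun t => ?_)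
  exact ((h.moment t).abs_Qform_le hφ hs hM).trans (le_abs_self _)

lemma continuous_integral (h : WeakSol C G) {φ : ℝ → ℝ} (hφ : ContDiff ℝ 2 φ)
    (hs : HasCompactSupport φ) : Continuous fun t => ∫ x, φ x ∂(G t) := by
  have heq : (fun t => ∫ x, φ x ∂(G t)) = fun t =>
      ∫ x, φ x ∂(G 0) + ∫ s in (0 : ℝ)..max t 0, Qform φ (G s) := funext (h.weak φ hφ hs)
  rw [heq]
  exact continuous_const.add ((intervalIntegral.continuous_primitive
    (h.intervalIntegrable_Q hφ hs) 0).comp (continuous_id.max continuous_const))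

/-- Conservation of `∫ f dG_t` for an `f` of at most linear growth that is a limit of `C²_c`
functions `φₙ` with `‖φₙ''‖_∞ → 0`. -/
lemma conserved (h : WeakSol C G) {f : ℝ → ℝ} {φ : ℕ → ℝ → ℝ} (h1 : ∀ n, ContDiff ℝ 2 (φ n))
    (h2 : ∀ n, HasCompactSupport (φ n)) {M : ℕ → ℝ} (hM : ∀ n x, |deriv (deriv (φ n)) x| ≤ M n)
    (hM0 : Tendsto M atTop (𝓝 0)) (hb : ∀ n x, 0 ≤ x → |φ n x| ≤ 1 + x)
    (hlim : ∀ x, Tendsto (fun n => φ n x) atTop (𝓝 (f x))) (t : ℝ) :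
    ∫ x, f x ∂(G t) = ∫ x, f x ∂(G 0) := by
  have hconv : ∀ s, Tendsto (fun n => ∫ x, φ n x ∂(G s)) atTop (𝓝 (∫ x, f x ∂(G s))) := by
    intro s
    refine tendsto_integral_of_dominated_convergence (fun x => 1 + x)
      (fun n => (h1 n).continuous.aestronglyMeasurable) (h.moment s).integrable
      (fun n => ?_) (ae_of_all _ hlim)
    filter_upwards [(h.moment s).ae_nonneg] with x hx using hb n x hx
  have hQ : Tendsto (fun n => ∫ s in (0 : ℝ)..max t 0, Qform (φ n) (G s)) atTop (𝓝 0) := by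
    refine squeeze_zero_norm (a := fun n => 17 * M n * C ^ 2 * |max t 0 - 0|) (fun n => ?_) ?_
    · exact intervalIntegral.norm_integral_le_of_norm_le_const fun s _ =>
        (h.moment s).abs_Qform_le (h1 n) (h2 n) (hM n)
    · simpa using ((hM0.const_mul 17).mul_const (C ^ 2)).mul_const |max t 0 - 0|
  have hsum := (hconv 0).add hQ
  rw [add_zero] at hsum
  refine tendsto_nhds_unique (hconv t) (hsum.congr fun n => ?_)
  exact (h.weak (φ n) (h1 n) (h2 n) t).symm

lemma tendsto_div_nat_add_one (K : ℝ) :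
    Tendsto (fun n : ℕ => K / ((n : ℝ) + 1)) atTop (𝓝 0) := by
  simpa [div_eq_mul_inv] using (tendsto_one_div_add_atTop_nhds_zero_nat (𝕜 := ℝ)).const_mul K

lemma mass (h : WeakSol C G) (t : ℝ) : G t Set.univ = G 0 Set.univ := by
  have := fun t => (h.moment t).finite
  obtain ⟨-, -, hd⟩ := contDiff_two_derivs contDiff_chi
  obtain ⟨M, hM⟩ := exists_bound_of_hasCompactSupport hd hasCompactSupport_chi.deriv.deriv
  have hM0 : 0 ≤ M := (abs_nonneg _).trans (hM 0)
  have key := h.conserved (f := fun _ => (1 : ℝ)) (φ := fun n x => chi (x / (n + 1)))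
    (M := fun n => M / (n + 1))
    (fun n => contDiff_chi.comp (by fun_prop))
    (fun n => hasCompactSupport_scale hasCompactSupport_chi _ (by positivity))
    (fun n x => ?_) (tendsto_div_nat_add_one M) (fun n x hx => ?_) tendsto_chi_scale t
  · simp only [integral_const, smul_eq_mul, mul_one] at key
    exact (measureReal_eq_measureReal_iff).1 key
  · have := deriv_deriv_scale chi 1 (n + 1) x
    simp only [one_mul] at this
    rw [this, abs_mul, abs_of_nonneg (by positivity), div_mul_eq_mul_div, one_mul]
    have h1 : (n : ℝ) + 1 ≤ (n + 1) ^ 2 := by nlinarith [(Nat.cast_nonneg n : (0 : ℝ) ≤ n)]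
    gcongr
    exact hM _
  · rw [abs_of_nonneg (chi_nonneg _)]
    linarith [chi_le_one (x / (n + 1))]

lemma energy (h : WeakSol C G) (t : ℝ) : ∫ x, x ∂(G t) = ∫ x, x ∂(G 0) := by
  have hψ : ContDiff ℝ 2 (fun x => x * chi x) := contDiff_id.mul contDiff_chi
  have hψs : HasCompactSupport (fun x => x * chi x) := hasCompactSupport_chi.mul_left
  obtain ⟨-, -, hd⟩ := contDiff_two_derivs hψ
  obtain ⟨M, hM⟩ := exists_bound_of_hasCompactSupport hd hψs.deriv.deriv
  have heq : ∀ (n : ℕ) (x : ℝ),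
      ((n : ℝ) + 1) * (x / (n + 1) * chi (x / (n + 1))) = x * chi (x / (n + 1)) := by
    intro n x
    field_simp
  refine h.conserved (f := fun x => x)
    (φ := fun n x => ((n : ℝ) + 1) * (fun x => x * chi x) (x / (n + 1)))
    (M := fun n => M / (n + 1))
    (fun n => contDiff_const.mul (hψ.comp (by fun_prop)))
    (fun n => (hasCompactSupport_scale hψs _ (by positivity)).mul_left)
    (fun n x => ?_) (tendsto_div_nat_add_one M) (fun n x hx => ?_) (fun x => ?_) t
  · rw [deriv_deriv_scale (fun x => x * chi x), abs_mul, abs_of_nonneg (by positivity)]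
    have h1 : ((n : ℝ) + 1) / (n + 1) ^ 2 = 1 / (n + 1) := by field_simp
    rw [h1, div_mul_eq_mul_div, one_mul]
    gcongr
    exact hM _
  · simp only [heq]
    rw [abs_of_nonneg (mul_nonneg hx (chi_nonneg _))]
    nlinarith [chi_le_one (x / (n + 1))]
  · simp only [heq]
    simpa using (tendsto_chi_scale x).const_mul x

/-- Integrals against bounded `C²` functions are continuous in time: by the moment bound the
cutoff error is `O(1/n)` uniformly in `t`. -/
lemma continuous_integral_bounded (h : WeakSol C G) {f : ℝ → ℝ} (hf : ContDiff ℝ 2 f) {B : ℝ}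
    (hB : ∀ x, |f x| ≤ B) : Continuous fun t => ∫ x, f x ∂(G t) := by
  have hB0 : 0 ≤ B := (abs_nonneg _).trans (hB 0)
  have hc : ∀ n : ℕ, ContDiff ℝ 2 fun x => f x * chi (x / (n + 1)) := fun n =>
    hf.mul (contDiff_chi.comp (by fun_prop))
  have hb : ∀ (n : ℕ) x, |f x * chi (x / (n + 1))| ≤ B := fun n x => by
    rw [abs_mul, abs_of_nonneg (chi_nonneg _)]
    nlinarith [hB x, chi_le_one (x / (n + 1)), chi_nonneg (x / (n + 1)), abs_nonneg (f x)]
  have hunif : TendstoUniformly (fun (n : ℕ) t => ∫ x, f x * chi (x / (n + 1)) ∂(G t))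
      (fun t => ∫ x, f x ∂(G t)) atTop := by
    rw [Metric.tendstoUniformly_iff]
    intro ε hε
    filter_upwards [(tendsto_div_nat_add_one (B * C)).eventually (gt_mem_nhds hε)] with n hn t
    refine lt_of_le_of_lt ?_ hn
    have hN : (0 : ℝ) < n + 1 := by positivity
    rw [Real.dist_eq, ← integral_sub ((h.moment t).integrable_of_bounded hf.continuous hB)
      ((h.moment t).integrable_of_bounded (hc n).continuous (hb n))]
    have hle : ‖∫ x, (f x - f x * chi (x / (n + 1))) ∂(G t)‖ ≤
        ∫ x, B / (n + 1) * (1 + x) ∂(G t) := by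
      refine norm_integral_le_of_norm_le ((h.moment t).integrable.const_mul _) ?_
      filter_upwards [(h.moment t).ae_nonneg] with x hx
      have h1 := one_sub_chi_le (div_nonneg hx hN.le)
      have h2 : 0 ≤ 1 - chi (x / (n + 1)) := by linarith [chi_le_one (x / (n + 1))]
      have h3 : f x - f x * chi (x / (n + 1)) = f x * (1 - chi (x / (n + 1))) := by ring
      rw [h3, Real.norm_eq_abs, abs_mul, abs_of_nonneg h2]
      calc |f x| * (1 - chi (x / (n + 1))) ≤ B * (x / (n + 1)) :=
            mul_le_mul (hB x) h1 h2 hB0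
        _ ≤ B * ((1 + x) / (n + 1)) := by gcongr; linarith
        _ = _ := by ring
    refine hle.trans ?_
    rw [integral_const_mul, div_mul_eq_mul_div]
    gcongr
    exact (h.moment t).integral_le
  exact hunif.continuous (Eventually.of_forall fun n =>
    h.continuous_integral (hc n) (hasCompactSupport_scale hasCompactSupport_chi _
      (by positivity)).mul_left).frequently

lemma continuous_charFun (h : WeakSol C G) (ξ : ℝ) : Continuous fun t => charFun (G t) ξ := by
  have := fun t => (h.moment t).finite
  have hcos : ContDiff ℝ 2 fun x : ℝ => Real.cos (ξ * x) := by fun_prop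
  have hsin : ContDiff ℝ 2 fun x : ℝ => Real.sin (ξ * x) := by fun_prop
  have hcb : ∀ x : ℝ, |Real.cos (ξ * x)| ≤ 1 := fun x => Real.abs_cos_le_one _
  have hsb : ∀ x : ℝ, |Real.sin (ξ * x)| ≤ 1 := fun x => Real.abs_sin_le_one _
  have heq : (fun t => charFun (G t) ξ) = fun t =>
      ((∫ x, Real.cos (ξ * x) ∂(G t) : ℝ) : ℂ) +
        (∫ x, Real.sin (ξ * x) ∂(G t) : ℝ) * Complex.I := by
    funext t
    rw [charFun_apply_real, ← integral_complex_ofReal, ← integral_complex_ofReal,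
      ← integral_mul_const, ← integral_add]
    · refine integral_congr_ae (ae_of_all _ fun x => ?_)
      simp only [Complex.ofReal_cos, Complex.ofReal_sin, Complex.exp_mul_I]
      push_cast
      rfl
    · exact ((h.moment t).integrable_of_bounded hcos.continuous hcb).ofReal
    · exact ((h.moment t).integrable_of_bounded hsin.continuous hsb).ofReal.mul_const _
  rw [heq]
  have h1 := h.continuous_integral_bounded hcos hcb
  have h2 := h.continuous_integral_bounded hsin hsb
  fun_prop

/-- The collision form is continuous in time. After normalising the conserved mass, Lévy's theorem
turns continuity of characteristic functions into weak continuity of `G_t`, hence of the product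
`G_t ⊗ G_t`, and `L[φ]` is bounded and continuous. -/
lemma continuous_Q (h : WeakSol C G) {φ : ℝ → ℝ} (hφ : ContDiff ℝ 2 φ)
    (hs : HasCompactSupport φ) : Continuous fun t => Qform φ (G t) := by
  have hfin := fun t => (h.moment t).finite
  rcases eq_or_ne (G 0 Set.univ) 0 with h0 | h0
  · have hz : ∀ t, G t = 0 := fun t => Measure.measure_univ_eq_zero.1 ((h.mass t).trans h0)
    simp only [hz]
    exact continuous_const
  set m := G 0 Set.univ with hm
  have hmt : m ≠ ∞ := measure_ne_top _ _
  let P : ℝ → ProbabilityMeasure ℝ := fun t => ⟨m⁻¹ • G t, ⟨by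
    rw [Measure.smul_apply, h.mass t, smul_eq_mul, ENNReal.inv_mul_cancel h0 hmt]⟩⟩
  have hPcoe : ∀ t, (P t : Measure ℝ) = m⁻¹ • G t := fun t => rfl
  have hGP : ∀ t, G t = m • (P t : Measure ℝ) := fun t => by
    rw [hPcoe, smul_smul, ENNReal.mul_inv_cancel h0 hmt, one_smul]
  have hP : Continuous P := by
    rw [continuous_iff_seqContinuous]
    intro u t hu
    refine ProbabilityMeasure.tendsto_of_tendsto_charFun fun ξ => ?_
    have hc : ∀ s, charFun (P s : Measure ℝ) ξ = (m⁻¹).toReal • charFun (G s) ξ := fun s => by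
      rw [hPcoe, charFun_apply, charFun_apply, integral_smul_measure]
    simp only [Function.comp_apply, hc]
    exact (((h.continuous_charFun ξ).tendsto t).comp hu).const_smul _
  have hPP : Continuous fun t => (P t).prod (P t) :=
    ProbabilityMeasure.continuous_prod.comp (hP.prodMk hP)
  obtain ⟨B, hB⟩ := exists_bound_Lext hφ hs
  let g : BoundedContinuousFunction (ℝ × ℝ) ℝ :=
    BoundedContinuousFunction.ofNormedAddCommGroup (Lext φ) (continuous_Lext hφ hs) B hB
  have hint : Continuous fun t => ∫ p, g p ∂((P t).prod (P t) : Measure (ℝ × ℝ)) := by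
    rw [continuous_iff_continuousAt]
    intro t
    exact (ProbabilityMeasure.tendsto_iff_forall_integral_tendsto.1 (hPP.tendsto t)) g
  have heq : (fun t => Qform φ (G t)) = fun t =>
      m.toReal * (m.toReal * ∫ p, g p ∂((P t).prod (P t) : Measure (ℝ × ℝ))) := by
    funext t
    have hprod : (G t).prod (G t) = m • m • ((P t : Measure ℝ).prod (P t : Measure ℝ)) := by
      rw [hGP t, Measure.prod_smul_left, Measure.prod_smul_right]
    rw [(h.moment t).Qform_eq hφ hs, hprod, integral_smul_measure, integral_smul_measure]
    rfl
  rw [heq]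
  fun_prop

end WeakSol

/-- If `{F_t}_{t≥0}` is a family of finite positive Borel measures on `[0,∞)`
with uniformly bounded first moment satisfying the integrated weak form of the isotropic
Fokker–Planck–Landau equation for all `φ ∈ C²_c([0,∞))`, then `F_t` conserves mass and energy,
and for each such `φ` the map `t ↦ ∫ φ dF_t` is `C¹` on `[0,∞)` with derivative
`∫∫ L[φ] dF_t dF_t`. -/
theorem stmt10 (F : ℝ → Measure ℝ)
    (hfin : ∀ t : ℝ, 0 ≤ t → IsFiniteMeasure (F t))
    (hsupp : ∀ t : ℝ, 0 ≤ t → F t (Set.Iio 0) = 0)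
    (hmom : ∃ C : ℝ, ∀ t : ℝ, 0 ≤ t →
      (∫⁻ x, ENNReal.ofReal (1 + x) ∂(F t)) ≤ ENNReal.ofReal C)
    (hweak : ∀ φ : ℝ → ℝ, ContDiff ℝ 2 φ → HasCompactSupport φ → ∀ t : ℝ, 0 ≤ t →
      (∫ x, φ x ∂(F t)) = (∫ x, φ x ∂(F 0)) +
        ∫ s in (0 : ℝ)..t, ∫ x, ∫ y, Liso φ x y ∂(F s) ∂(F s)) :
    (∀ t : ℝ, 0 ≤ t →
      F t Set.univ = F 0 Set.univ ∧ (∫ x, x ∂(F t)) = ∫ x, x ∂(F 0)) ∧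
    (∀ φ : ℝ → ℝ, ContDiff ℝ 2 φ → HasCompactSupport φ →
      (∀ t : ℝ, 0 ≤ t →
        HasDerivWithinAt (fun τ => ∫ x, φ x ∂(F τ))
          (∫ x, ∫ y, Liso φ x y ∂(F t) ∂(F t)) (Set.Ici 0) t) ∧
      ContinuousOn (fun t => ∫ x, ∫ y, Liso φ x y ∂(F t) ∂(F t)) (Set.Ici 0)) := by
  obtain ⟨C, hC⟩ := hmom
  have hFG : ∀ t : ℝ, 0 ≤ t → F (max t 0) = F t := fun t ht => by rw [max_eq_left ht]
  have h : WeakSol (max C 0) (fun t => F (max t 0)) := by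
    refine ⟨fun t => ⟨le_max_right _ _, hfin _ (le_max_right _ _), ?_, ?_⟩, fun φ hφ hs t => ?_⟩
    · rw [ae_iff]
      simpa [Set.Iio_def] using hsupp _ (le_max_right t 0)
    · exact (hC _ (le_max_right _ _)).trans (ENNReal.ofReal_le_ofReal (le_max_left _ _))
    · rw [hweak φ hφ hs _ (le_max_right t 0), max_self]
      congr 1
      refine intervalIntegral.integral_congr fun s hs' => ?_
      rw [Set.uIcc_of_le (le_max_right _ _)] at hs'
      simp only [Qform, hFG s hs'.1]
  refine ⟨fun t ht => ⟨?_, ?_⟩, fun φ hφ hs => ⟨fun t ht => ?_, ?_⟩⟩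
  · simpa [hFG t ht] using h.mass t
  · simpa [hFG t ht] using h.energy t
  · have hder : HasDerivAt
        (fun τ => ∫ x, φ x ∂(F 0) + ∫ s in (0 : ℝ)..τ, Qform φ (F (max s 0)))
        (Qform φ (F (max t 0))) t :=
      ((h.continuous_Q hφ hs).integral_hasStrictDerivAt 0 t).hasDerivAt.const_add _
    rw [hFG t ht] at hder
    have hrep : ∀ τ ∈ Set.Ici (0 : ℝ), ∫ x, φ x ∂(F τ) =
        ∫ x, φ x ∂(F 0) + ∫ s in (0 : ℝ)..τ, Qform φ (F (max s 0)) := fun τ hτ => by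
      have := h.weak φ hφ hs τ
      simpa [max_eq_left (Set.mem_Ici.1 hτ)] using this
    exact hder.hasDerivWithinAt.congr hrep (hrep t ht)
  · exact (h.continuous_Q hφ hs).continuousOn.congr fun t ht => by
      simp only [Qform, hFG t ht]

end
end

section
/- Let φ̂ : [0,∞) → ℝ be Borel measurable with ∫₀^∞ r³ φ̂(r)² dr = 1/(2π), and suppose there exists r₀ ≥ 0 such that r ↦ r φ̂(r) is monotone on (r₀, ∞). Then for every ρ > 0 the limit φ(ρ) := lim_{R→∞} (1/(2π²ρ)) ∫₀^R r φ̂(r) sin(ρ r) dr exists, and there is a constant 0 < C < ∞ such that sup_{R>0} |(1/(2π²ρ)) ∫₀^R r φ̂(r) sin(ρ r) dr| ≤ C (1 + ρ^{−2}) and |φ(ρ)| ≤ C (1 + ρ^{−2}) for all ρ > 0. -/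
/-!
Write `g r = r * φ̂ r`, so that the normalisation says that `r * g r ^ 2` is integrable on `(0, ∞)`
(its integral is nonzero). If `g` is antitone on `(r₀, ∞)`, integrability forces `g ≥ 0` there
and `g → 0` at infinity; the monotone case follows by passing to `-g`.

Fix `a = r₀ + 1`. On `(0, a)` one uses `|sin (ρ r)| ≤ ρ r` and the integrability of `r * g r` on
bounded intervals, a consequence of `|g| ≤ 1 + g ^ 2`. This part of the integral is at most `ρ M`.
On `(a, ∞)`, `abs_integral_mul_sin_le` bounds `∫ g sin (ρ r)` over `[c, b]` by `π g(c) / ρ`. With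
`c = a` this controls the tail uniformly in the upper limit, and with `c → ∞` it gives the Cauchy
criterion. Dividing by `2 π² ρ` turns the bound `K (ρ + 1 / ρ)` into `K (1 + 1 / ρ²)`.
-/

open MeasureTheory Real Filter
open scoped Topology

/-- The oscillatory bound for an antitone nonnegative function vanishing beyond `b`. Shifting by
the half period `h = π / ρ` changes the sign of `sin (ρ r)`, so twice the integral equals
`∫_a^{a+h} H sin + ∫_a^{b+h} (H r - H (r + h)) sin`, and the second integrand is bounded by a
nonnegative telescoping difference. -/
lemma abs_integral_mul_sin_le_of_eq_zero {H : ℝ → ℝ} {a b ρ : ℝ} (hρ : 0 < ρ) (hab : a ≤ b)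
    (hanti : AntitoneOn H (Set.Ici a)) (hnn : ∀ r, a ≤ r → 0 ≤ H r) (hz : ∀ r, b < r → H r = 0) :
    |∫ r in a..b, H r * Real.sin (ρ * r)| ≤ π / ρ * H a := by
  set h := π / ρ with hh
  have hpos : 0 < h := div_pos pi_pos hρ
  have hρh : ρ * h = π := by rw [hh]; field_simp
  have hI : ∀ x y, a ≤ x → a ≤ y → IntervalIntegrable H volume x y := by
    intro x y hx hy
    apply AntitoneOn.intervalIntegrable
    exact hanti.mono fun z hz => (le_inf hx hy).trans hz.1
  have hS : ∀ x y, a ≤ x → a ≤ y →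
      IntervalIntegrable (fun r => H r * Real.sin (ρ * r)) volume x y := by
    intro x y hx hy
    exact (hI x y hx hy).mul_continuousOn (by fun_prop)
  have hIs : IntervalIntegrable (fun r => H (r + h)) volume a (b + h) := by
    apply AntitoneOn.intervalIntegrable
    intro x hx y hy hxy
    rw [Set.uIcc_of_le (by linarith)] at hx hy
    exact hanti (by simp only [Set.mem_Ici]; linarith [hx.1])
      (by simp only [Set.mem_Ici]; linarith [hy.1]) (by linarith)
  have hSs : IntervalIntegrable (fun r => H (r + h) * Real.sin (ρ * r)) volume a (b + h) :=
    hIs.mul_continuousOn (by fun_prop)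
  have hzero : ∀ (f : ℝ → ℝ) (y : ℝ), b ≤ y → ∫ r in b..y, H r * f r = 0 := by
    intro f y hy
    rw [intervalIntegral.integral_of_le hy]
    exact setIntegral_eq_zero_of_forall_eq_zero fun r hr => by rw [hz r hr.1, zero_mul]
  have e1 : ∫ r in a..b, H r * Real.sin (ρ * r) = ∫ r in a..(b + h), H r * Real.sin (ρ * r) := by
    rw [← intervalIntegral.integral_add_adjacent_intervals (hS a b le_rfl hab)
      (hS b (b + h) hab (by linarith)), hzero _ _ (by linarith), add_zero]
  have e2 : ∫ r in a..b, H r * Real.sin (ρ * r)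
      = (∫ r in a..(a + h), H r * Real.sin (ρ * r))
        - ∫ r in a..(b + h), H (r + h) * Real.sin (ρ * r) := by
    have s1 : ∫ r in a..(b + h), H (r + h) * Real.sin (ρ * r)
        = - ∫ r in (a + h)..(b + h + h), H r * Real.sin (ρ * r) := by
      rw [← intervalIntegral.integral_comp_add_right, ← intervalIntegral.integral_neg]
      congr 1
      ext r
      rw [mul_add, hρh, Real.sin_add_pi]
      ring
    rw [s1, sub_neg_eq_add, intervalIntegral.integral_add_adjacent_intervals
      (hS _ _ le_rfl (by linarith)) (hS _ _ (by linarith) (by linarith)),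
      ← intervalIntegral.integral_add_adjacent_intervals (hS a b le_rfl hab)
      (hS b (b + h + h) hab (by linarith)), hzero _ _ (by linarith), add_zero]
  have e3 : 2 * ∫ r in a..b, H r * Real.sin (ρ * r)
      = (∫ r in a..(a + h), H r * Real.sin (ρ * r))
        + ∫ r in a..(b + h), (H r - H (r + h)) * Real.sin (ρ * r) := by
    have : ∫ r in a..(b + h), (H r - H (r + h)) * Real.sin (ρ * r)
        = (∫ r in a..(b + h), H r * Real.sin (ρ * r))
          - ∫ r in a..(b + h), H (r + h) * Real.sin (ρ * r) := by
      rw [← intervalIntegral.integral_sub (hS _ _ le_rfl (by linarith)) hSs]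
      congr 1
      ext r
      ring
    rw [this, ← e1]
    linarith
  have b1 : |∫ r in a..(a + h), H r * Real.sin (ρ * r)| ≤ h * H a := by
    have := intervalIntegral.norm_integral_le_of_norm_le_const (a := a) (b := a + h) (C := H a)
      (f := fun r => H r * Real.sin (ρ * r)) (by
        intro r hr
        rw [Set.uIoc_of_le (by linarith)] at hr
        rw [norm_mul, Real.norm_of_nonneg (hnn r hr.1.le)]
        calc H r * ‖Real.sin (ρ * r)‖ ≤ H r * 1 :=
              mul_le_mul_of_nonneg_left (Real.abs_sin_le_one _) (hnn r hr.1.le)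
          _ ≤ H a := by
              rw [mul_one]
              exact hanti (Set.mem_Ici.2 le_rfl) (Set.mem_Ici.2 hr.1.le) hr.1.le)
    rw [add_sub_cancel_left, abs_of_pos hpos, mul_comm] at this
    exact this
  have b2 : |∫ r in a..(b + h), (H r - H (r + h)) * Real.sin (ρ * r)| ≤ h * H a := by
    have t1 : |∫ r in a..(b + h), (H r - H (r + h)) * Real.sin (ρ * r)|
        ≤ ∫ r in a..(b + h), (H r - H (r + h)) := by
      rw [← Real.norm_eq_abs]
      apply intervalIntegral.norm_integral_le_of_norm_le (by linarith)
      · refine Eventually.of_forall fun r hr => ?_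
        have hd : 0 ≤ H r - H (r + h) := sub_nonneg.2
          (hanti (Set.mem_Ici.2 hr.1.le) (Set.mem_Ici.2 (by linarith [hr.1])) (by linarith))
        rw [norm_mul, Real.norm_of_nonneg hd]
        exact mul_le_of_le_one_right hd (Real.abs_sin_le_one _)
      · exact (hI _ _ le_rfl (by linarith)).sub hIs
    have t2 : ∫ r in a..(b + h), (H r - H (r + h)) = ∫ r in a..(a + h), H r := by
      rw [intervalIntegral.integral_sub (hI _ _ le_rfl (by linarith)) hIs,
        intervalIntegral.integral_comp_add_right]
      have z : ∫ r in (b + h)..(b + h + h), H r = 0 := by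
        rw [intervalIntegral.integral_of_le (by linarith)]
        exact setIntegral_eq_zero_of_forall_eq_zero fun r hr => hz r (by linarith [hr.1])
      have u1 := intervalIntegral.integral_add_adjacent_intervals
        (hI a (a + h) le_rfl (by linarith)) (hI (a + h) (b + h + h) (by linarith) (by linarith))
      have u2 := intervalIntegral.integral_add_adjacent_intervals
        (hI a (b + h) le_rfl (by linarith)) (hI (b + h) (b + h + h) (by linarith) (by linarith))
      linarith
    have t3 : ∫ r in a..(a + h), H r ≤ ∫ r in a..(a + h), H a :=
      intervalIntegral.integral_mono_on (by linarith) (hI _ _ le_rfl (by linarith)) (by simp)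
        fun r hr => hanti (Set.mem_Ici.2 le_rfl) (Set.mem_Ici.2 hr.1) hr.1
    rw [intervalIntegral.integral_const, add_sub_cancel_left, smul_eq_mul] at t3
    linarith
  have := abs_add_le (∫ r in a..(a + h), H r * Real.sin (ρ * r))
    (∫ r in a..(b + h), (H r - H (r + h)) * Real.sin (ρ * r))
  rw [← e3, abs_mul, abs_two] at this
  linarith

/-- A weak form of the second mean value theorem for `sin (ρ r)`, obtained by cutting `G` off
at `b`. -/
lemma abs_integral_mul_sin_le {G : ℝ → ℝ} {a b ρ : ℝ} (hρ : 0 < ρ) (hab : a ≤ b)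
    (hanti : AntitoneOn G (Set.Ici a)) (hnn : ∀ r, a ≤ r → 0 ≤ G r) :
    |∫ r in a..b, G r * Real.sin (ρ * r)| ≤ π / ρ * G a := by
  have key := abs_integral_mul_sin_le_of_eq_zero (H := fun r => if r ≤ b then G r else 0)
    hρ hab ?_ ?_ ?_
  · simp only [hab, if_true] at key
    convert key using 2
    apply intervalIntegral.integral_congr
    intro r hr
    rw [Set.uIcc_of_le hab] at hr
    simp [hr.2]
  · intro x hx y hy hxy
    by_cases h1 : y ≤ b
    · simpa [h1, hxy.trans h1] using hanti hx hy hxy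
    · by_cases h2 : x ≤ b
      · simpa [h1, h2] using hnn x hx
      · simp [h1, h2]
  · intro r hr
    split_ifs
    exacts [hnn r hr, le_rfl]
  · intro r hr
    simp [hr]

lemma exists_mul_sq_lt {g : ℝ → ℝ} (hint : IntegrableOn (fun r => r * g r ^ 2) (Set.Ioi 0))
    {x c : ℝ} (hx : 0 ≤ x) (hc : 0 < c) : ∃ r, x < r ∧ r * g r ^ 2 < c := by
  by_contra! hcon
  have h1 : IntegrableOn (fun _ : ℝ => c) (Set.Ioi x) := by
    refine Integrable.mono' (hint.mono_set (Set.Ioi_subset_Ioi hx))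
      aestronglyMeasurable_const ?_
    filter_upwards [ae_restrict_mem measurableSet_Ioi] with r hr
    rw [Real.norm_of_nonneg hc.le]
    exact hcon r hr
  rw [integrableOn_const_iff] at h1
  simp [hc.ne'] at h1

/-- The antitone case: convergence, and the bound `K (ρ + 1 / ρ)` uniform in the upper limit. -/
lemma antitone_case {g : ℝ → ℝ} (hm : Measurable g)
    (hint : IntegrableOn (fun r => r * g r ^ 2) (Set.Ioi 0)) {r₀ : ℝ} (hr₀ : 0 ≤ r₀)
    (hanti : AntitoneOn g (Set.Ioi r₀)) :
    ∃ K : ℝ, 0 ≤ K ∧ ∀ ρ : ℝ, 0 < ρ →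
      (∃ l, Tendsto (fun R => ∫ r in (0 : ℝ)..R, g r * Real.sin (ρ * r)) atTop (𝓝 l)) ∧
      ∀ R, 0 < R → |∫ r in (0 : ℝ)..R, g r * Real.sin (ρ * r)| ≤ K * (ρ + 1 / ρ) := by
  have hnn : ∀ r, r₀ < r → 0 ≤ g r := by
    intro x hx
    by_contra! hneg
    have hx0 : 0 < x := by linarith
    obtain ⟨r, hr, hlt⟩ := exists_mul_sq_lt hint hx0.le
      (c := x * g x ^ 2) (mul_pos hx0 (sq_pos_of_neg hneg))
    have h1 : g r ≤ g x := hanti hx (hx.trans hr) hr.le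
    have h2 : g x ^ 2 ≤ g r ^ 2 := by nlinarith
    have h3 : x * g x ^ 2 ≤ r * g r ^ 2 := mul_le_mul hr.le h2 (sq_nonneg _) (by linarith)
    linarith
  have hsmall : ∀ ε, 0 < ε → ∃ x, r₀ < x ∧ g x < ε := by
    intro ε hε
    obtain ⟨r, hr, hlt⟩ := exists_mul_sq_lt hint (x := r₀ + 1) (by linarith)
      (c := ε ^ 2) (by positivity)
    refine ⟨r, by linarith, ?_⟩
    by_contra! hge
    have h2 : ε ^ 2 ≤ g r ^ 2 := by nlinarith
    nlinarith [sq_nonneg (g r)]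
  set a := r₀ + 1 with ha
  have ha0 : 0 < a := by linarith
  have hanti' : ∀ c, a ≤ c → AntitoneOn g (Set.Ici c) := fun c hc =>
    hanti.mono fun z hz => Set.mem_Ioi.2 (by linarith [Set.mem_Ici.1 hz])
  have hnn' : ∀ c, a ≤ c → ∀ r, c ≤ r → 0 ≤ g r := fun c hc r hr => hnn r (by linarith)
  -- `r |g r| ≤ r (1 + g r ^ 2)` is integrable on bounded intervals.
  have hrg : ∀ R, 0 ≤ R → IntervalIntegrable (fun r => r * |g r|) volume 0 R := by
    intro R hR
    rw [intervalIntegrable_iff_integrableOn_Ioc_of_le hR]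
    have i1 : IntegrableOn (fun r : ℝ => r) (Set.Ioc 0 R) := by
      rw [← intervalIntegrable_iff_integrableOn_Ioc_of_le hR]
      exact continuous_id.intervalIntegrable _ _
    have i2 := hint.mono_set (show Set.Ioc 0 R ⊆ Set.Ioi 0 from fun r hr => hr.1)
    refine Integrable.mono' (i1.add i2) (by fun_prop) ?_
    filter_upwards [ae_restrict_mem measurableSet_Ioc] with r hr
    have : |g r| ≤ 1 + g r ^ 2 := by
      rw [← sq_abs]; nlinarith [sq_nonneg (|g r| - 1), sq_nonneg (|g r|)]
    rw [Real.norm_of_nonneg (mul_nonneg hr.1.le (abs_nonneg _))]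
    simp only [Pi.add_apply]
    nlinarith [hr.1]
  have hle : ∀ ρ, 0 < ρ → ∀ r, 0 < r → ‖g r * Real.sin (ρ * r)‖ ≤ ρ * (r * |g r|) := by
    intro ρ hρ r hr
    rw [norm_mul, Real.norm_eq_abs, Real.norm_eq_abs]
    have := Real.abs_sin_le_abs (x := ρ * r)
    rw [abs_of_pos (mul_pos hρ hr)] at this
    nlinarith [abs_nonneg (g r)]
  have hS : ∀ ρ, 0 < ρ → ∀ R, 0 ≤ R →
      IntervalIntegrable (fun r => g r * Real.sin (ρ * r)) volume 0 R := by
    intro ρ hρ R hR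
    have i := (hrg R hR).const_mul ρ
    rw [intervalIntegrable_iff_integrableOn_Ioc_of_le hR] at i ⊢
    refine Integrable.mono' i (by fun_prop) ?_
    filter_upwards [ae_restrict_mem measurableSet_Ioc] with r hr
    exact hle ρ hρ r hr.1
  set M := ∫ r in (0 : ℝ)..a, r * |g r| with hM
  have hM0 : 0 ≤ M := intervalIntegral.integral_nonneg ha0.le
    fun r hr => mul_nonneg hr.1 (abs_nonneg _)
  have hnear : ∀ ρ, 0 < ρ → ∀ R, 0 ≤ R → R ≤ a →
      |∫ r in (0 : ℝ)..R, g r * Real.sin (ρ * r)| ≤ ρ * M := by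
    intro ρ hρ R hR hRa
    have h1 : |∫ r in (0 : ℝ)..R, g r * Real.sin (ρ * r)| ≤ ∫ r in (0 : ℝ)..R, ρ * (r * |g r|) :=
      intervalIntegral.norm_integral_le_of_norm_le hR
        (Eventually.of_forall fun r hr => hle ρ hρ r hr.1) ((hrg R hR).const_mul ρ)
    rw [intervalIntegral.integral_const_mul] at h1
    refine h1.trans (mul_le_mul_of_nonneg_left ?_ hρ.le)
    refine intervalIntegral.integral_mono_interval le_rfl hR hRa ?_ (hrg a ha0.le)
    filter_upwards [ae_restrict_mem measurableSet_Ioc] with r hr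
    exact mul_nonneg hr.1.le (abs_nonneg _)
  have hga : 0 ≤ g a := hnn a (by linarith)
  have hdiff : ∀ ρ, 0 < ρ → ∀ c R, a ≤ c → c ≤ R →
      |(∫ r in (0 : ℝ)..R, g r * Real.sin (ρ * r)) - ∫ r in (0 : ℝ)..c, g r * Real.sin (ρ * r)|
        ≤ π / ρ * g c := by
    intro ρ hρ c R hc hR
    rw [intervalIntegral.integral_interval_sub_left (hS ρ hρ R (by linarith))
      (hS ρ hρ c (by linarith))]
    exact abs_integral_mul_sin_le hρ hR (hanti' c hc) (hnn' c hc)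
  refine ⟨M + π * g a, by positivity, fun ρ hρ => ⟨?_, ?_⟩⟩
  · refine cauchy_map_iff_exists_tendsto.1 ?_
    refine Metric.cauchy_iff.2 ⟨inferInstance, fun ε hε => ?_⟩
    obtain ⟨x, hx, hgx⟩ := hsmall (ε * ρ / (2 * π)) (by positivity)
    set c := max a x
    have hac : a ≤ c := le_max_left _ _
    have hgc : g c < ε * ρ / (2 * π) :=
      (hanti hx (hx.trans_le (le_max_right a x)) (le_max_right a x)).trans_lt hgx
    have hb : π / ρ * g c < ε / 2 := by
      calc π / ρ * g c < π / ρ * (ε * ρ / (2 * π)) :=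
            mul_lt_mul_of_pos_left hgc (by positivity)
        _ = ε / 2 := by field_simp
    refine ⟨_, image_mem_map (Ici_mem_atTop c), ?_⟩
    rintro _ ⟨R, hR, rfl⟩ _ ⟨R', hR', rfl⟩
    have d1 := hdiff ρ hρ c R hac hR
    have d2 := hdiff ρ hρ c R' hac hR'
    rw [← Real.dist_eq] at d1 d2
    calc _ ≤ _ := dist_triangle_right _ _ (∫ r in (0 : ℝ)..c, g r * Real.sin (ρ * r))
      _ < ε := by linarith
  · intro R hR
    have hexp : (M + π * g a) * (ρ + 1 / ρ)
        = ρ * M + π / ρ * g a + M / ρ + π * g a * ρ := by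
      field_simp
      ring
    have p1 : 0 ≤ M / ρ := by positivity
    have p2 : 0 ≤ π * g a * ρ := by positivity
    have p3 : 0 ≤ π / ρ * g a := by positivity
    rw [hexp]
    rcases le_total R a with h | h
    · linarith [hnear ρ hρ R hR.le h]
    · have d := hdiff ρ hρ a R le_rfl h
      have n := hnear ρ hρ a ha0.le le_rfl
      have := abs_sub_abs_le_abs_sub (∫ r in (0 : ℝ)..R, g r * Real.sin (ρ * r))
        (∫ r in (0 : ℝ)..a, g r * Real.sin (ρ * r))
      linarith

/-- If `φ̂` is Borel measurable with `∫₀^∞ r³ φ̂(r)² dr = 1/(2π)` and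
`r ↦ r φ̂(r)` is monotone on `(r₀, ∞)` for some `r₀ ≥ 0`, then for every `ρ > 0` the limit
`φ(ρ) = lim_{R→∞} (1/(2π²ρ)) ∫₀^R r φ̂(r) sin(ρr) dr` exists, and there is `0 < C < ∞` with
`sup_{R>0} |(1/(2π²ρ)) ∫₀^R r φ̂(r) sin(ρr) dr| ≤ C(1+ρ⁻²)` and `|φ(ρ)| ≤ C(1+ρ⁻²)` for all
`ρ > 0`. -/
theorem stmt12 (φh : ℝ → ℝ) (hmeas : Measurable φh)
    (hnorm : ∫ r in Set.Ioi (0 : ℝ), r ^ 3 * (φh r) ^ 2 = 1 / (2 * π))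
    (r₀ : ℝ) (hr₀ : 0 ≤ r₀)
    (hmono : MonotoneOn (fun r => r * φh r) (Set.Ioi r₀) ∨
      AntitoneOn (fun r => r * φh r) (Set.Ioi r₀)) :
    ∃ φfun : ℝ → ℝ,
      (∀ ρ : ℝ, 0 < ρ →
        Tendsto (fun R => (1 / (2 * π ^ 2 * ρ)) * ∫ r in (0 : ℝ)..R, r * φh r * Real.sin (ρ * r))
          atTop (𝓝 (φfun ρ))) ∧
      ∃ C : ℝ, 0 < C ∧
        (∀ ρ R : ℝ, 0 < ρ → 0 < R →
          |(1 / (2 * π ^ 2 * ρ)) * ∫ r in (0 : ℝ)..R, r * φh r * Real.sin (ρ * r)| ≤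
            C * (1 + 1 / ρ ^ 2)) ∧
        (∀ ρ : ℝ, 0 < ρ → |φfun ρ| ≤ C * (1 + 1 / ρ ^ 2)) := by
  have hint : IntegrableOn (fun r => r * (r * φh r) ^ 2) (Set.Ioi 0) := by
    have h : IntegrableOn (fun r => r ^ 3 * (φh r) ^ 2) (Set.Ioi 0) := by
      -- A non-integrable function would have integral zero.
      by_contra hcon
      rw [integral_undef hcon] at hnorm
      have : 0 < 1 / (2 * π) := by positivity
      linarith
    convert h using 2
    ring
  have hm : Measurable fun r => r * φh r := by fun_prop
  have main : ∃ K : ℝ, 0 ≤ K ∧ ∀ ρ : ℝ, 0 < ρ →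
      (∃ l, Tendsto (fun R => ∫ r in (0 : ℝ)..R, r * φh r * Real.sin (ρ * r)) atTop (𝓝 l)) ∧
      ∀ R, 0 < R → |∫ r in (0 : ℝ)..R, r * φh r * Real.sin (ρ * r)| ≤ K * (ρ + 1 / ρ) := by
    rcases hmono with h | h
    · obtain ⟨K, hK, H⟩ := antitone_case (g := fun r => -(r * φh r)) hm.neg
        (by simpa only [neg_sq] using hint) hr₀ h.neg
      refine ⟨K, hK, fun ρ hρ => ?_⟩
      obtain ⟨⟨l, hl⟩, hb⟩ := H ρ hρ
      simp only [neg_mul, intervalIntegral.integral_neg, abs_neg] at hl hb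
      exact ⟨⟨-l, by simpa using hl.neg⟩, hb⟩
    · exact antitone_case hm hint hr₀ h
  obtain ⟨K, hK, H⟩ := main
  choose! l hl using fun ρ hρ => (H ρ hρ).1
  have hbd : ∀ ρ R : ℝ, 0 < ρ → 0 < R →
      |(1 / (2 * π ^ 2 * ρ)) * ∫ r in (0 : ℝ)..R, r * φh r * Real.sin (ρ * r)| ≤
        (K + 1) * (1 + 1 / ρ ^ 2) := by
    intro ρ R hρ hR
    have hπ : 1 ≤ 2 * π ^ 2 := by nlinarith [Real.pi_gt_three]
    rw [abs_mul, abs_of_pos (by positivity)]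
    calc 1 / (2 * π ^ 2 * ρ) * |∫ r in (0 : ℝ)..R, r * φh r * Real.sin (ρ * r)|
        ≤ 1 / (2 * π ^ 2 * ρ) * (K * (ρ + 1 / ρ)) :=
          mul_le_mul_of_nonneg_left ((H ρ hρ).2 R hR) (by positivity)
      _ ≤ 1 / (1 * ρ) * (K * (ρ + 1 / ρ)) := by gcongr
      _ = K * (1 + 1 / ρ ^ 2) := by field_simp
      _ ≤ (K + 1) * (1 + 1 / ρ ^ 2) := by gcongr; linarith
  have hlim : ∀ ρ : ℝ, 0 < ρ → Tendsto
      (fun R => (1 / (2 * π ^ 2 * ρ)) * ∫ r in (0 : ℝ)..R, r * φh r * Real.sin (ρ * r))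
      atTop (𝓝 (1 / (2 * π ^ 2 * ρ) * l ρ)) := fun ρ hρ => (hl ρ hρ).const_mul _
  refine ⟨fun ρ => 1 / (2 * π ^ 2 * ρ) * l ρ, hlim, K + 1, by linarith, hbd, fun ρ hρ => ?_⟩
  refine le_of_tendsto (hlim ρ hρ).abs ?_
  filter_upwards [eventually_gt_atTop 0] with R hR
  exact hbd ρ R hρ hR
end

section
/- Let φ̂ : [0,∞) → ℝ be Borel measurable with ∫₀^∞ r³ φ̂(r)² dr = 1/(2π), and suppose there exists r₀ ≥ 0 such that r ↦ r φ̂(r) is monotone on (r₀, ∞). Let φ(ρ) := lim_{R→∞} (1/(2π²ρ)) ∫₀^R r φ̂(r) sin(ρ r) dr for ρ > 0. Then for every Schwartz function ψ on ℝ³, the functions ξ ↦ φ̂(|ξ|) ψ(ξ) and x ↦ φ(|x|) ψ̂(x) are Lebesgue integrable on ℝ³ and ∫_{ℝ³} φ̂(|ξ|) ψ(ξ) dξ = ∫_{ℝ³} φ(|x|) ψ̂(x) dx, where ψ̂(x) := ∫_{ℝ³} ψ(ξ) e^{−i x·ξ} dξ. -/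
/-!
The identity is first proved for the truncations `φ̂ · 1_{r ≤ R}` and then passed to the limit
`R → ∞` by dominated convergence on both sides.

* The hypothesis `∫ r³ φ̂² < ∞` makes `r² φ̂` integrable near `0` by AM-GM, so the truncated radial
  function is integrable on `ℝ³`. Its Fourier transform is the truncated sine integral
  (`radial_fourier`): slice `ℝ³ = ℝ × ℂ` orthogonally to `x`, so that the slice at height `s`
  contributes `2π ∫_{r > |s|} r f(r) dr`, and exchange the two integrations. Self-adjointness of the
  Fourier transform and Fourier inversion for `ψ` then give the truncated identity
  (`integral_truncProfile_mul`).
* The sine integrals are bounded by `C (1 + ρ⁻²)` uniformly in the cutoff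
  (`exists_truncInv_bound`). On `[0, A]` one uses `|sin (ρ r)| ≤ ρ r`. On `[A, R]`, the function
  `g(r) = r φ̂(r)` is monotone and, because `∫ r g² < ∞`, bounded by `|g(A)|`; comparing the
  integral with its shift by half a period `π / ρ` bounds it by a constant times `|g(A)| / ρ`
  (`abs_integral_mul_sin_le_of_monotone`). In dimension three `1 + |x|⁻²` times a Schwartz function
  is integrable, which provides the dominating function.

Mathlib's Fourier transform has the phase `2π`; the two conventions are related by the dilation
`x = -2π y`, see `fourierInt_smul` and `fourier_truncProfile`.
-/

open MeasureTheory Real Filter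
open scoped Topology RealInnerProductSpace

noncomputable section

abbrev E3 := EuclideanSpace ℝ (Fin 3)

/-- `ψ̂(x) = ∫_{ℝ³} ψ(ξ) e^{−i x·ξ} dξ`. -/
noncomputable def fourierInt (ψ : SchwartzMap E3 ℂ) (x : E3) : ℂ :=
  ∫ ξ : E3, ψ ξ * Complex.exp (-(Complex.I * (⟪x, ξ⟫ : ℝ)))

/-! ### Fourier transform of a radial function on `ℝ³` -/

/-- `ℝ³` as the orthogonal sum of an axis and a plane. -/
abbrev W3 := WithLp 2 (ℝ × ℂ)

lemma exists_isometry_axis (x : E3) :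
    ∃ A : E3 ≃ₗᵢ[ℝ] W3, A x = WithLp.toLp 2 (‖x‖, 0) := by
  have hdim : Module.finrank ℝ E3 = Module.finrank ℝ W3 := by
    rw [(WithLp.linearEquiv 2 ℝ (ℝ × ℂ)).finrank_eq]
    simp
  let B : E3 ≃ₗᵢ[ℝ] W3 := ((stdOrthonormalBasis ℝ E3).reindex (finCongr hdim)).repr.trans
    (stdOrthonormalBasis ℝ W3).repr.symm
  have hn : ‖B x‖ = ‖(WithLp.toLp 2 (‖x‖, 0) : W3)‖ := by
    simp
  refine ⟨B.trans (Submodule.reflection (ℝ ∙ (B x - (WithLp.toLp 2 (‖x‖, 0) : W3)))ᗮ), ?_⟩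
  simpa using Submodule.reflection_sub hn

lemma integral_axis (f : ℝ → ℂ) (x : E3) :
    ∫ ξ : E3, f ‖ξ‖ * Complex.exp (Complex.I * (⟪x, ξ⟫ : ℝ)) =
      ∫ p : ℝ × ℂ, f (√(p.1 ^ 2 + ‖p.2‖ ^ 2)) * Complex.exp (Complex.I * (‖x‖ * p.1 : ℝ)) := by
  obtain ⟨A, hA⟩ := exists_isometry_axis x
  rw [← (WithLp.volume_preserving_ofLp ℝ ℂ).integral_comp
    (MeasurableEquiv.toLp 2 (ℝ × ℂ)).symm.measurableEmbedding,
    ← A.measurePreserving.integral_comp A.toHomeomorph.measurableEmbedding]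
  congr 1 with ξ
  rw [← A.norm_map ξ, ← A.inner_map_map x ξ, hA, WithLp.prod_norm_eq_of_L2]
  simp [WithLp.prod_inner_apply, mul_comm]

lemma integrable_axis (f : ℝ → ℂ) (hf : Integrable (fun ξ : E3 => f ‖ξ‖)) :
    Integrable (fun p : ℝ × ℂ => f (√(p.1 ^ 2 + ‖p.2‖ ^ 2))) := by
  obtain ⟨A, hA⟩ := exists_isometry_axis 0
  rw [← (WithLp.volume_preserving_ofLp ℝ ℂ).integrable_comp_emb
    (MeasurableEquiv.toLp 2 (ℝ × ℂ)).symm.measurableEmbedding,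
    ← A.measurePreserving.integrable_comp_emb A.toHomeomorph.measurableEmbedding]
  refine hf.congr (.of_forall fun ξ => ?_)
  simp only [Function.comp_def]
  rw [← A.norm_map ξ, WithLp.prod_norm_eq_of_L2]
  simp

/-- Polar coordinates in the plane, followed by the substitution `r = √(s² + y²)`. -/
lemma integral_slice (f : ℝ → ℂ) (s : ℝ) :
    ∫ z : ℂ, f (√(s ^ 2 + ‖z‖ ^ 2)) = 2 * π * ∫ r in Set.Ioi |s|, r * f r := by
  rw [integral_fun_norm_addHaar volume (fun y => f (√(s ^ 2 + y ^ 2)))]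
  have himg : (fun y : ℝ => √(s ^ 2 + y ^ 2)) '' Set.Ioi 0 = Set.Ioi |s| := by
    ext r
    simp only [Set.mem_image, Set.mem_Ioi]
    constructor
    · rintro ⟨y, hy, rfl⟩
      rw [← Real.sqrt_sq_eq_abs]
      exact Real.sqrt_lt_sqrt (sq_nonneg _) (by nlinarith)
    · intro h
      have h0 : 0 < r := (abs_nonneg s).trans_lt h
      have h2 : s ^ 2 < r ^ 2 := by
        rw [← sq_abs s]
        nlinarith [abs_nonneg s]
      refine ⟨√(r ^ 2 - s ^ 2), Real.sqrt_pos.2 (by linarith), ?_⟩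
      rw [Real.sq_sqrt (by linarith)]
      simp [Real.sqrt_sq h0.le]
  have hcv := integral_image_eq_integral_abs_deriv_smul (s := Set.Ioi (0 : ℝ))
    (f := fun y : ℝ => √(s ^ 2 + y ^ 2)) (f' := fun y => y / √(s ^ 2 + y ^ 2))
    measurableSet_Ioi ?_ ?_ (fun r => r * f r)
  · rw [himg] at hcv
    rw [hcv]
    have : ∫ y in Set.Ioi (0 : ℝ), y ^ (Module.finrank ℝ ℂ - 1) • f (√(s ^ 2 + y ^ 2)) =
        ∫ y in Set.Ioi (0 : ℝ), |y / √(s ^ 2 + y ^ 2)| •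
          ((√(s ^ 2 + y ^ 2) : ℝ) * f (√(s ^ 2 + y ^ 2))) := by
      refine setIntegral_congr_fun measurableSet_Ioi fun y hy => ?_
      have hy : 0 < y := hy
      have hp : 0 < √(s ^ 2 + y ^ 2) := Real.sqrt_pos.2 (by positivity)
      simp only [Complex.finrank_real_complex]
      rw [abs_of_pos (by positivity), Complex.real_smul, Complex.real_smul, ← mul_assoc,
        ← Complex.ofReal_mul, div_mul_cancel₀ _ hp.ne']
      simp
    rw [this]
    simp [Measure.real, Complex.volume_ball, mul_assoc]
  · intro y hy
    have hy : 0 < y := hy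
    have : HasDerivAt (fun y : ℝ => s ^ 2 + y ^ 2) (2 * y) y := by
      simpa using (hasDerivAt_pow 2 y).const_add (s ^ 2)
    convert! (this.sqrt (by positivity)).hasDerivWithinAt using 1
    field_simp
  · intro a ha b hb hab
    have ha : 0 < a := ha
    have hb : 0 < b := hb
    have := (Real.sqrt_inj (by positivity) (by positivity)).1 hab
    nlinarith

lemma integral_cexp_symm {ρ r : ℝ} (hρ : ρ ≠ 0) :
    ∫ s in (-r)..r, Complex.exp (Complex.I * (ρ * s : ℝ)) = 2 * Real.sin (ρ * r) / ρ := by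
  have h : ∀ s : ℝ, Complex.exp (Complex.I * (ρ * s : ℝ)) = Complex.exp ((Complex.I * ρ) * s) := by
    intro s; push_cast; ring_nf
  have hc : Complex.I * (ρ : ℂ) ≠ 0 := by simp [hρ]
  have hρ' : (ρ : ℂ) ≠ 0 := by simp [hρ]
  simp_rw [h]
  rw [integral_exp_mul_complex hc]
  push_cast
  rw [Complex.sin]
  field_simp
  rw [Complex.I_sq]
  ring_nf

/-- The Fourier transform of an integrable radial function on `ℝ³` is a one-dimensional
sine integral. -/
lemma radial_fourier (f : ℝ → ℂ) (hf : Integrable (fun ξ : E3 => f ‖ξ‖)) (x : E3) (hx : x ≠ 0) :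
    ∫ ξ : E3, f ‖ξ‖ * Complex.exp (Complex.I * (⟪x, ξ⟫ : ℝ)) =
      4 * π / ‖x‖ * ∫ r in Set.Ioi (0 : ℝ), r * f r * Real.sin (‖x‖ * r) := by
  have hρ : ‖x‖ ≠ 0 := norm_ne_zero_iff.2 hx
  set ρ := ‖x‖
  have hrad : IntegrableOn (fun r : ℝ => (r : ℂ) ^ 2 * f r) (Set.Ioi 0) := by
    simpa using (integrable_fun_norm_addHaar (volume : Measure E3)).1 hf
  rw [integral_axis]
  have hint := integrable_axis f hf
  have hE : Continuous (fun s : ℝ => Complex.exp (Complex.I * (ρ * s : ℝ))) := by fun_prop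
  have hEn : ∀ s : ℝ, ‖Complex.exp (Complex.I * (ρ * s : ℝ))‖ = 1 := fun s => by
    rw [mul_comm]; exact Complex.norm_exp_ofReal_mul_I _
  have hint' : Integrable (fun p : ℝ × ℂ =>
      f (√(p.1 ^ 2 + ‖p.2‖ ^ 2)) * Complex.exp (Complex.I * (ρ * p.1 : ℝ))) := by
    refine hint.mul_bdd (c := 1) (hE.comp continuous_fst).aestronglyMeasurable
      (.of_forall fun p => (hEn p.1).le)
  rw [Measure.volume_eq_prod, integral_prod _ hint']
  simp_rw [integral_mul_const, integral_slice]
  -- The integrand on the region `|s| < r`, where the order of integration is exchanged.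
  let K : ℝ → ℝ → ℂ := fun r s => Set.indicator (Set.Ioo (-r) r)
    (fun s => r * f r * Complex.exp (Complex.I * (ρ * s : ℝ))) s
  have hK1 : ∀ s : ℝ, 2 * π * (∫ r in Set.Ioi |s|, r * f r) *
      Complex.exp (Complex.I * (ρ * s : ℝ)) = 2 * π * ∫ r in Set.Ioi (0 : ℝ), K r s := by
    intro s
    rw [mul_assoc, ← integral_mul_const]
    congr 1
    have : ∀ r, K r s = Set.indicator (Set.Ioi |s|)
      (fun r : ℝ => r * f r * Complex.exp (Complex.I * (ρ * s : ℝ))) r := by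
      intro r
      simp only [K, Set.indicator, Set.mem_Ioo, Set.mem_Ioi, abs_lt]
    simp_rw [this]
    rw [setIntegral_indicator measurableSet_Ioi]
    congr 2
    ext r
    simp only [Set.mem_inter_iff, Set.mem_Ioi]
    exact ⟨fun h => ⟨(abs_nonneg s).trans_lt h, h⟩, fun h => h.2⟩
  have hK2 : ∀ r ∈ Set.Ioi (0 : ℝ), ∫ s, K r s = r * f r * (2 * Real.sin (ρ * r) / ρ) := by
    intro r hr
    have hr : 0 < r := hr
    simp only [K]
    rw [integral_indicator measurableSet_Ioo, integral_const_mul, ← integral_Ioc_eq_integral_Ioo,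
      ← intervalIntegral.integral_of_le (by linarith), integral_cexp_symm hρ]
  have hfm : AEStronglyMeasurable (fun r : ℝ => (r : ℂ) * f r)
      (volume.restrict (Set.Ioi 0)) := by
    have h1 : AEStronglyMeasurable (fun r : ℝ => ((r : ℂ))⁻¹ * ((r : ℂ) ^ 2 * f r))
        (volume.restrict (Set.Ioi 0)) := by
      refine AEStronglyMeasurable.mul ?_ hrad.aestronglyMeasurable
      exact Measurable.aestronglyMeasurable (by fun_prop)
    refine h1.congr ((ae_restrict_iff' measurableSet_Ioi).2 (.of_forall fun r hr => ?_))
    have : (r : ℂ) ≠ 0 := by simpa using (ne_of_gt hr)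
    field_simp
  have hKint : Integrable (fun p : ℝ × ℝ => K p.1 p.2)
      ((volume.restrict (Set.Ioi 0)).prod volume) := by
    have hKm : AEStronglyMeasurable (fun p : ℝ × ℝ => K p.1 p.2)
        ((volume.restrict (Set.Ioi 0)).prod volume) := by
      have : (fun p : ℝ × ℝ => K p.1 p.2) = Set.indicator {p : ℝ × ℝ | -p.1 < p.2 ∧ p.2 < p.1}
          (fun p => p.1 * f p.1 * Complex.exp (Complex.I * (ρ * p.2 : ℝ))) := by
        ext p
        simp [K, Set.indicator]
      rw [this]
      refine AEStronglyMeasurable.indicator ?_ ?_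
      · exact hfm.comp_fst.mul (hE.comp continuous_snd).aestronglyMeasurable
      · exact (measurableSet_lt (measurable_fst.neg) measurable_snd).inter
          (measurableSet_lt measurable_snd measurable_fst)
    rw [integrable_prod_iff hKm]
    constructor
    · refine .of_forall fun r => ?_
      refine (integrable_indicator_iff (measurableSet_Ioo : MeasurableSet (Set.Ioo (-r) r))).2 ?_
      have hc : Continuous (fun s : ℝ => r * f r * Complex.exp (Complex.I * (ρ * s : ℝ))) :=
        continuous_const.mul hE
      exact (hc.integrableOn_Icc (μ := volume)).mono_set Set.Ioo_subset_Icc_self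
    · refine (hrad.norm.const_mul 2).congr
        ((ae_restrict_iff' measurableSet_Ioi).2 (.of_forall fun r hr => ?_))
      have hr : 0 < r := hr
      have : ∀ s, ‖K r s‖ = Set.indicator (Set.Ioo (-r) r) (fun _ => ‖(r : ℂ) * f r‖) s := by
        intro s
        simp only [K, norm_indicator_eq_indicator_norm, norm_mul, hEn, mul_one]
      simp_rw [this]
      rw [integral_indicator measurableSet_Ioo, setIntegral_const]
      simp [Measure.real, abs_of_pos hr]
      rw [ENNReal.toReal_ofReal (by linarith)]
      ring
  simp_rw [hK1]
  rw [integral_const_mul, integral_integral_swap (f := fun s r => K r s) hKint.swap,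
    setIntegral_congr_fun measurableSet_Ioi hK2]
  have : ∀ r : ℝ, (r : ℂ) * f r * (2 * Real.sin (ρ * r) / ρ) =
      2 / ρ * (r * f r * Real.sin (ρ * r)) := by intro r; ring
  simp_rw [this]
  rw [integral_const_mul]
  ring

/-! ### Oscillatory integrals of monotone functions -/

/-- A substitute for the second mean value theorem. Since `sin (ρ (r + h)) = -sin (ρ r)` for
`h = π / ρ`, twice the integral is, up to two boundary integrals over intervals of length `h`,
the integral of `(g r - g (r + h)) sin (ρ r)`; by monotonicity the latter is dominated by a
telescoping integral. -/
lemma abs_integral_mul_sin_le_of_monotone {g : ℝ → ℝ} {A M ρ R : ℝ}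
    (hg : MonotoneOn g (Set.Ici A)) (hM : ∀ r ∈ Set.Ici A, |g r| ≤ M) (hρ : 0 < ρ) (hR : A ≤ R) :
    |∫ r in A..R, g r * Real.sin (ρ * r)| ≤ 2 * M * π / ρ := by
  set h := π / ρ with hh
  have hpos : 0 < h := by positivity
  have hgi : ∀ a b, A ≤ a → A ≤ b → IntervalIntegrable g volume a b := fun a b ha hb =>
    (hg.mono fun r hr => (le_min ha hb).trans hr.1).intervalIntegrable
  have hsi : ∀ a b, A ≤ a → A ≤ b →
      IntervalIntegrable (fun r => g r * Real.sin (ρ * r)) volume a b := fun a b ha hb =>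
    (hgi a b ha hb).mul_continuousOn (by fun_prop)
  have hgh : IntervalIntegrable (fun r => g (r + h)) volume A R := by
    have := (hgi (A + h) (R + h) (by linarith) (by linarith)).comp_add_right h
    simpa using this
  have hsin : ∀ r, Real.sin (ρ * (r + h)) = - Real.sin (ρ * r) := by
    intro r
    rw [mul_add, hh, mul_div_cancel₀ _ hρ.ne', Real.sin_add_pi]
  have hshort : ∀ a, A ≤ a → |∫ r in a..(a + h), g r * Real.sin (ρ * r)| ≤ M * h := by
    intro a ha
    have := intervalIntegral.norm_integral_le_of_norm_le_const (a := a) (b := a + h) (C := M)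
      (f := fun r => g r * Real.sin (ρ * r)) ?_
    · simpa [abs_of_pos hpos] using this
    · intro r hr
      rw [Set.uIoc_of_le (by linarith)] at hr
      rw [norm_mul]
      have h1 := hM r (ha.trans hr.1.le)
      have h2 := Real.abs_sin_le_one (ρ * r)
      simp only [Real.norm_eq_abs]
      nlinarith [abs_nonneg (g r), abs_nonneg (Real.sin (ρ * r))]
  have hshortg : ∀ a, A ≤ a → |∫ r in a..(a + h), g r| ≤ M * h := by
    intro a ha
    have := intervalIntegral.norm_integral_le_of_norm_le_const (a := a) (b := a + h) (C := M)
      (f := g) ?_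
    · simpa [abs_of_pos hpos] using this
    · intro r hr
      rw [Set.uIoc_of_le (by linarith)] at hr
      exact hM r (ha.trans hr.1.le)
  have hshift : ∫ r in A..R, g (r + h) * Real.sin (ρ * r) =
      - ∫ r in (A + h)..(R + h), g r * Real.sin (ρ * r) := by
    rw [← intervalIntegral.integral_comp_add_right (fun r => g r * Real.sin (ρ * r)),
      ← intervalIntegral.integral_neg]
    simp_rw [hsin]
    simp
  have hadj : (∫ r in A..R, g r * Real.sin (ρ * r)) + (∫ r in R..(R + h), g r * Real.sin (ρ * r)) =
      (∫ r in A..(A + h), g r * Real.sin (ρ * r)) +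
        ∫ r in (A + h)..(R + h), g r * Real.sin (ρ * r) := by
    rw [intervalIntegral.integral_add_adjacent_intervals,
      intervalIntegral.integral_add_adjacent_intervals] <;> apply hsi <;> linarith
  have hadjg : (∫ r in A..R, g r) + (∫ r in R..(R + h), g r) =
      (∫ r in A..(A + h), g r) + ∫ r in (A + h)..(R + h), g r := by
    rw [intervalIntegral.integral_add_adjacent_intervals,
      intervalIntegral.integral_add_adjacent_intervals] <;> apply hgi <;> linarith
  have hdiff : |∫ r in A..R, (g (r + h) - g r) * Real.sin (ρ * r)| ≤ 2 * (M * h) := by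
    have h1 : |∫ r in A..R, (g (r + h) - g r) * Real.sin (ρ * r)| ≤
        ∫ r in A..R, (g (r + h) - g r) := by
      rw [← Real.norm_eq_abs]
      refine intervalIntegral.norm_integral_le_of_norm_le hR (.of_forall fun r hr => ?_)
        (hgh.sub (hgi A R le_rfl hR))
      have : g r ≤ g (r + h) := hg hr.1.le (Set.mem_Ici.2 (by linarith [hr.1])) (by linarith)
      rw [norm_mul, Real.norm_eq_abs, Real.norm_eq_abs, abs_of_nonneg (by linarith)]
      exact mul_le_of_le_one_right (by linarith) (Real.abs_sin_le_one _)
    rw [intervalIntegral.integral_sub hgh (hgi A R le_rfl hR),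
      intervalIntegral.integral_comp_add_right] at h1
    have h2 := abs_le.1 (hshortg A le_rfl)
    have h3 := abs_le.1 (hshortg R hR)
    linarith
  have hsplit : ∫ r in A..R, (g (r + h) - g r) * Real.sin (ρ * r) =
      (∫ r in A..R, g (r + h) * Real.sin (ρ * r)) - ∫ r in A..R, g r * Real.sin (ρ * r) := by
    rw [← intervalIntegral.integral_sub (hgh.mul_continuousOn (by fun_prop)) (hsi A R le_rfl hR)]
    simp_rw [sub_mul]
  have h2 := abs_le.1 (hshort A le_rfl)
  have h3 := abs_le.1 (hshort R hR)
  have h4 := abs_le.1 hdiff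
  have h5 : 2 * M * π / ρ = 2 * (M * h) := by rw [hh]; ring
  rw [h5, abs_le]
  constructor <;> linarith

/-- Integrability of `r g²` forces a monotone `g` to be nonpositive, since a positive value would
persist up to infinity. -/
lemma abs_le_of_monotone {g : ℝ → ℝ} {A : ℝ} (hA : 0 < A) (hg : MonotoneOn g (Set.Ici A))
    (hint : IntegrableOn (fun r => r * g r ^ 2) (Set.Ioi 0)) :
    ∀ r ∈ Set.Ici A, |g r| ≤ |g A| := by
  have hneg : ∀ b ∈ Set.Ici A, g b ≤ 0 := by
    intro b hb
    have hb' : A ≤ b := hb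
    by_contra! hgb
    have hc : IntegrableOn (fun _ : ℝ => A * g b ^ 2) (Set.Ioi b) := by
      refine (hint.mono_set (Set.Ioi_subset_Ioi (by linarith))).mono'
        aestronglyMeasurable_const ((ae_restrict_iff' measurableSet_Ioi).2 (.of_forall ?_))
      intro r hr
      have hr : b < r := hr
      have h1 : g b ≤ g r := hg hb (Set.mem_Ici.2 (by linarith)) hr.le
      rw [Real.norm_of_nonneg (by positivity)]
      have h2 : g b ^ 2 ≤ g r ^ 2 := by gcongr
      exact mul_le_mul (by linarith) h2 (by positivity) (by linarith)
    rw [integrableOn_const_iff] at hc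
    simp at hc
    exact absurd hc (by simp [hA.ne', hgb.ne'])
  intro r hr
  rw [abs_of_nonpos (hneg r hr), abs_of_nonpos (hneg A Set.self_mem_Ici)]
  exact neg_le_neg (hg Set.self_mem_Ici hr hr)

lemma tail_bound {g : ℝ → ℝ} {A : ℝ} (hA : 0 < A)
    (hg : MonotoneOn g (Set.Ici A) ∨ AntitoneOn g (Set.Ici A))
    (hint : IntegrableOn (fun r => r * g r ^ 2) (Set.Ioi 0)) {ρ R : ℝ} (hρ : 0 < ρ) (hR : A ≤ R) :
    |∫ r in A..R, g r * Real.sin (ρ * r)| ≤ 2 * |g A| * π / ρ := by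
  rcases hg with hg | hg
  · exact abs_integral_mul_sin_le_of_monotone hg (abs_le_of_monotone hA hg hint) hρ hR
  · have := abs_integral_mul_sin_le_of_monotone hg.neg
      (abs_le_of_monotone hA hg.neg (by simpa using hint)) hρ hR
    simpa using this

/-! ### Integrability against Schwartz functions -/

lemma integrableOn_one_add_inv_sq : IntegrableOn (fun r : ℝ => 1 / (1 + r) ^ 2) (Set.Ioi 0) := by
  have := (integrable_one_add_norm (E := ℝ) (μ := volume) (r := 2) (by simp)).integrableOn
    (s := Set.Ioi 0)
  refine this.congr_fun (fun r hr => ?_) measurableSet_Ioi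
  have hr : 0 < r := hr
  simp only
  rw [Real.norm_of_nonneg hr.le, Real.rpow_neg (by linarith), one_div]
  norm_cast

lemma integrable_weight_mul_schwartz (w : ℝ → ℝ) (hw : Measurable w)
    (hi : IntegrableOn (fun r => r ^ 2 * (w r / (1 + r) ^ 4)) (Set.Ioi 0))
    (η : SchwartzMap E3 ℂ) : Integrable (fun y : E3 => (w ‖y‖ : ℂ) * η y) := by
  set D := 2 ^ 4 * ((Finset.Iic ((4, 0) : ℕ × ℕ)).sup
    (fun m => SchwartzMap.seminorm ℝ m.1 m.2)) η
  have hD : ∀ y, (1 + ‖y‖) ^ 4 * ‖η y‖ ≤ D := by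
    intro y
    have := SchwartzMap.one_add_le_sup_seminorm_apply (𝕜 := ℝ) (m := (4, 0)) (k := 4) (n := 0)
      le_rfl le_rfl η y
    simpa using this
  have hrad : Integrable (fun y : E3 => w ‖y‖ / (1 + ‖y‖) ^ 4) := by
    refine (integrable_fun_norm_addHaar (volume : Measure E3)
      (f := fun r => w r / (1 + r) ^ 4)).2 ?_
    simpa using hi
  refine (hrad.norm.const_mul D).mono' ?_ (.of_forall fun y => ?_)
  · refine AEStronglyMeasurable.mul ?_ η.continuous.aestronglyMeasurable
    exact (Complex.measurable_ofReal.comp (hw.comp measurable_norm)).aestronglyMeasurable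
  · have hp : 0 < (1 + ‖y‖) ^ 4 := by positivity
    rw [norm_mul, norm_div, Complex.norm_real, Real.norm_of_nonneg hp.le, ← mul_div_assoc,
      le_div_iff₀ hp]
    nlinarith [hD y, norm_nonneg (w ‖y‖)]

lemma integrable_singular_mul_schwartz (η : SchwartzMap E3 ℂ) :
    Integrable (fun y : E3 => (((1 + (‖y‖ ^ 2)⁻¹ : ℝ)) : ℂ) * η y) := by
  refine integrable_weight_mul_schwartz (fun r => 1 + (r ^ 2)⁻¹) (by fun_prop) ?_ η
  refine integrableOn_one_add_inv_sq.mono' (Measurable.aestronglyMeasurable (by fun_prop))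
    ((ae_restrict_iff' measurableSet_Ioi).2 (.of_forall fun r hr => ?_))
  have hr : 0 < r := hr
  rw [Real.norm_of_nonneg (by positivity)]
  have : r ^ 2 * ((1 + (r ^ 2)⁻¹) / (1 + r) ^ 4) = (r ^ 2 + 1) / (1 + r) ^ 4 := by field_simp
  rw [this, div_le_div_iff₀ (by positivity) (by positivity)]
  have : r ^ 2 + 1 ≤ (1 + r) ^ 2 := by nlinarith
  calc (r ^ 2 + 1) * (1 + r) ^ 2 ≤ (1 + r) ^ 2 * (1 + r) ^ 2 := by gcongr
    _ = _ := by ring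

lemma integrable_profile_mul_schwartz {φh : ℝ → ℝ} (hmeas : Measurable φh)
    (hint : IntegrableOn (fun r => r ^ 3 * φh r ^ 2) (Set.Ioi 0)) (η : SchwartzMap E3 ℂ) :
    Integrable (fun y : E3 => (φh ‖y‖ : ℂ) * η y) := by
  refine integrable_weight_mul_schwartz φh hmeas ?_ η
  refine (hint.add integrableOn_one_add_inv_sq).mono'
    (Measurable.aestronglyMeasurable (by fun_prop))
    ((ae_restrict_iff' measurableSet_Ioi).2 (.of_forall fun r hr => ?_))
  have hr : 0 < r := hr
  simp only [Pi.add_apply]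
  set q := 1 / (1 + r) ^ 2 with hq
  have hq0 : 0 < q := by positivity
  have hrq : r * q ≤ 1 := by
    rw [hq, mul_one_div, div_le_one (by positivity)]; nlinarith
  have hq1 : q ≤ 1 := by
    rw [hq, div_le_one (by positivity)]; nlinarith
  have e : r ^ 2 * (φh r / (1 + r) ^ 4) = r ^ 2 * φh r * q ^ 2 := by rw [hq]; field_simp
  rw [e, norm_mul, norm_mul, norm_pow, norm_pow, Real.norm_of_nonneg hr.le,
    Real.norm_of_nonneg hq0.le, Real.norm_eq_abs, ← sq_abs (φh r)]
  set a := |φh r|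
  have h1 : 2 * (r ^ 2 * a * q ^ 2) ≤ r ^ 3 * a ^ 2 + r * q ^ 4 := by
    have : 0 ≤ r * (r * a - q ^ 2) ^ 2 := by positivity
    nlinarith
  have h2 : r * q ^ 4 ≤ q := by
    calc r * q ^ 4 = (r * q) * (q ^ 2) * q := by ring
      _ ≤ 1 * 1 * q := by gcongr; exact pow_le_one₀ hq0.le hq1
      _ = q := by ring
  have h3 : 0 ≤ r ^ 3 * a ^ 2 := by positivity
  nlinarith

/-! ### Truncated profiles -/

/-- The truncation at `R` of the sine integral whose limit as `R → ∞` is `φ(ρ)`. -/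
def truncInv (φh : ℝ → ℝ) (R ρ : ℝ) : ℝ :=
  (1 / (2 * π ^ 2 * ρ)) * ∫ r in (0 : ℝ)..R, r * φh r * Real.sin (ρ * r)

lemma integrableOn_sq_mul {φh : ℝ → ℝ} (hmeas : Measurable φh)
    (hint : IntegrableOn (fun r => r ^ 3 * φh r ^ 2) (Set.Ioi 0)) (R : ℝ) :
    IntegrableOn (fun r => r ^ 2 * φh r) (Set.Ioc 0 R) := by
  have hr : IntegrableOn (fun r : ℝ => r) (Set.Ioc 0 R) :=
    (continuous_id.integrableOn_Icc).mono_set Set.Ioc_subset_Icc_self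
  refine ((hint.mono_set Set.Ioc_subset_Ioi_self).add hr).mono'
    (Measurable.aestronglyMeasurable (by fun_prop))
    ((ae_restrict_iff' measurableSet_Ioc).2 (.of_forall fun r hr => ?_))
  have hr : 0 < r := hr.1
  simp only [Pi.add_apply]
  rw [norm_mul, norm_pow, Real.norm_of_nonneg hr.le, Real.norm_eq_abs, ← sq_abs (φh r)]
  set a := |φh r|
  have h1 : 0 ≤ r * (r * a - 1) ^ 2 := by positivity
  have h3 : 0 ≤ r ^ 3 * a ^ 2 := by positivity
  nlinarith

/-- The bound is uniform in the cutoff `R`, and its singularity `ρ⁻²` is integrable near the origin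
of `ℝ³`. -/
lemma exists_truncInv_bound {φh : ℝ → ℝ} (hmeas : Measurable φh)
    (hint : IntegrableOn (fun r => r ^ 3 * φh r ^ 2) (Set.Ioi 0)) {A : ℝ} (hA : 0 < A)
    (hg : MonotoneOn (fun r => r * φh r) (Set.Ici A) ∨
      AntitoneOn (fun r => r * φh r) (Set.Ici A)) :
    ∃ C, 0 ≤ C ∧ ∀ ρ R, 0 < ρ → A ≤ R → |truncInv φh R ρ| ≤ C * (1 + (ρ ^ 2)⁻¹) := by
  set C1 := ∫ r in (0 : ℝ)..A, |r ^ 2 * φh r| with hC1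
  have hC1i : IntervalIntegrable (fun r => |r ^ 2 * φh r|) volume 0 A :=
    (intervalIntegrable_iff_integrableOn_Ioc_of_le hA.le).2 (integrableOn_sq_mul hmeas hint A).abs
  have hC1p : 0 ≤ C1 := intervalIntegral.integral_nonneg hA.le fun r _ => abs_nonneg _
  refine ⟨C1 + |A * φh A|, by positivity, fun ρ R hρ hR => ?_⟩
  have hpt : ∀ r ∈ Set.Ioc 0 A, ‖r * φh r * Real.sin (ρ * r)‖ ≤ ρ * |r ^ 2 * φh r| := by
    intro r hr
    have hr : 0 < r := hr.1
    have h1 : |Real.sin (ρ * r)| ≤ ρ * r := by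
      have := Real.abs_sin_le_abs (x := ρ * r)
      rwa [abs_of_pos (show 0 < ρ * r by positivity)] at this
    rw [norm_mul, norm_mul, Real.norm_of_nonneg hr.le, abs_mul,
      abs_of_pos (show 0 < r ^ 2 by positivity)]
    simp only [Real.norm_eq_abs]
    calc r * |φh r| * |Real.sin (ρ * r)| ≤ r * |φh r| * (ρ * r) := by gcongr
      _ = _ := by ring
  have hlow : |∫ r in (0 : ℝ)..A, r * φh r * Real.sin (ρ * r)| ≤ ρ * C1 := by
    rw [hC1, ← intervalIntegral.integral_const_mul, ← Real.norm_eq_abs]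
    exact intervalIntegral.norm_integral_le_of_norm_le hA.le (.of_forall hpt) (hC1i.const_mul ρ)
  have hi1 : IntervalIntegrable (fun r => r * φh r * Real.sin (ρ * r)) volume 0 A := by
    refine (hC1i.const_mul ρ).mono_fun (Measurable.aestronglyMeasurable (by fun_prop)) ?_
    rw [Set.uIoc_of_le hA.le]
    refine (ae_restrict_iff' measurableSet_Ioc).2 (.of_forall fun r hr => ?_)
    exact (hpt r hr).trans (Real.le_norm_self _)
  have hi2 : IntervalIntegrable (fun r => r * φh r * Real.sin (ρ * r)) volume A R := by
    refine IntervalIntegrable.mul_continuousOn (f := fun r => r * φh r) ?_ (by fun_prop)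
    have hs : Set.uIcc A R ⊆ Set.Ici A := by
      rw [Set.uIcc_of_le hR]; exact Set.Icc_subset_Ici_self
    exact hg.elim (fun h => (h.mono hs).intervalIntegrable) fun h => (h.mono hs).intervalIntegrable
  have htail := tail_bound hA hg
    (hint.congr_fun (fun r _ => by ring) measurableSet_Ioi) hρ hR
  have htot : |∫ r in (0 : ℝ)..R, r * φh r * Real.sin (ρ * r)| ≤
      ρ * C1 + 2 * |A * φh A| * π / ρ := by
    rw [← intervalIntegral.integral_add_adjacent_intervals hi1 hi2]
    exact (abs_add_le _ _).trans (add_le_add hlow htail)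
  rw [truncInv, abs_mul, abs_of_pos (by positivity)]
  have hπ := Real.pi_gt_three
  calc _ ≤ 1 / (2 * π ^ 2 * ρ) * (ρ * C1 + 2 * |A * φh A| * π / ρ) := by gcongr
    _ = C1 * (1 / (2 * π ^ 2)) + |A * φh A| * (1 / π) * (ρ ^ 2)⁻¹ := by field_simp
    _ ≤ C1 * 1 + |A * φh A| * 1 * (ρ ^ 2)⁻¹ := by
      gcongr
      · rw [div_le_one (by positivity)]; nlinarith
      · rw [div_le_one (by positivity)]; linarith
    _ ≤ _ := by
      have : 0 ≤ (ρ ^ 2)⁻¹ := by positivity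
      nlinarith [abs_nonneg (A * φh A), mul_nonneg hC1p this]

/-- The profile `φ̂ · 1_{r ≤ R}`, with complex values. -/
def truncProfile (φh : ℝ → ℝ) (R r : ℝ) : ℂ := Set.indicator (Set.Iic R) (fun r => (φh r : ℂ)) r

lemma integrable_truncProfile {φh : ℝ → ℝ} (hmeas : Measurable φh)
    (hint : IntegrableOn (fun r => r ^ 3 * φh r ^ 2) (Set.Ioi 0)) (R : ℝ) :
    Integrable (fun ξ : E3 => truncProfile φh R ‖ξ‖) := by
  refine (integrable_fun_norm_addHaar (volume : Measure E3) (f := truncProfile φh R)).2 ?_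
  have h1 : IntegrableOn (fun r : ℝ => ((r ^ 2 * φh r : ℝ) : ℂ)) (Set.Ioc 0 R) :=
    (integrableOn_sq_mul hmeas hint R).ofReal
  have h2 := (h1.integrable_indicator measurableSet_Ioc).integrableOn (s := Set.Ioi 0)
  refine h2.congr_fun (fun r hr => ?_) measurableSet_Ioi
  have hr : 0 < r := hr
  by_cases h : r ≤ R <;> simp [truncProfile, h, hr]

open FourierTransform in
lemma fourier_truncProfile {φh : ℝ → ℝ} (hmeas : Measurable φh)
    (hint : IntegrableOn (fun r => r ^ 3 * φh r ^ 2) (Set.Ioi 0)) {R : ℝ} (hR : 0 ≤ R)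
    {y : E3} (hy : y ≠ 0) :
    𝓕 (fun ξ : E3 => truncProfile φh R ‖ξ‖) y = (2 * π) ^ 3 * truncInv φh R ‖(-(2 * π)) • y‖ := by
  have hx : (-(2 * π)) • y ≠ 0 := smul_ne_zero (by simp [Real.pi_ne_zero]) hy
  have h := radial_fourier (truncProfile φh R) (integrable_truncProfile hmeas hint R) _ hx
  have hl : 𝓕 (fun ξ : E3 => truncProfile φh R ‖ξ‖) y = ∫ ξ : E3, truncProfile φh R ‖ξ‖ *
      Complex.exp (Complex.I * (⟪(-(2 * π)) • y, ξ⟫ : ℝ)) := by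
    rw [Real.fourier_eq']
    congr 1 with ξ
    rw [smul_eq_mul, mul_comm, inner_smul_left, real_inner_comm]
    simp only [conj_trivial]
    rw [mul_comm Complex.I, neg_mul 2 π]
  rw [hl, h]
  set ρ := ‖(-(2 * π)) • y‖
  have hρ : (ρ : ℂ) ≠ 0 := by exact_mod_cast norm_ne_zero_iff.2 hx
  have hI : ∫ r in Set.Ioi (0 : ℝ), (r : ℂ) * truncProfile φh R r * Real.sin (ρ * r) =
      ((∫ r in (0 : ℝ)..R, r * φh r * Real.sin (ρ * r) : ℝ) : ℂ) := by
    rw [intervalIntegral.integral_of_le hR, ← integral_complex_ofReal,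
      ← Set.Ioi_inter_Iic, ← setIntegral_indicator measurableSet_Iic]
    congr 1 with r
    by_cases h : r ≤ R <;> simp [truncProfile, h]
  rw [hI, truncInv]
  generalize (∫ r in (0 : ℝ)..R, r * φh r * Real.sin (ρ * r)) = J
  have hπ : (π : ℂ) ≠ 0 := by exact_mod_cast Real.pi_ne_zero
  push_cast
  field_simp
  ring

open FourierTransform in
/-- The minus sign in the dilation turns `fourierInt` into the inverse transform `𝓕⁻`. -/
lemma fourierInt_smul (ψ : SchwartzMap E3 ℂ) (y : E3) :
    fourierInt ψ ((-(2 * π)) • y) = (𝓕⁻ ψ) y := by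
  rw [SchwartzMap.fourierInv_coe, Real.fourierInv_eq', fourierInt]
  congr 1 with ξ
  rw [smul_eq_mul, mul_comm, inner_smul_left, real_inner_comm]
  simp only [conj_trivial]
  congr 2
  push_cast
  ring

open FourierTransform in
lemma integral_truncProfile_mul {φh : ℝ → ℝ} (hmeas : Measurable φh)
    (hint : IntegrableOn (fun r => r ^ 3 * φh r ^ 2) (Set.Ioi 0)) (R : ℝ)
    (ψ : SchwartzMap E3 ℂ) :
    ∫ ξ : E3, truncProfile φh R ‖ξ‖ * ψ ξ =
      ∫ y : E3, 𝓕 (fun ξ : E3 => truncProfile φh R ‖ξ‖) y * (𝓕⁻ ψ) y := by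
  have h := VectorFourier.integral_fourierIntegral_smul_eq_flip (L := innerₗ E3)
    (μ := volume) (ν := volume)
    Real.continuous_fourierChar continuous_inner (integrable_truncProfile hmeas hint R)
    (𝓕⁻ ψ).integrable
  have e : 𝓕 (𝓕⁻ ψ) = ψ := FourierTransform.fourier_fourierInv_eq ψ
  have hee : 𝓕 ((𝓕⁻ ψ : SchwartzMap E3 ℂ) : E3 → ℂ) = ψ := by
    rw [← SchwartzMap.fourier_coe, e]
  rw [flip_innerₗ] at h
  simp only [smul_eq_mul] at h
  refine Eq.trans ?_ h.symm
  conv_lhs => rw [← hee]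
  rfl

/-- If `φ̂` is Borel measurable with `∫₀^∞ r³ φ̂(r)² dr = 1/(2π)`,
`r ↦ r φ̂(r)` is monotone on `(r₀, ∞)` for some `r₀ ≥ 0`, and
`φ(ρ) = lim_{R→∞} (1/(2π²ρ)) ∫₀^R r φ̂(r) sin(ρr) dr` for `ρ > 0`, then for every Schwartz
function `ψ` on `ℝ³`, the functions `ξ ↦ φ̂(|ξ|)ψ(ξ)` and `x ↦ φ(|x|)ψ̂(x)` are integrable
and `∫ φ̂(|ξ|)ψ(ξ) dξ = ∫ φ(|x|)ψ̂(x) dx`. -/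
theorem stmt13 (φh : ℝ → ℝ) (hmeas : Measurable φh)
    (hnorm : ∫ r in Set.Ioi (0 : ℝ), r ^ 3 * (φh r) ^ 2 = 1 / (2 * π))
    (r₀ : ℝ) (hr₀ : 0 ≤ r₀)
    (hmono : MonotoneOn (fun r => r * φh r) (Set.Ioi r₀) ∨
      AntitoneOn (fun r => r * φh r) (Set.Ioi r₀))
    (φfun : ℝ → ℝ)
    (hφ : ∀ ρ : ℝ, 0 < ρ →
      Tendsto (fun R => (1 / (2 * π ^ 2 * ρ)) * ∫ r in (0 : ℝ)..R, r * φh r * Real.sin (ρ * r))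
        atTop (𝓝 (φfun ρ)))
    (ψ : SchwartzMap E3 ℂ) :
    Integrable (fun ξ : E3 => (φh ‖ξ‖ : ℂ) * ψ ξ) volume ∧
    Integrable (fun x : E3 => (φfun ‖x‖ : ℂ) * fourierInt ψ x) volume ∧
    (∫ ξ : E3, (φh ‖ξ‖ : ℂ) * ψ ξ) = ∫ x : E3, (φfun ‖x‖ : ℂ) * fourierInt ψ x := by
  have hint : IntegrableOn (fun r => r ^ 3 * φh r ^ 2) (Set.Ioi 0) := by
    -- A nonzero Bochner integral is that of an integrable function.
    refine Integrable.of_integral_ne_zero ?_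
    rw [hnorm]
    positivity
  have hA : 0 < r₀ + 1 := by linarith
  have hsub : Set.Ici (r₀ + 1) ⊆ Set.Ioi r₀ := fun r hr =>
    lt_of_lt_of_le (by linarith) (Set.mem_Ici.1 hr)
  obtain ⟨C, hC0, hC⟩ := exists_truncInv_bound hmeas hint hA
    (hmono.imp (fun h => h.mono hsub) fun h => h.mono hsub)
  have hint1 := integrable_profile_mul_schwartz hmeas hint ψ
  have hlim1 : Tendsto (fun n : ℕ => ∫ ξ : E3, truncProfile φh n ‖ξ‖ * ψ ξ) atTop
      (𝓝 (∫ ξ : E3, (φh ‖ξ‖ : ℂ) * ψ ξ)) := by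
    refine tendsto_integral_of_dominated_convergence (fun ξ => ‖(φh ‖ξ‖ : ℂ) * ψ ξ‖) ?_ hint1.norm
      ?_ ?_
    · exact fun n => (integrable_truncProfile hmeas hint n).aestronglyMeasurable.mul
        ψ.continuous.aestronglyMeasurable
    · refine fun n => .of_forall fun ξ => ?_
      rw [norm_mul, norm_mul]
      gcongr
      exact norm_indicator_le_norm_self _ _
    · refine .of_forall fun ξ => tendsto_const_nhds.congr' ?_
      filter_upwards [eventually_ge_atTop ⌈‖ξ‖⌉₊] with n hn
      have : ‖ξ‖ ≤ n := Nat.ceil_le.1 hn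
      simp [truncProfile, this]
  set η : SchwartzMap E3 ℂ := FourierTransform.fourierInv ψ with hη
  set G : E3 → ℂ := fun x => (φfun ‖x‖ : ℂ) * fourierInt ψ x with hG
  set H : ℕ → E3 → ℂ := fun n y =>
    FourierTransform.fourier (fun ξ : E3 => truncProfile φh n ‖ξ‖) y * η y with hH
  -- The sine integrals represent the Fourier transform only away from the origin.
  have hne : ∀ᵐ y : E3, y ≠ 0 := by simp [ae_iff]
  have hHm : ∀ n, AEStronglyMeasurable (H n) volume := fun n =>
    (Continuous.mul (VectorFourier.fourierIntegral_continuous Real.continuous_fourierChar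
      (L := innerₗ E3) continuous_inner (integrable_truncProfile hmeas hint n))
        η.continuous).aestronglyMeasurable
  have hdom := ((integrable_singular_mul_schwartz η).norm.const_mul ((2 * π) ^ 3 * C))
  have hHb : ∀ n : ℕ, r₀ + 1 ≤ n → ∀ᵐ y : E3, ‖H n y‖ ≤
      (2 * π) ^ 3 * C * ‖((1 + (‖y‖ ^ 2)⁻¹ : ℝ) : ℂ) * η y‖ := by
    intro n hn
    filter_upwards [hne] with y hy
    have hy0 : 0 < ‖y‖ := norm_pos_iff.2 hy
    have hn2 : ‖(-(2 * π)) • y‖ = 2 * π * ‖y‖ := by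
      rw [norm_smul, norm_neg, Real.norm_of_nonneg (by positivity)]
    have hb := hC (2 * π * ‖y‖) n (by positivity) hn
    have hb2 : ((2 * π * ‖y‖) ^ 2)⁻¹ ≤ (‖y‖ ^ 2)⁻¹ := by
      have : ‖y‖ ≤ 2 * π * ‖y‖ := by nlinarith [Real.pi_gt_three]
      gcongr
    simp only [hH]
    rw [fourier_truncProfile hmeas hint (Nat.cast_nonneg n) hy, hn2, norm_mul, norm_mul, norm_mul,
      Complex.norm_real, Complex.norm_real, Real.norm_eq_abs,
      Real.norm_of_nonneg (show 0 ≤ 1 + (‖y‖ ^ 2)⁻¹ by positivity)]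
    have h2 : ‖(2 * (π : ℂ)) ^ 3‖ = (2 * π) ^ 3 := by
      simp [abs_of_pos Real.pi_pos]
    rw [h2]
    calc _ ≤ (2 * π) ^ 3 * (C * (1 + (‖y‖ ^ 2)⁻¹)) * ‖η y‖ := by
          gcongr
          exact hb.trans (by gcongr)
      _ = _ := by ring
  have hHlim : ∀ᵐ y : E3, Tendsto (fun n => H n y) atTop
      (𝓝 ((2 * π) ^ 3 * G ((-(2 * π)) • y))) := by
    filter_upwards [hne] with y hy
    have hx : 0 < ‖(-(2 * π)) • y‖ :=
      norm_pos_iff.2 (smul_ne_zero (by simp [Real.pi_ne_zero]) hy)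
    have h1 := ((hφ _ hx).comp tendsto_natCast_atTop_atTop).ofReal
    have h2 := (h1.const_mul ((2 * (π : ℂ)) ^ 3)).mul_const (η y)
    simp only [hG, hH]
    rw [fourierInt_smul, ← mul_assoc]
    refine h2.congr fun n => ?_
    rw [fourier_truncProfile hmeas hint (Nat.cast_nonneg n) hy]
    rfl
  have hev : ∀ᶠ n : ℕ in atTop, r₀ + 1 ≤ n :=
    tendsto_natCast_atTop_atTop.eventually_ge_atTop _
  have hlim2 := tendsto_integral_filter_of_dominated_convergence _
    (.of_forall hHm) (hev.mono hHb) hdom hHlim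
  have hGint : Integrable (fun y : E3 => (2 * (π : ℂ)) ^ 3 * G ((-(2 * π)) • y)) := by
    refine hdom.mono' (aestronglyMeasurable_of_tendsto_ae atTop hHm hHlim) ?_
    obtain ⟨N, hN⟩ := eventually_atTop.1 hev
    have hall : ∀ᵐ y : E3, ∀ n : ℕ, N ≤ n → ‖H n y‖ ≤
        (2 * π) ^ 3 * C * ‖((1 + (‖y‖ ^ 2)⁻¹ : ℝ) : ℂ) * η y‖ :=
      ae_all_iff.2 fun n => by
        by_cases hn : N ≤ n
        · filter_upwards [hHb n (hN n hn)] with y hy _ using hy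
        · exact .of_forall fun y h => absurd h hn
    filter_upwards [hall, hHlim] with y h1 h2
    exact le_of_tendsto h2.norm (eventually_atTop.2 ⟨N, h1⟩)
  have hπ : (2 * (π : ℂ)) ^ 3 ≠ 0 := by simp [Real.pi_ne_zero]
  have hGint' : Integrable G := by
    have h1 := hGint.const_mul ((2 * (π : ℂ)) ^ 3)⁻¹
    simp only [inv_mul_cancel_left₀ hπ] at h1
    exact (integrable_comp_smul_iff volume G (by simp [Real.pi_ne_zero])).1 h1
  refine ⟨hint1, hGint', ?_⟩
  have heq := tendsto_nhds_unique hlim1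
    (hlim2.congr fun n => (integral_truncProfile_mul hmeas hint n ψ).symm)
  rw [heq, integral_const_mul, Measure.integral_comp_smul]
  have h3 : |((-(2 * π)) ^ Module.finrank ℝ E3)⁻¹| = ((2 * π) ^ 3)⁻¹ := by
    rw [abs_inv, abs_pow, abs_neg, abs_of_pos (by positivity)]
    simp
  rw [h3, Complex.real_smul]
  push_cast
  rw [mul_inv_cancel_left₀ hπ]

end
end

section
/- Let φ̂ : [0,∞) → ℝ be Borel measurable with ∫₀^∞ r³ φ̂(r)² dr = 1/(2π), suppose r ↦ r φ̂(r) is monotone on (0, ∞), and suppose φ̂(r) ≥ 0 for all r ∈ (0,∞). Then the limit φ(ρ) := lim_{R→∞} (1/(2π²ρ)) ∫₀^R r φ̂(r) sin(ρ r) dr satisfies φ(ρ) ≥ 0 for all ρ ∈ (0,∞); in fact ∫₀^R r φ̂(r) sin(ρ r) dr ≥ 0 for all ρ > 0 and R > 0. -/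
/-!
Write `g r = r * φh r`, a nonnegative monotone function on `(0, ∞)`.

If `g` is nondecreasing, finiteness of `∫ r g(r)² dr` forces `g = 0`, because `r g(r)²` is at least
the constant `a g(a)²` on `(a, ∞)` (`eq_zero_of_monotone`).

If `g` is nonincreasing, compare `g` on each period `(2πk/ρ, 2π(k+1)/ρ)` with its value `c` at the
midpoint: `g ≥ c` where the sine is positive and `g ≤ c` where it is negative, so
`g(r) sin(ρr) ≥ c sin(ρr)` on the whole period. The integral of `c sin(ρr)` from the start of the
period up to any later point is `c (1 - cos(ρR)) / ρ ≥ 0`; an induction on the number of periods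
gives nonnegativity of the truncated integrals (`integral_antitone_mul_sin_nonneg`). The
claim about the limit is closedness of `[0, ∞)`.
-/

open MeasureTheory Real Filter
open scoped Topology

lemma mul_sin_ge_on_period {g : ℝ → ℝ} (hg : AntitoneOn g (Set.Ioi 0)) {ρ : ℝ} (hρ : 0 < ρ)
    (k : ℕ) {r : ℝ} (h1 : 2 * π * k / ρ < r) (h2 : r ≤ 2 * π * (k + 1) / ρ) :
    g ((2 * π * k + π) / ρ) * sin (ρ * r) ≤ g r * sin (ρ * r) := by
  have hm : 0 < (2 * π * k + π) / ρ := by positivity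
  have hr : 0 < r := lt_of_le_of_lt (by positivity) h1
  rw [div_lt_iff₀ hρ] at h1
  rw [le_div_iff₀ hρ] at h2
  have hs : sin (ρ * r) = sin (ρ * r - 2 * π * k) := by
    rw [← Real.sin_sub_nat_mul_two_pi (ρ * r) k]
    ring_nf
  rcases le_total r ((2 * π * k + π) / ρ) with h | h
  · have hgr := hg hr hm h
    rw [le_div_iff₀ hρ] at h
    have : 0 ≤ sin (ρ * r) := by
      rw [hs]
      exact sin_nonneg_of_nonneg_of_le_pi (by nlinarith) (by nlinarith)
    exact mul_le_mul_of_nonneg_right hgr this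
  · have hgr := hg hm hr h
    rw [div_le_iff₀ hρ] at h
    have : sin (ρ * r) ≤ 0 := by
      rw [hs, ← Real.sin_sub_two_pi]
      exact sin_nonpos_of_nonpos_of_neg_pi_le (by nlinarith) (by nlinarith)
    exact mul_le_mul_of_nonpos_right hgr this

lemma integral_sin_period_nonneg {ρ : ℝ} (hρ : 0 < ρ) (k : ℕ) (R : ℝ) :
    0 ≤ ∫ r in (2 * π * k / ρ)..R, sin (ρ * r) := by
  rw [intervalIntegral.integral_comp_mul_left _ hρ.ne', integral_sin]
  have : cos (ρ * (2 * π * k / ρ)) = 1 := by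
    rw [mul_div_cancel₀ _ hρ.ne', ← Real.cos_nat_mul_two_pi k]
    ring_nf
  rw [this, smul_eq_mul]
  exact mul_nonneg (by positivity) (by linarith [cos_le_one (ρ * R)])

lemma integral_antitone_mul_sin_nonneg_of_le {g : ℝ → ℝ} (hg : AntitoneOn g (Set.Ioi 0))
    (h0 : ∀ r, 0 < r → 0 ≤ g r) {ρ : ℝ} (hρ : 0 < ρ) (k : ℕ) :
    ∀ R, 0 ≤ R → R ≤ 2 * π * k / ρ →
      IntervalIntegrable (fun r => g r * sin (ρ * r)) volume 0 R →
      0 ≤ ∫ r in (0 : ℝ)..R, g r * sin (ρ * r) := by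
  induction k with
  | zero =>
    intro R hR hRk _
    have : R = 0 := le_antisymm (by simpa using hRk) hR
    simp [this]
  | succ k ih =>
    intro R hR hRk hint
    push_cast at hRk
    rcases le_total R (2 * π * k / ρ) with h | h
    · exact ih R hR h hint
    have ha : 0 ≤ 2 * π * k / ρ := by positivity
    have hi1 : IntervalIntegrable (fun r => g r * sin (ρ * r)) volume 0 (2 * π * k / ρ) :=
      hint.mono_set (by rw [Set.uIcc_of_le ha, Set.uIcc_of_le hR]; exact Set.Icc_subset_Icc_right h)
    have hi2 : IntervalIntegrable (fun r => g r * sin (ρ * r)) volume (2 * π * k / ρ) R :=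
      hint.mono_set (by rw [Set.uIcc_of_le h, Set.uIcc_of_le hR]; exact Set.Icc_subset_Icc_left ha)
    rw [← intervalIntegral.integral_add_adjacent_intervals hi1 hi2]
    refine add_nonneg (ih _ ha le_rfl hi1) ?_
    calc (0 : ℝ) ≤ g ((2 * π * k + π) / ρ) * ∫ r in (2 * π * k / ρ)..R, sin (ρ * r) :=
          mul_nonneg (h0 _ (by positivity)) (integral_sin_period_nonneg hρ k R)
      _ = ∫ r in (2 * π * k / ρ)..R, g ((2 * π * k + π) / ρ) * sin (ρ * r) := by
          rw [intervalIntegral.integral_const_mul]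
      _ ≤ _ := by
          refine intervalIntegral.integral_mono_on_of_le_Ioo h
            (Continuous.intervalIntegrable (by fun_prop) _ _) hi2 fun r hr => ?_
          exact mul_sin_ge_on_period hg hρ k hr.1 (hr.2.le.trans hRk)

lemma integral_antitone_mul_sin_nonneg {g : ℝ → ℝ} (hg : AntitoneOn g (Set.Ioi 0))
    (h0 : ∀ r, 0 < r → 0 ≤ g r) {ρ R : ℝ} (hρ : 0 < ρ) (hR : 0 < R) :
    0 ≤ ∫ r in (0 : ℝ)..R, g r * sin (ρ * r) := by
  by_cases hint : IntervalIntegrable (fun r => g r * sin (ρ * r)) volume 0 R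
  · obtain ⟨k, hk⟩ := exists_nat_ge (R * ρ / (2 * π))
    refine integral_antitone_mul_sin_nonneg_of_le hg h0 hρ k R hR.le ?_ hint
    rw [div_le_iff₀ (by positivity)] at hk
    rw [le_div_iff₀ hρ]
    linarith
  · -- Without integrability near `0` the integral takes the default value `0`.
    rw [intervalIntegral.integral_undef hint]

lemma eq_zero_of_monotone {φh : ℝ → ℝ}
    (hint : IntegrableOn (fun r => r ^ 3 * (φh r) ^ 2) (Set.Ioi (0 : ℝ)))
    (hmono : MonotoneOn (fun r => r * φh r) (Set.Ioi (0 : ℝ)))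
    (hpos : ∀ r : ℝ, 0 < r → 0 ≤ φh r) {a : ℝ} (ha : 0 < a) : a * φh a = 0 := by
  have hnn : 0 ≤ a * φh a := mul_nonneg ha.le (hpos a ha)
  have hc : IntegrableOn (fun _ : ℝ => a * (a * φh a) ^ 2) (Set.Ioi a) := by
    refine Integrable.mono' (hint.mono_set (Set.Ioi_subset_Ioi ha.le))
      aestronglyMeasurable_const ?_
    filter_upwards [ae_restrict_mem measurableSet_Ioi] with r hr
    have hr' : a < r := hr
    have hr0 : 0 < r := ha.trans hr'
    have h : a * φh a ≤ r * φh r := hmono ha hr0 hr'.le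
    rw [Real.norm_of_nonneg (by positivity)]
    calc a * (a * φh a) ^ 2 ≤ r * (r * φh r) ^ 2 := by gcongr
      _ = r ^ 3 * (φh r) ^ 2 := by ring
  rw [integrableOn_const_iff] at hc
  simpa [ha.ne'] using hc

/-- If `φ̂` is Borel measurable with `∫₀^∞ r³ φ̂(r)² dr = 1/(2π)`,
`r ↦ r φ̂(r)` is monotone on `(0, ∞)`, and `φ̂ ≥ 0` on `(0,∞)`, then
`∫₀^R r φ̂(r) sin(ρr) dr ≥ 0` for all `ρ, R > 0`, and any limit
`φ(ρ) = lim_{R→∞} (1/(2π²ρ)) ∫₀^R r φ̂(r) sin(ρr) dr` is nonnegative. -/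
theorem stmt14 (φh : ℝ → ℝ) (hmeas : Measurable φh)
    (hnorm : ∫ r in Set.Ioi (0 : ℝ), r ^ 3 * (φh r) ^ 2 = 1 / (2 * π))
    (hmono : MonotoneOn (fun r => r * φh r) (Set.Ioi (0 : ℝ)) ∨
      AntitoneOn (fun r => r * φh r) (Set.Ioi (0 : ℝ)))
    (hpos : ∀ r : ℝ, 0 < r → 0 ≤ φh r) :
    (∀ ρ R : ℝ, 0 < ρ → 0 < R → 0 ≤ ∫ r in (0 : ℝ)..R, r * φh r * Real.sin (ρ * r)) ∧
    ∀ ρ : ℝ, 0 < ρ → ∀ l : ℝ,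
      Tendsto (fun R => (1 / (2 * π ^ 2 * ρ)) * ∫ r in (0 : ℝ)..R, r * φh r * Real.sin (ρ * r))
        atTop (𝓝 l) → 0 ≤ l := by
  have key : ∀ ρ R : ℝ, 0 < ρ → 0 < R →
      0 ≤ ∫ r in (0 : ℝ)..R, r * φh r * Real.sin (ρ * r) := by
    intro ρ R hρ hR
    have h0 : ∀ r : ℝ, 0 < r → 0 ≤ r * φh r := fun r hr => mul_nonneg hr.le (hpos r hr)
    refine integral_antitone_mul_sin_nonneg (g := fun r => r * φh r) ?_ h0 hρ hR
    rcases hmono with hm | hm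
    · -- The normalization is nonzero, so its integrand is genuinely integrable.
      have hint : IntegrableOn (fun r => r ^ 3 * (φh r) ^ 2) (Set.Ioi (0 : ℝ)) := by
        by_contra hn
        rw [integral_undef hn] at hnorm
        have : 0 < 1 / (2 * π) := by positivity
        linarith
      intro a ha b hb _
      simp only [eq_zero_of_monotone hint hm hpos ha, eq_zero_of_monotone hint hm hpos hb, le_refl]
    · exact hm
  refine ⟨key, fun ρ hρ l hl => ge_of_tendsto hl ?_⟩
  filter_upwards [eventually_gt_atTop 0] with R hR
  exact mul_nonneg (by positivity) (key ρ R hρ hR)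
end

section
/- For all real numbers a, b ≥ 0 and all p with 1 < p < ∞, |a log a − b log b| ≤ (p/(e(p−1))) |a−b|^{1/p} + |a−b| · log⁺(|a−b|) + 2 √(min(a,b)) · √(|a−b|), where 0 log 0 is interpreted as 0 and log⁺ x = max(log x, 0) for x > 0 with log⁺ 0 = 0. -/
/-!
By symmetry take `b ≤ a` and put `h = a - b`. Then
`a log a - b log b = h log h + (b log (1 + h/b) + h log (1 + b/h))`.
Since `log (1 + x) ≤ √x`, the bracket lies between `0` and `2 √(b h)`. The first term is at most
`h log⁺ h` when `h ≥ 1`, and for `h < 1` its absolute value is at most `(p/(e(p-1))) h^{1/p}`,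
because `-u log u ≤ 1/e` for `u = h^{(p-1)/p}`.
-/

open Real

lemma log_one_add_le_sqrt (x : ℝ) (hx : 0 ≤ x) : Real.log (1 + x) ≤ √x := by
  rw [Real.log_le_iff_le_exp (by linarith)]
  have h := Real.sum_le_exp_of_nonneg (Real.sqrt_nonneg x) 4
  simp only [Finset.sum_range_succ, Finset.sum_range_zero, Nat.factorial] at h
  norm_num at h
  have hs := Real.sq_sqrt hx
  have h0 := Real.sqrt_nonneg x
  set s := √x
  -- `1 + s + s²/2 + s³/6 - (1 + s²) = s (1 - s/2 + s²/6)`, and the quadratic factor is positive.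
  nlinarith [mul_nonneg h0 (sq_nonneg (s - 3 / 2))]

lemma mul_log_one_add_div_le (x y : ℝ) (hx : 0 < x) (hy : 0 ≤ y) :
    x * Real.log (1 + y / x) ≤ √x * √y := by
  have h := mul_le_mul_of_nonneg_left (log_one_add_le_sqrt (y / x) (by positivity)) hx.le
  refine h.trans (le_of_eq ?_)
  rw [Real.sqrt_div hy]
  nth_rewrite 1 [← Real.mul_self_sqrt hx.le]
  have := (Real.sqrt_pos.2 hx).ne'
  field_simp

lemma neg_mul_log_le_rpow (h p : ℝ) (hh : 0 < h) (hp : 1 < p) :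
    -(h * Real.log h) ≤ (p / (Real.exp 1 * (p - 1))) * h ^ (1 / p) := by
  have hp1 : 0 < p - 1 := by linarith
  have hp0 : 0 < p := by linarith
  have hu : 0 < h ^ ((p - 1) / p) := Real.rpow_pos_of_pos hh _
  have hv : 0 < h ^ (1 / p) := Real.rpow_pos_of_pos hh _
  have hl : Real.log (h ^ ((p - 1) / p)) = (p - 1) / p * Real.log h := Real.log_rpow hh _
  have hm : h = h ^ (1 / p) * h ^ ((p - 1) / p) := by
    rw [← Real.rpow_add hh, ← add_div, add_sub_cancel, div_self hp0.ne', Real.rpow_one]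
  set u := h ^ ((p - 1) / p)
  set v := h ^ (1 / p)
  have he := Real.exp_pos 1
  -- `log y ≤ y - 1` at `y = 1 / (e u)` is the sharp bound `-u log u ≤ 1 / e`.
  have key := Real.log_le_sub_one_of_pos (inv_pos.2 (mul_pos he hu))
  rw [Real.log_inv, Real.log_mul he.ne' hu.ne', Real.log_exp, hl] at key
  have k2 : -((p - 1) / p * Real.log h) ≤ (Real.exp 1 * u)⁻¹ := by linarith
  have k3 := mul_le_mul_of_nonneg_left k2 (by positivity : 0 ≤ v * u * (p / (p - 1)))
  have e1 : v * u * (p / (p - 1)) * -((p - 1) / p * Real.log h) = -(h * Real.log h) := by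
    rw [← hm]; field_simp
  have e2 : v * u * (p / (p - 1)) * (Real.exp 1 * u)⁻¹ = p / (Real.exp 1 * (p - 1)) * v := by
    field_simp
  linarith

lemma abs_mul_log_le (h p : ℝ) (hh : 0 < h) (hp : 1 < p) :
    |h * Real.log h| ≤
      (p / (Real.exp 1 * (p - 1))) * h ^ (1 / p) + h * max (Real.log h) 0 := by
  have hp1 : 0 < p - 1 := by linarith
  have h1 := neg_mul_log_le_rpow h p hh hp
  have h2 : 0 ≤ (p / (Real.exp 1 * (p - 1))) * h ^ (1 / p) := by positivity
  have h3 := mul_le_mul_of_nonneg_left (le_max_left (Real.log h) 0) hh.le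
  have h4 := mul_nonneg hh.le (le_max_right (Real.log h) 0)
  rw [abs_le]
  constructor <;> linarith

lemma stmt15_of_pos (b h p : ℝ) (hb : 0 ≤ b) (hh : 0 < h) (hp : 1 < p) :
    |(b + h) * Real.log (b + h) - b * Real.log b| ≤
      (p / (Real.exp 1 * (p - 1))) * h ^ (1 / p) + h * max (Real.log h) 0 + 2 * √b * √h := by
  have hm := abs_mul_log_le h p hh hp
  rcases hb.eq_or_lt with rfl | hb0
  · simpa using hm
  have h1 := mul_log_one_add_div_le b h hb0 hh.le
  have h2 := mul_log_one_add_div_le h b hh hb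
  have e : (b + h) * Real.log (b + h) - b * Real.log b
      = h * Real.log h + (b * Real.log (1 + h / b) + h * Real.log (1 + b / h)) := by
    have e1 : 1 + h / b = (b + h) / b := by field_simp
    have e2 : 1 + b / h = (b + h) / h := by field_simp; ring
    rw [e1, e2, Real.log_div (by positivity) hb0.ne', Real.log_div (by positivity) hh.ne']
    ring
  have p1 : 0 ≤ b * Real.log (1 + h / b) :=
    mul_nonneg hb (Real.log_nonneg (by have := div_pos hh hb0; linarith))
  have p2 : 0 ≤ h * Real.log (1 + b / h) :=
    mul_nonneg hh.le (Real.log_nonneg (by have := div_pos hb0 hh; linarith))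
  rw [e]
  refine (abs_add_le _ _).trans ?_
  rw [abs_of_nonneg (add_nonneg p1 p2)]
  linarith

/-- For all `a, b ≥ 0` and `1 < p < ∞`,
`|a log a − b log b| ≤ (p/(e(p−1))) |a−b|^{1/p} + |a−b| log⁺|a−b| + 2√(min a b)√|a−b|`,
with the conventions `0 log 0 = 0` and `log⁺ x = max(log x, 0)`. -/
theorem stmt15 (a b p : ℝ) (ha : 0 ≤ a) (hb : 0 ≤ b) (hp : 1 < p) :
    |a * Real.log a - b * Real.log b| ≤
      (p / (Real.exp 1 * (p - 1))) * |a - b| ^ (1 / p) +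
        |a - b| * max (Real.log |a - b|) 0 +
        2 * Real.sqrt (min a b) * Real.sqrt |a - b| := by
  rcases lt_trichotomy a b with h | rfl | h
  · have := stmt15_of_pos a (b - a) p ha (sub_pos.2 h) hp
    rw [abs_sub_comm, abs_sub_comm a b, abs_of_pos (sub_pos.2 h), min_eq_left h.le]
    simpa using this
  · have hp0 : p ≠ 0 := by linarith
    simp [Real.zero_rpow (inv_ne_zero hp0)]
  · have := stmt15_of_pos b (a - b) p hb (sub_pos.2 h) hp
    rw [abs_of_pos (sub_pos.2 h), min_eq_right h.le]
    simpa using this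
end

section
/- Let N ∈ ℕ and Y ⊂ ℝ^N be a Borel set. Suppose F : Y × ℝ³ → ℝ and D : Y × ℝ³ → ℝ³ are measurable with F ∈ L²_loc(Y × ℝ³), D ∈ L²_loc(Y × ℝ³, ℝ³), D(y,z)·z = 0 for a.e. (y,z), and ∫_{Y×ℝ³} Ψ(y,z)·D(y,z) dz dy = − ∫_{Y×ℝ³} F(y,z) · ∇_z·(Π(z)Ψ(y,z)) dz dy for every Ψ ∈ T_c(Y×ℝ³, ℝ³) (i.e., D is the weak projection gradient of F in z ≠ 0). Then F² has the weak projection gradient 2FD in z ≠ 0; that is, F² ∈ L¹_loc(Y×ℝ³), 2FD ∈ L¹_loc(Y×ℝ³, ℝ³), and ∫_{Y×ℝ³} Ψ(y,z)·(2F(y,z)D(y,z)) dz dy = − ∫_{Y×ℝ³} F(y,z)² · ∇_z·(Π(z)Ψ(y,z)) dz dy for every Ψ ∈ T_c(Y×ℝ³, ℝ³). -/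
/-!
The projected gradient only differentiates along spheres `|z| = const`, that is, along the
rotational vector fields `z ↦ J z` with `J` skew. This is what makes a proof without mollification
possible: rotations preserve Lebesgue measure, so they act on `L²` by a unitary group.

After extending `F` and `D` by zero off `Y × ℝ³`, take `J z = gen k l z = z_k e_l - z_l e_k`.
Testing the hypothesis with `Ψ(y, z) = φ(y, z) J z`, for which `∇·(ΠΨ)` is the derivative `XD J φ`
of `φ` along `J z`, says that `G = ⟪J z, D⟫` is the weak derivative of `F` along `J z`
(`WeakPair`, `weakPair_gen`).

If `f, g ∈ L²` and `g` is the weak derivative of `f` along `J z`, then the orbit `t ↦ U_t f` of `f`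
under the rotations `exp (t J)` is norm differentiable at `0` with derivative `g`
(`hasDerivAt_U`): pair with smooth functions and use the fundamental theorem of calculus. Since
`U_t` is unitary, two such pairs satisfy the integration by parts formula `∫ f' g = -∫ f g'`
(`weakPair_skew`). Applied to the localisations `χ F` and `φ F`, with `χ = 1` on the support of `φ`,
it gives the product rule `∫ φ · 2 F G = -∫ F² · XD J φ` (`weak_sq`).

For a general `Ψ`, apply the product rule with `φ = ⟪Ψ, J z⟫ / (|z|² + ε)` (`coef`) and sum over
`k, l`. Since `∑ (J z) ⊗ (J z) = 2 |z|² Π(z)` and `D ⊥ z`, this yields the desired identity with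
the extra weight `|z|² / (|z|² + ε)` under both integrals (`weak_sq_weighted`). Dominated
convergence as `ε → 0` removes the weight (`weak_sq_whole`).
-/

open MeasureTheory
open scoped RealInnerProductSpace

noncomputable section

/-- The test class `T_c(Y × ℝ³, ℝ³)`: continuous compactly supported `Ψ` with `Ψ(y,0) = 0`,
`z ↦ Ψ(y,z)` of class `C¹` for each `y`, and uniformly bounded `z`-derivative. -/
def TestC (N : ℕ) (Ψ : EuclideanSpace ℝ (Fin N) × E3 → E3) : Prop :=
  Continuous Ψ ∧ HasCompactSupport Ψ ∧ (∀ y, Ψ (y, 0) = 0) ∧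
    (∀ y, ContDiff ℝ 1 fun z => Ψ (y, z)) ∧
    ∃ C : ℝ, ∀ y z, ‖fderiv ℝ (fun w => Ψ (y, w)) z‖ ≤ C

/-- The divergence `∇_z · (Π(z)Ψ(y,z)) = ∇_z·Ψ − nᵀ(∂_zΨ)n − 2(Ψ·n)/|z|` with `n = z/|z|`. -/
noncomputable def divPi (N : ℕ) (Ψ : EuclideanSpace ℝ (Fin N) × E3 → E3)
    (y : EuclideanSpace ℝ (Fin N)) (z : E3) : ℝ :=
  (∑ i : Fin 3, fderiv ℝ (fun w => Ψ (y, w)) z (EuclideanSpace.single i 1) i) -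
    ⟪‖z‖⁻¹ • z, fderiv ℝ (fun w => Ψ (y, w)) z (‖z‖⁻¹ • z)⟫ -
    2 * ⟪Ψ (y, z), ‖z‖⁻¹ • z⟫ / ‖z‖

/-! ### One-parameter groups generated by skew operators -/

/-- The one-parameter group `t ↦ exp (t J)` generated by a bounded operator `J`. -/
def expFlow {H : Type*} [NormedAddCommGroup H] [InnerProductSpace ℝ H]
    (J : H →L[ℝ] H) (t : ℝ) : H →L[ℝ] H := NormedSpace.exp (t • J)

section ExpFlow

variable {H : Type*} [NormedAddCommGroup H] [InnerProductSpace ℝ H]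

theorem expFlow_zero (J : H →L[ℝ] H) (z : H) : expFlow J 0 z = z := by
  simp [expFlow]

theorem expFlow_comm (J : H →L[ℝ] H) (t : ℝ) (z : H) :
    expFlow J t (J z) = J (expFlow J t z) := by
  let _ : NormedAlgebra ℚ (H →L[ℝ] H) := NormedAlgebra.restrictScalars ℚ ℝ _
  have : Commute (NormedSpace.exp (t • J)) J := ((Commute.refl J).smul_left t).exp_left
  exact congrArg (fun A : H →L[ℝ] H => A z) this.eq

variable [CompleteSpace H]

theorem expFlow_add (J : H →L[ℝ] H) (s t : ℝ) (z : H) :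
    expFlow J (s + t) z = expFlow J s (expFlow J t z) := by
  let _ : NormedAlgebra ℚ (H →L[ℝ] H) := NormedAlgebra.restrictScalars ℚ ℝ _
  have : NormedSpace.exp ((s + t) • J) = NormedSpace.exp (s • J) * NormedSpace.exp (t • J) := by
    rw [add_smul, NormedSpace.exp_add_of_commute]
    exact ((Commute.refl J).smul_left s).smul_right t
  simp [expFlow, this]

theorem hasDerivAt_expFlow (J : H →L[ℝ] H) (t : ℝ) :
    HasDerivAt (expFlow J) (J * expFlow J t) t :=
  hasDerivAt_exp_smul_const' (𝕂 := ℝ) J t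

theorem hasDerivAt_expFlow_neg_apply (J : H →L[ℝ] H) (t : ℝ) (z : H) :
    HasDerivAt (fun s => expFlow J (-s) z) (-J (expFlow J (-t) z)) t := by
  have h1 : HasDerivAt (fun s : ℝ => expFlow J s z) (J (expFlow J (-t) z)) (-t) := by
    have := (hasDerivAt_expFlow J (-t)).clm_apply (hasDerivAt_const (-t) z)
    simpa using this
  have := HasDerivAt.scomp t h1 (hasDerivAt_neg t)
  simpa [Function.comp_def] using this

theorem continuous_expFlow (J : H →L[ℝ] H) : Continuous fun q : ℝ × H => expFlow J q.1 q.2 := by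
  have : Continuous (expFlow J) :=
    continuous_iff_continuousAt.2 fun t => (hasDerivAt_expFlow J t).continuousAt
  fun_prop

/-- For skew `J` the operators `exp (t J)` are unitary. -/
theorem expFlow_isometry {J : H →L[ℝ] H} (hJ : ∀ x y, ⟪J x, y⟫ = -⟪x, J y⟫) (t : ℝ) :
    ∃ e : H ≃ₗᵢ[ℝ] H, ∀ z, e z = expFlow J t z := by
  let _ : NormedAlgebra ℚ (H →L[ℝ] H) := NormedAlgebra.restrictScalars ℚ ℝ _
  have hJ' : J ∈ skewAdjoint (H →L[ℝ] H) := by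
    rw [skewAdjoint.mem_iff, ContinuousLinearMap.star_eq_adjoint]
    symm
    rw [ContinuousLinearMap.eq_adjoint_iff]
    intro x y
    simp [hJ]
  have h : t • J ∈ skewAdjoint (H →L[ℝ] H) := skewAdjoint.smul_mem t hJ'
  exact ⟨Unitary.linearIsometryEquiv ⟨_, NormedSpace.exp_mem_unitary_of_mem_skewAdjoint h⟩,
    fun z => rfl⟩

end ExpFlow

/-! ### Scalar test functions -/

/-- Phase space: the parameter `y` together with the variable `z`. -/
abbrev Ph (N : ℕ) := EuclideanSpace ℝ (Fin N) × E3

/-- The scalar analogue of `TestC`, without the condition at `z = 0`: continuous compactly supported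
`φ`, of class `C¹` in `z`, with uniformly bounded `z`-derivative. -/
def IsTest {N : ℕ} (φ : Ph N → ℝ) : Prop :=
  Continuous φ ∧ HasCompactSupport φ ∧ (∀ y, ContDiff ℝ 1 fun z => φ (y, z)) ∧
    ∃ C : ℝ, ∀ y z, ‖fderiv ℝ (fun w => φ (y, w)) z‖ ≤ C

/-- Derivative in `z` along the linear vector field `z ↦ J z`. -/
def XD {N : ℕ} (J : E3 →L[ℝ] E3) (φ : Ph N → ℝ) (p : Ph N) : ℝ :=
  fderiv ℝ (fun w => φ (p.1, w)) p.2 (J p.2)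

/-- Bounded measurable functions vanishing outside a ball. -/
def BddSupp {N : ℕ} (b : Ph N → ℝ) : Prop :=
  Measurable b ∧ ∃ M R : ℝ, 0 ≤ M ∧ 0 < R ∧ ∀ p, |b p| ≤ M ∧ (R < ‖p‖ → b p = 0)

theorem fderiv_eq_zero_of_far {N : ℕ} {V : Type*} [NormedAddCommGroup V] [NormedSpace ℝ V]
    {φ : Ph N → V} {R : ℝ} (h : ∀ p, R < ‖p‖ → φ p = 0) {p : Ph N} (hp : R < ‖p‖) :
    fderiv ℝ (fun w => φ (p.1, w)) p.2 = 0 := by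
  have hopen : IsOpen {w : E3 | R < ‖((p.1, w) : Ph N)‖} :=
    isOpen_lt continuous_const (by fun_prop)
  have : (fun w => φ (p.1, w)) =ᶠ[nhds p.2] fun _ => (0 : V) := by
    filter_upwards [hopen.mem_nhds hp] with w hw using h _ hw
  rw [this.fderiv_eq]; simp

theorem exists_radius {N : ℕ} {V : Type*} [NormedAddCommGroup V]
    {φ : Ph N → V} (h : HasCompactSupport φ) : ∃ R : ℝ, 0 < R ∧ ∀ p, R < ‖p‖ → φ p = 0 := by
  obtain ⟨R, hR, h⟩ := h.isCompact.isBounded.exists_pos_norm_le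
  refine ⟨R, hR, fun p hp => ?_⟩
  by_contra hne
  exact absurd (h p (subset_tsupport _ hne)) (not_le.2 hp)

theorem exists_bound {N : ℕ} {V : Type*} [NormedAddCommGroup V]
    {φ : Ph N → V} (hc : Continuous φ) (h : HasCompactSupport φ) :
    ∃ M : ℝ, 0 ≤ M ∧ ∀ p, ‖φ p‖ ≤ M := by
  obtain ⟨M, hM⟩ := h.exists_bound_of_continuous hc
  exact ⟨M, (norm_nonneg _).trans (hM 0), hM⟩

theorem IsTest.bddSupp {N : ℕ} {φ : Ph N → ℝ} (h : IsTest φ) : BddSupp φ := by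
  obtain ⟨hc, hs, -, -⟩ := h
  obtain ⟨R, hR, h1⟩ := exists_radius hs
  obtain ⟨M, hM, h2⟩ := exists_bound hc hs
  exact ⟨hc.measurable, M, R, hM, hR, fun p => ⟨h2 p, h1 p⟩⟩

theorem measurable_zderiv {N : ℕ} {V : Type*} [NormedAddCommGroup V] [NormedSpace ℝ V]
    [CompleteSpace V] [MeasurableSpace V] [BorelSpace V]
    {φ : Ph N → V} (hc : Continuous φ) :
    Measurable fun p : Ph N => fderiv ℝ (fun w => φ (p.1, w)) p.2 :=
  measurable_fderiv_with_param (f := fun y w => φ (y, w)) ℝ hc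

theorem IsTest.bddSupp_XD {N : ℕ} {φ : Ph N → ℝ} (h : IsTest φ) (J : E3 →L[ℝ] E3) :
    BddSupp (XD J φ) := by
  obtain ⟨hc, hs, -, C, hC⟩ := h
  obtain ⟨R, hR, h1⟩ := exists_radius hs
  have hC0 : 0 ≤ C := (norm_nonneg _).trans (hC 0 0)
  refine ⟨?_, C * (‖J‖ * R), R, by positivity, hR, fun p => ?_⟩
  · have := measurable_zderiv hc
    unfold XD
    have h2 : Measurable fun p : Ph N => J p.2 := by fun_prop
    have h3 : Continuous fun q : (E3 →L[ℝ] ℝ) × E3 => q.1 q.2 := by fun_prop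
    exact h3.measurable.comp (this.prodMk h2)
  · have hz : R < ‖p‖ → XD J φ p = 0 := fun hp => by
      unfold XD; rw [fderiv_eq_zero_of_far h1 hp]; simp
    refine ⟨?_, hz⟩
    by_cases hp : R < ‖p‖
    · rw [hz hp]; simp; positivity
    · have h2 : ‖p.2‖ ≤ R := (norm_snd_le p).trans (not_lt.1 hp)
      calc |XD J φ p| ≤ ‖fderiv ℝ (fun w => φ (p.1, w)) p.2‖ * ‖J p.2‖ :=
            (fderiv ℝ (fun w => φ (p.1, w)) p.2).le_opNorm _
        _ ≤ C * (‖J‖ * R) := by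
            gcongr
            · exact hC _ _
            · exact (J.le_opNorm _).trans (by gcongr)

theorem BddSupp.mul {N : ℕ} {b c : Ph N → ℝ} (hb : BddSupp b) (hc : BddSupp c) :
    BddSupp (fun p => b p * c p) := by
  obtain ⟨hm, M, R, hM, hR, h⟩ := hb
  obtain ⟨hm', M', R', hM', hR', h'⟩ := hc
  refine ⟨hm.mul hm', M * M', R, by positivity, hR, fun p => ⟨?_, fun hp => by simp [(h p).2 hp]⟩⟩
  rw [abs_mul]
  exact mul_le_mul (h p).1 (h' p).1 (abs_nonneg _) hM

theorem BddSupp.integrable_mul {N : ℕ} {b H : Ph N → ℝ} (hb : BddSupp b)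
    (hH : ∀ R : ℝ, 0 < R → IntegrableOn H (Metric.closedBall 0 R)) :
    Integrable (fun p => b p * H p) := by
  obtain ⟨hm, M, R, hM, hR, h⟩ := hb
  have h1 : IntegrableOn (fun p => b p * H p) (Metric.closedBall 0 R) :=
    (hH R hR).bdd_mul hm.aestronglyMeasurable (Filter.Eventually.of_forall fun p => (h p).1)
  rw [← integrable_indicator_iff Metric.isClosed_closedBall.measurableSet] at h1
  refine h1.congr (Filter.Eventually.of_forall fun p => ?_)
  by_cases hp : p ∈ Metric.closedBall (0 : Ph N) R
  · rw [Set.indicator_of_mem hp]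
  · simp only [Set.indicator_of_notMem hp, (h p).2 (by simpa using hp), zero_mul]

theorem BddSupp.memLp_mul {N : ℕ} {b H : Ph N → ℝ} (hb : BddSupp b) (hHm : Measurable H)
    (hH : ∀ R : ℝ, 0 < R → IntegrableOn (fun p => H p ^ 2) (Metric.closedBall 0 R)) :
    MemLp (fun p => b p * H p) 2 := by
  refine (memLp_two_iff_integrable_sq (hb.1.mul hHm).aestronglyMeasurable).2 ?_
  have := (hb.mul hb).integrable_mul hH
  refine this.congr (Filter.Eventually.of_forall fun p => ?_)
  simp only [Pi.mul_apply]
  ring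

theorem BddSupp.memLp {N : ℕ} {b : Ph N → ℝ} (hb : BddSupp b) : MemLp b 2 := by
  have := hb.memLp_mul (H := fun _ => 1) measurable_const (fun R hR => by
    simp only [one_pow]
    exact continuous_const.continuousOn.integrableOn_compact (isCompact_closedBall _ _))
  simpa using this

theorem IsTest.mul {N : ℕ} {φ ψ : Ph N → ℝ} (hφ : IsTest φ) (hψ : IsTest ψ) :
    IsTest (fun p => φ p * ψ p) := by
  obtain ⟨hc, hs, hd, C, hC⟩ := hφ
  obtain ⟨hc', hs', hd', C', hC'⟩ := hψ
  obtain ⟨M, hM, h2⟩ := exists_bound hc hs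
  obtain ⟨M', hM', h2'⟩ := exists_bound hc' hs'
  refine ⟨hc.mul hc', hs.mul_right, fun y => (hd y).mul (hd' y), M * C' + M' * C, fun y z => ?_⟩
  rw [fderiv_fun_mul ((hd y).differentiable (by simp) z) ((hd' y).differentiable (by simp) z)]
  refine (norm_add_le _ _).trans ?_
  rw [norm_smul, norm_smul]
  gcongr
  · exact h2 _
  · exact hC' _ _
  · exact h2' _
  · exact hC _ _

theorem XD_mul {N : ℕ} {φ ψ : Ph N → ℝ} (hφ : IsTest φ) (hψ : IsTest ψ) (J : E3 →L[ℝ] E3)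
    (p : Ph N) : XD J (fun p => φ p * ψ p) p = φ p * XD J ψ p + ψ p * XD J φ p := by
  unfold XD
  rw [fderiv_fun_mul ((hφ.2.2.1 _).differentiable (by simp) _)
    ((hψ.2.2.1 _).differentiable (by simp) _)]
  simp

theorem isTest_of_contDiff {N : ℕ} {φ : Ph N → ℝ} (h : ContDiff ℝ 1 φ)
    (hs : HasCompactSupport φ) : IsTest φ := by
  have hd : ∀ y z, fderiv ℝ (fun w => φ (y, w)) z =
      (fderiv ℝ φ (y, z)).comp (ContinuousLinearMap.inr ℝ _ _) := fun y z => by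
    have h1 : HasFDerivAt (fun w : E3 => ((y, w) : Ph N)) (ContinuousLinearMap.inr ℝ _ _) z :=
      hasFDerivAt_prodMk_right y z
    exact ((h.differentiable (by simp) (y, z)).hasFDerivAt.comp z h1).fderiv
  obtain ⟨M, hM⟩ := (hs.fderiv ℝ).exists_bound_of_continuous (h.continuous_fderiv (by simp))
  have hM0 : 0 ≤ M := (norm_nonneg _).trans (hM 0)
  refine ⟨h.continuous, hs, fun y => h.comp (by fun_prop), M, fun y z => ?_⟩
  rw [hd]
  refine (ContinuousLinearMap.opNorm_comp_le _ _).trans ?_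
  calc _ ≤ M * 1 := by
        gcongr
        · exact hM _
        · exact ContinuousLinearMap.norm_inr_le_one ..
    _ = M := mul_one _

/-! ### Rotations and weak derivatives along them -/

/-- The rotation `(y, z) ↦ (y, exp (t J) z)`. -/
def rot {N : ℕ} (J : E3 →L[ℝ] E3) (t : ℝ) : C(Ph N, Ph N) where
  toFun p := (p.1, expFlow J t p.2)
  continuous_toFun := by fun_prop

theorem rot_add {N : ℕ} (J : E3 →L[ℝ] E3) (s t : ℝ) (p : Ph N) :
    rot J (s + t) p = rot J s (rot J t p) := by
  simp [rot, expFlow_add]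

theorem rot_zero {N : ℕ} (J : E3 →L[ℝ] E3) (p : Ph N) : rot J 0 p = p := by
  simp [rot, expFlow_zero]

theorem rot_neg_rot {N : ℕ} (J : E3 →L[ℝ] E3) (t : ℝ) (p : Ph N) :
    rot J (-t) (rot J t p) = p := by
  rw [← rot_add, neg_add_cancel, rot_zero]

theorem rot_measurePreserving {N : ℕ} {J : E3 →L[ℝ] E3} (hJ : ∀ x y, ⟪J x, y⟫ = -⟪x, J y⟫)
    (t : ℝ) : MeasurePreserving (rot (N := N) J t) volume volume := by
  obtain ⟨e, he⟩ := expFlow_isometry hJ t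
  have := (MeasurePreserving.id (volume : Measure (EuclideanSpace ℝ (Fin N)))).prod
    e.measurePreserving
  have heq : (rot (N := N) J t : Ph N → Ph N) = Prod.map id e := by
    funext p
    exact Prod.ext rfl (he p.2).symm
  rw [heq]
  exact this

theorem norm_rot {N : ℕ} {J : E3 →L[ℝ] E3} (hJ : ∀ x y, ⟪J x, y⟫ = -⟪x, J y⟫)
    (t : ℝ) (p : Ph N) : ‖rot J t p‖ = ‖p‖ := by
  obtain ⟨e, he⟩ := expFlow_isometry hJ t
  simp [rot, Prod.norm_def, ← he]

theorem continuous_rot {N : ℕ} (J : E3 →L[ℝ] E3) : Continuous (rot (N := N) J) := by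
  refine ContinuousMap.continuous_of_continuous_uncurry _ ?_
  have h : Continuous fun q : ℝ × Ph N => (q.2.1, expFlow J q.1 q.2.2) :=
    (by fun_prop : Continuous fun q : ℝ × Ph N => q.2.1).prodMk
      ((continuous_expFlow J).comp (by fun_prop : Continuous fun q : ℝ × Ph N => (q.1, q.2.2)))
  exact h

theorem IsTest.comp_rot {N : ℕ} {φ : Ph N → ℝ} (h : IsTest φ) {J : E3 →L[ℝ] E3}
    (hJ : ∀ x y, ⟪J x, y⟫ = -⟪x, J y⟫) (t : ℝ) :
    IsTest (fun p => φ (rot J t p)) := by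
  obtain ⟨hc, hs, hd, C, hC⟩ := h
  have hC0 : 0 ≤ C := (norm_nonneg _).trans (hC 0 0)
  obtain ⟨R, hR, h1⟩ := exists_radius hs
  refine ⟨by fun_prop, ?_, fun y => ?_, C * ‖expFlow J t‖, fun y z => ?_⟩
  · refine HasCompactSupport.intro (isCompact_closedBall 0 R) fun p hp => h1 _ ?_
    rw [norm_rot hJ]; simpa using hp
  · exact (hd y).comp (expFlow J t).contDiff
  · have : fderiv ℝ (fun w => φ (rot J t (y, w))) z =
        (fderiv ℝ (fun w => φ (y, w)) (expFlow J t z)).comp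
          (expFlow J t) :=
      (((hd y).differentiable (by simp) _).hasFDerivAt.comp z
        (expFlow J t).hasFDerivAt).fderiv
    rw [this]
    refine (ContinuousLinearMap.opNorm_comp_le _ _).trans ?_
    gcongr
    exact hC _ _

theorem XD_comp_rot {N : ℕ} {φ : Ph N → ℝ} (h : IsTest φ) (J : E3 →L[ℝ] E3) (t : ℝ) (p : Ph N) :
    XD J (fun p => φ (rot J t p)) p = XD J φ (rot J t p) := by
  have : fderiv ℝ (fun w => φ (rot J t (p.1, w))) p.2 =
        (fderiv ℝ (fun w => φ (p.1, w)) (expFlow J t p.2)).comp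
          (expFlow J t) :=
      (((h.2.2.1 p.1).differentiable (by simp) _).hasFDerivAt.comp p.2
        (expFlow J t).hasFDerivAt).fderiv
  have hcomm := expFlow_comm J t p.2
  unfold XD
  rw [this]
  simp [hcomm, rot]

theorem hasDerivAt_rot {N : ℕ} {φ : Ph N → ℝ} (h : IsTest φ) (J : E3 →L[ℝ] E3) (t : ℝ)
    (p : Ph N) : HasDerivAt (fun s => φ (rot J (-s) p)) (-XD J φ (rot J (-t) p)) t := by
  have h2 := hasDerivAt_expFlow_neg_apply J t p.2
  have h3 := (((h.2.2.1 p.1).differentiable (by simp)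
    (expFlow J (-t) p.2)).hasFDerivAt).comp_hasDerivAt t h2
  simpa [XD, rot, Function.comp_def] using h3

/-- `g` is the weak derivative of `f` along the vector field `z ↦ J z`. No adjoint correction
appears because this field is divergence free for the skew `J` considered. -/
def WeakPair {N : ℕ} (J : E3 →L[ℝ] E3) (f g : Ph N → ℝ) : Prop :=
  ∀ ψ : Ph N → ℝ, IsTest ψ → ∫ p, ψ p * g p = -∫ p, f p * XD J ψ p

/-- Differentiating the pairing of a rotated test function with `f` and moving the derivative onto
`f` by the weak formulation, applied to the test function `ψ ∘ rot J (-t)`. -/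
theorem hasDerivAt_pairing {N : ℕ} {J : E3 →L[ℝ] E3} (hJ : ∀ x y, ⟪J x, y⟫ = -⟪x, J y⟫)
    {f g ψ : Ph N → ℝ} (hf : MemLp f 2) (hw : WeakPair J f g) (hψ : IsTest ψ)
    (t : ℝ) : HasDerivAt (fun s => ∫ p, ψ (rot J (-s) p) * f p)
      (∫ p, ψ (rot J (-t) p) * g p) t := by
  have hX := hψ.bddSupp_XD J
  obtain ⟨hXm, M, R, hM, hR, hb⟩ := hX
  have hInd : BddSupp ((Metric.closedBall (0 : Ph N) R).indicator fun _ => M) := by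
    refine ⟨measurable_const.indicator Metric.isClosed_closedBall.measurableSet, M, R, hM, hR,
      fun p => ⟨?_, fun hp => ?_⟩⟩
    · by_cases hp : p ∈ Metric.closedBall (0 : Ph N) R
      · rw [Set.indicator_of_mem hp, abs_of_nonneg hM]
      · rw [Set.indicator_of_notMem hp]; simpa using hM
    · rw [Set.indicator_of_notMem]; simpa using hp
  have key := (hasDerivAt_integral_of_dominated_loc_of_deriv_le (μ := (volume : Measure (Ph N)))
    (F := fun s p => ψ (rot J (-s) p) * f p)
    (F' := fun s p => -XD J ψ (rot J (-s) p) * f p) (x₀ := t) (s := Set.univ)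
    (bound := fun p => (Metric.closedBall (0 : Ph N) R).indicator (fun _ => M) p * ‖f p‖)
    Filter.univ_mem
    (Filter.Eventually.of_forall fun s =>
      ((hψ.comp_rot hJ (-s)).1.aestronglyMeasurable.mul hf.1))
    ((hψ.comp_rot hJ (-t)).bddSupp.memLp.integrable_mul hf)
    ((hXm.comp (rot J (-t)).continuous.measurable).neg.aestronglyMeasurable.mul hf.1)
    (Filter.Eventually.of_forall fun p s _ => ?_)
    (hInd.memLp.integrable_mul hf.norm)
    (Filter.Eventually.of_forall fun p s _ => (hasDerivAt_rot hψ J s p).mul_const _)).2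
  · have h1 := hw _ (hψ.comp_rot hJ (-t))
    rw [← integral_neg] at h1
    have h2 : ∫ p, -XD J ψ (rot J (-t) p) * f p = ∫ p, ψ (rot J (-t) p) * g p := by
      rw [h1]
      congr 1
      ext p
      rw [XD_comp_rot hψ]; ring
    rw [← h2]
    exact key
  · rw [norm_mul, norm_neg]
    gcongr
    by_cases hp : p ∈ Metric.closedBall (0 : Ph N) R
    · rw [Set.indicator_of_mem hp]; exact (hb _).1
    · rw [Set.indicator_of_notMem hp, (hb _).2 (by rw [norm_rot hJ]; simpa using hp)]; simp

/-- The adjoint of composition with `rot J t` is composition with `rot J (-t)`. -/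
theorem integral_rot {N : ℕ} {J : E3 →L[ℝ] E3} (hJ : ∀ x y, ⟪J x, y⟫ = -⟪x, J y⟫)
    (f ψ : Ph N → ℝ) (t : ℝ) :
    ∫ p, ψ p * f (rot J t p) = ∫ p, ψ (rot J (-t) p) * f p := by
  let h : Homeomorph (Ph N) (Ph N) :=
    { toFun := rot J t
      invFun := rot J (-t)
      left_inv := rot_neg_rot J t
      right_inv := fun p => by simpa using rot_neg_rot J (-t) p
      continuous_toFun := (rot J t).continuous
      continuous_invFun := (rot J (-t)).continuous }
  have := (rot_measurePreserving (N := N) hJ t).integral_comp h.measurableEmbedding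
    (fun p => ψ (rot J (-t) p) * f p)
  rw [← this]
  congr 1
  ext p
  simp only [rot_neg_rot]

/-- The unitary action `f ↦ f ∘ rot J t` of the rotations on `L²`. -/
def U {N : ℕ} {J : E3 →L[ℝ] E3} (hJ : ∀ x y, ⟪J x, y⟫ = -⟪x, J y⟫) (t : ℝ)
    (f : Lp ℝ 2 (volume : Measure (Ph N))) : Lp ℝ 2 (volume : Measure (Ph N)) :=
  Lp.compMeasurePreserving (rot J t) (rot_measurePreserving hJ t) f

theorem inner_toLp {N : ℕ} {f g : Ph N → ℝ} (hf : MemLp f 2) (hg : MemLp g 2) :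
    ⟪hf.toLp f, hg.toLp g⟫ = ∫ p, f p * g p := by
  rw [L2.inner_def]
  refine integral_congr_ae ?_
  filter_upwards [hf.coeFn_toLp, hg.coeFn_toLp] with p h1 h2
  rw [h1, h2]; simp [mul_comm]

theorem inner_U {N : ℕ} {J : E3 →L[ℝ] E3} (hJ : ∀ x y, ⟪J x, y⟫ = -⟪x, J y⟫) (t : ℝ)
    {f ψ : Ph N → ℝ} (hf : MemLp f 2) (hψ : MemLp ψ 2) :
    ⟪hψ.toLp ψ, U hJ t (hf.toLp f)⟫ = ∫ p, ψ (rot J (-t) p) * f p := by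
  rw [← integral_rot hJ]
  exact inner_toLp hψ (hf.comp_measurePreserving (rot_measurePreserving hJ t))

theorem continuous_U {N : ℕ} {J : E3 →L[ℝ] E3} (hJ : ∀ x y, ⟪J x, y⟫ = -⟪x, J y⟫)
    (f : Lp ℝ 2 (volume : Measure (Ph N))) : Continuous fun t => U hJ t f :=
  Continuous.compMeasurePreservingLp continuous_const (continuous_rot J)
    (rot_measurePreserving hJ) (by simp)

theorem U_zero {N : ℕ} {J : E3 →L[ℝ] E3} (hJ : ∀ x y, ⟪J x, y⟫ = -⟪x, J y⟫)
    {f : Ph N → ℝ} (hf : MemLp f 2) : U hJ 0 (hf.toLp f) = hf.toLp f := by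
  unfold U
  rw [Lp.toLp_compMeasurePreserving]
  congr 1
  ext p; simp [rot_zero]

/-- A weak derivative in `L²` is the norm derivative of the orbit under rotations. -/
theorem hasDerivAt_U {N : ℕ} {J : E3 →L[ℝ] E3} (hJ : ∀ x y, ⟪J x, y⟫ = -⟪x, J y⟫)
    {f g : Ph N → ℝ} (hf : MemLp f 2) (hg : MemLp g 2) (hw : WeakPair J f g) :
    HasDerivAt (fun t => U hJ t (hf.toLp f)) (hg.toLp g) 0 := by
  have hcont := continuous_U hJ (hg.toLp g)
  have hI : ∀ t : ℝ, HasDerivAt (fun t => ∫ s in (0 : ℝ)..t, U hJ s (hg.toLp g))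
      (U hJ t (hg.toLp g)) t := fun t =>
    intervalIntegral.integral_hasDerivAt_right (hcont.intervalIntegrable _ _)
      hcont.aestronglyMeasurable.stronglyMeasurableAtFilter hcont.continuousAt
  -- The identity below is checked weakly, against the dense set of smooth compactly supported
  -- functions, where both sides have the same derivative in `t`.
  have hEq : ∀ t : ℝ, U hJ t (hf.toLp f) =
      hf.toLp f + ∫ s in (0 : ℝ)..t, U hJ s (hg.toLp g) := by
    intro t
    have hdense := Lp.dense_hasCompactSupport_contDiff (F := ℝ) (p := 2)
      (μ := (volume : Measure (Ph N))) (by simp)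
    refine hdense.eq_of_inner_right (𝕜 := ℝ) ?_
    rintro v ⟨ψ, hvψ, hs, hd⟩
    have hT : IsTest ψ := isTest_of_contDiff (hd.of_le (by simp)) hs
    have hψ2 := hT.bddSupp.memLp
    have hv : v = hψ2.toLp ψ := by
      apply Lp.ext; exact hvψ.trans hψ2.coeFn_toLp.symm
    subst hv
    have hder : ∀ s : ℝ, HasDerivAt (fun s => ⟪hψ2.toLp ψ, U hJ s (hf.toLp f)⟫ -
        ⟪hψ2.toLp ψ, hf.toLp f + ∫ r in (0 : ℝ)..s, U hJ r (hg.toLp g)⟫) 0 s := by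
      intro s
      have h1 : HasDerivAt (fun s => ⟪hψ2.toLp ψ, U hJ s (hf.toLp f)⟫)
          ⟪hψ2.toLp ψ, U hJ s (hg.toLp g)⟫ s := by
        have h0 : (fun s => ⟪hψ2.toLp ψ, U hJ s (hf.toLp f)⟫) =
            fun s => ∫ p, ψ (rot J (-s) p) * f p := funext fun s => inner_U hJ s hf hψ2
        rw [h0, inner_U hJ s hg hψ2]
        exact hasDerivAt_pairing hJ hf hw hT s
      have h2 := (hasDerivAt_const s (hψ2.toLp ψ)).inner ℝ ((hI s).const_add (hf.toLp f))
      have h3 := h1.sub h2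
      rwa [inner_zero_left, add_zero, sub_self] at h3
    have := is_const_of_deriv_eq_zero (fun s => (hder s).differentiableAt)
      (fun s => (hder s).deriv) t 0
    simp only [U_zero, intervalIntegral.integral_same, add_zero, sub_self] at this
    exact sub_eq_zero.1 this
  have h0 := (hI 0).const_add (hf.toLp f)
  rw [U_zero] at h0
  exact h0.congr_of_eventuallyEq (Filter.Eventually.of_forall hEq)

/-- Integration by parts for weak derivatives along `J z`: since `U` is unitary, its generator is
skew-adjoint on the full domain of weakly differentiable functions. -/
theorem weakPair_skew {N : ℕ} {J : E3 →L[ℝ] E3} (hJ : ∀ x y, ⟪J x, y⟫ = -⟪x, J y⟫)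
    {f g f' g' : Ph N → ℝ} (hf : MemLp f 2) (hg : MemLp g 2) (hw : WeakPair J f g)
    (hf' : MemLp f' 2) (hg' : MemLp g' 2) (hw' : WeakPair J f' g') :
    ∫ p, f' p * g p = -∫ p, f p * g' p := by
  have h1 := (hasDerivAt_const (0 : ℝ) (hf'.toLp f')).inner ℝ (hasDerivAt_U hJ hf hg hw)
  have hd := hasDerivAt_U hJ hf' hg' hw'
  have hd' : HasDerivAt (fun t => U hJ (-t) (hf'.toLp f')) (-hg'.toLp g') 0 := by
    rw [← neg_zero] at hd
    have := HasDerivAt.scomp (0 : ℝ) hd (hasDerivAt_neg 0)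
    simpa [Function.comp_def] using this
  have h2 := (hasDerivAt_const (0 : ℝ) (hf.toLp f)).inner ℝ hd'
  have heq : (fun t : ℝ => ⟪hf'.toLp f', U hJ t (hf.toLp f)⟫) =
      fun t => ⟪hf.toLp f, U hJ (-t) (hf'.toLp f')⟫ := by
    ext t
    rw [inner_U, inner_U, ← integral_rot hJ, neg_neg]
    rw [integral_rot hJ, ← neg_neg t, ← integral_rot hJ, neg_neg]
    simp only [mul_comm]
  rw [heq] at h1
  have := h1.unique h2
  simp only [inner_zero_left, add_zero, inner_neg_right, inner_toLp] at this
  exact this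

/-! ### The product rule along one rotational field -/

theorem integrable_mul_of_sq {N : ℕ} {F G : Ph N → ℝ} (hFm : Measurable F) (hGm : Measurable G)
    {S : Set (Ph N)} (hF : IntegrableOn (fun p => F p ^ 2) S)
    (hG : IntegrableOn (fun p => G p ^ 2) S) : IntegrableOn (fun p => F p * G p) S := by
  have h1 := (memLp_two_iff_integrable_sq (μ := volume.restrict S) hFm.aestronglyMeasurable).2 hF
  have h2 := (memLp_two_iff_integrable_sq (μ := volume.restrict S) hGm.aestronglyMeasurable).2 hG
  exact h1.integrable_mul h2

theorem weakPair_mul {N : ℕ} {J : E3 →L[ℝ] E3} {F G φ : Ph N → ℝ}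
    (hF : ∀ R : ℝ, 0 < R → IntegrableOn F (Metric.closedBall 0 R))
    (hG : ∀ R : ℝ, 0 < R → IntegrableOn G (Metric.closedBall 0 R))
    (hw : WeakPair J F G) (hφ : IsTest φ) :
    WeakPair J (fun p => φ p * F p) (fun p => φ p * G p + XD J φ p * F p) := by
  intro ψ hψ
  have h := hw _ (hψ.mul hφ)
  have i1 := (hψ.bddSupp.mul hφ.bddSupp).integrable_mul hG
  have i2 := (hψ.bddSupp.mul (hφ.bddSupp_XD J)).integrable_mul hF
  have i3 := (hφ.bddSupp.mul (hψ.bddSupp_XD J)).integrable_mul hF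
  have e1 : ∫ p, ψ p * (φ p * G p + XD J φ p * F p) =
      (∫ p, ψ p * φ p * G p) + ∫ p, ψ p * XD J φ p * F p := by
    rw [← integral_add i1 i2]
    congr 1; ext p; ring
  have e2 : ∫ p, F p * XD J (fun p => ψ p * φ p) p =
      (∫ p, ψ p * XD J φ p * F p) + ∫ p, φ p * XD J ψ p * F p := by
    rw [← integral_add i2 i3]
    congr 1; ext p; rw [XD_mul hψ hφ]; ring
  have e3 : ∫ p, φ p * F p * XD J ψ p = ∫ p, φ p * XD J ψ p * F p := by
    congr 1; ext p; ring
  rw [e1, h, e2, e3]; ring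

theorem exists_cutoff {N : ℕ} (R : ℝ) (hR : 0 < R) :
    ∃ χ : Ph N → ℝ, IsTest χ ∧ ∀ p, ‖p‖ ≤ R → χ p = 1 := by
  let f : ContDiffBump (0 : Ph N) := ⟨R, R + 1, hR, by linarith⟩
  exact ⟨f, isTest_of_contDiff f.contDiff f.hasCompactSupport,
    fun p hp => f.one_of_mem_closedBall (by simpa using hp)⟩

/-- The weak derivative of `F ^ 2` along `J z` is `2 F G`. Here `weakPair_skew` is applied to `χ F` and
`φ F`, where the cutoff `χ` equals `1` on the support of `φ`. -/
theorem weak_sq {N : ℕ} {J : E3 →L[ℝ] E3} (hJ : ∀ x y, ⟪J x, y⟫ = -⟪x, J y⟫)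
    {F G φ : Ph N → ℝ} (hFm : Measurable F) (hGm : Measurable G)
    (hF : ∀ R : ℝ, 0 < R → IntegrableOn (fun p => F p ^ 2) (Metric.closedBall 0 R))
    (hG : ∀ R : ℝ, 0 < R → IntegrableOn (fun p => G p ^ 2) (Metric.closedBall 0 R))
    (hw : WeakPair J F G) (hφ : IsTest φ) :
    ∫ p, φ p * (2 * (F p * G p)) = -∫ p, XD J φ p * F p ^ 2 := by
  have hone : ∀ R : ℝ, 0 < R →
      IntegrableOn (fun _ : Ph N => (1 : ℝ) ^ 2) (Metric.closedBall 0 R) := fun R _ =>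
    continuous_const.continuousOn.integrableOn_compact (isCompact_closedBall _ _)
  have hF1 : ∀ R : ℝ, 0 < R → IntegrableOn F (Metric.closedBall 0 R) := fun R hR => by
    simpa using integrable_mul_of_sq hFm measurable_const (hF R hR) (hone R hR)
  have hG1 : ∀ R : ℝ, 0 < R → IntegrableOn G (Metric.closedBall 0 R) := fun R hR => by
    simpa using integrable_mul_of_sq hGm measurable_const (hG R hR) (hone R hR)
  have hFG : ∀ R : ℝ, 0 < R → IntegrableOn (fun p => F p * G p) (Metric.closedBall 0 R) :=
    fun R hR => integrable_mul_of_sq hFm hGm (hF R hR) (hG R hR)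
  obtain ⟨R, hR, hφR⟩ := exists_radius hφ.2.1
  obtain ⟨χ, hχ, hχ1⟩ := exists_cutoff (N := N) R hR
  have hmem : ∀ {η : Ph N → ℝ}, IsTest η → MemLp (fun p => η p * F p) 2 :=
    fun hη => hη.bddSupp.memLp_mul hFm hF
  have hmem' : ∀ {η : Ph N → ℝ}, IsTest η →
      MemLp (fun p => η p * G p + XD J η p * F p) 2 := fun hη =>
    (hη.bddSupp.memLp_mul hGm hG).add ((hη.bddSupp_XD J).memLp_mul hFm hF)
  have h := weakPair_skew hJ (hmem hχ) (hmem' hχ) (weakPair_mul hF1 hG1 hw hχ)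
    (hmem hφ) (hmem' hφ) (weakPair_mul hF1 hG1 hw hφ)
  have hprod : (fun p => χ p * φ p) = φ := by
    ext p
    by_cases hp : R < ‖p‖
    · rw [hφR p hp, mul_zero]
    · rw [hχ1 p (not_lt.1 hp), one_mul]
  have hX : ∀ p, χ p * XD J φ p + φ p * XD J χ p = XD J φ p := fun p => by
    rw [← XD_mul hχ hφ, hprod]
  have hp : ∀ p, χ p * φ p = φ p := fun p => congrFun hprod p
  have i1 := hφ.bddSupp.integrable_mul hFG
  have i2 := (hφ.bddSupp.mul (hχ.bddSupp_XD J)).integrable_mul hF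
  have i3 := (hχ.bddSupp.mul (hφ.bddSupp_XD J)).integrable_mul hF
  have e1 : ∫ p, φ p * F p * (χ p * G p + XD J χ p * F p) =
      (∫ p, φ p * (F p * G p)) + ∫ p, φ p * XD J χ p * F p ^ 2 := by
    rw [← integral_add i1 i2]
    congr 1; ext p
    linear_combination (F p * G p) * hp p
  have e2 : ∫ p, χ p * F p * (φ p * G p + XD J φ p * F p) =
      (∫ p, φ p * (F p * G p)) + ∫ p, χ p * XD J φ p * F p ^ 2 := by
    rw [← integral_add i1 i3]
    congr 1; ext p
    linear_combination (F p * G p) * hp p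
  have e3 : ∫ p, XD J φ p * F p ^ 2 =
      (∫ p, χ p * XD J φ p * F p ^ 2) + ∫ p, φ p * XD J χ p * F p ^ 2 := by
    rw [← integral_add i3 i2]
    congr 1; ext p
    linear_combination (-F p ^ 2) * hX p
  have e4 : ∫ p, φ p * (2 * (F p * G p)) = 2 * ∫ p, φ p * (F p * G p) := by
    rw [← integral_const_mul]
    congr 1; ext p; ring
  rw [e1, e2] at h
  rw [e3, e4]
  linarith

/-! ### Generators of the rotation group -/

/-- The generator `z ↦ z_k e_l - z_l e_k` of rotations in the `(k, l)` coordinate plane. -/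
def gen (k l : Fin 3) : E3 →L[ℝ] E3 :=
  (EuclideanSpace.proj k : E3 →L[ℝ] ℝ).smulRight (EuclideanSpace.single l (1 : ℝ)) -
    (EuclideanSpace.proj l : E3 →L[ℝ] ℝ).smulRight (EuclideanSpace.single k (1 : ℝ))

theorem gen_apply (k l : Fin 3) (z : E3) :
    gen k l z = z k • EuclideanSpace.single l (1 : ℝ) - z l • EuclideanSpace.single k (1 : ℝ) := by
  rfl

theorem gen_skew (k l : Fin 3) (x y : E3) : ⟪gen k l x, y⟫ = -⟪x, gen k l y⟫ := by
  simp only [gen_apply, inner_sub_left, inner_sub_right, inner_smul_left, inner_smul_right,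
    EuclideanSpace.inner_single_left, EuclideanSpace.inner_single_right]
  simp; ring

theorem gen_inner_self (k l : Fin 3) (z : E3) : ⟪z, gen k l z⟫ = 0 := by
  have := gen_skew k l z z
  rw [real_inner_comm] at this
  linarith

theorem inner_expand (x y : E3) : ⟪x, y⟫ = x 0 * y 0 + x 1 * y 1 + x 2 * y 2 := by
  simp [PiLp.inner_apply, Fin.sum_univ_three]; ring

theorem gen_coord (k l : Fin 3) (z : E3) (i : Fin 3) :
    gen k l z i = z k * (if i = l then 1 else 0) - z l * (if i = k then 1 else 0) := by
  simp [gen_apply]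

/-- The identity `∑ (J z) ⊗ (J z) = 2 |z|² Π(z)`, summed over the generators `J`. -/
theorem sum_gen_inner (x y z : E3) :
    ∑ k, ∑ l, ⟪x, gen k l z⟫ * ⟪gen k l z, y⟫ = 2 * (‖z‖ ^ 2 * ⟪x, y⟫ - ⟪x, z⟫ * ⟪z, y⟫) := by
  rw [← real_inner_self_eq_norm_sq]
  simp only [inner_expand, gen_coord, Fin.sum_univ_three]
  simp
  ring

theorem sum_gen_gen (x z : E3) :
    ∑ k, ∑ l, ⟪x, gen k l (gen k l z)⟫ = - (4 * ⟪x, z⟫) := by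
  simp only [inner_expand, gen_coord, Fin.sum_univ_three]
  simp
  ring

theorem map_expand (A : E3 →L[ℝ] E3) (z : E3) : A z = z 0 • A (EuclideanSpace.single 0 1)
    + z 1 • A (EuclideanSpace.single 1 1) + z 2 • A (EuclideanSpace.single 2 1) := by
  rw [← map_smul, ← map_smul, ← map_smul, ← map_add, ← map_add]
  congr 1
  ext i
  fin_cases i <;> simp

theorem sum_gen_map (A : E3 →L[ℝ] E3) (z : E3) :
    ∑ k, ∑ l, ⟪A (gen k l z), gen k l z⟫ =
      2 * (‖z‖ ^ 2 * ∑ i : Fin 3, A (EuclideanSpace.single i 1) i - ⟪z, A z⟫) := by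
  have h : ∀ k l, A (gen k l z) = z k • A (EuclideanSpace.single l 1) -
      z l • A (EuclideanSpace.single k 1) := fun k l => by
    rw [gen_apply, map_sub, map_smul, map_smul]
  rw [← real_inner_self_eq_norm_sq, map_expand A z]
  simp only [h, inner_expand, gen_coord, Fin.sum_univ_three]
  simp
  ring

/-! ### Vector and scalar test functions -/

theorem testC_smul {N : ℕ} {φ : Ph N → ℝ} (h : IsTest φ) (J : E3 →L[ℝ] E3) :
    TestC N (fun p => φ p • J p.2) := by
  obtain ⟨hc, hs, hd, C, hC⟩ := h
  have hC0 : 0 ≤ C := (norm_nonneg _).trans (hC 0 0)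
  obtain ⟨R, hR, h1⟩ := exists_radius hs
  obtain ⟨M, hM, h2⟩ := exists_bound hc hs
  refine ⟨by fun_prop, hs.smul_right, fun y => by simp, fun y => (hd y).smul J.contDiff,
    M * ‖J‖ + C * (‖J‖ * R), fun y z => ?_⟩
  by_cases hp : R < ‖((y, z) : Ph N)‖
  · have := fderiv_eq_zero_of_far (φ := fun p : Ph N => φ p • J p.2) (R := R)
      (fun p hp => by simp [h1 p hp]) hp
    simp only at this
    rw [this, norm_zero]; positivity
  · have hz : ‖z‖ ≤ R := (norm_snd_le ((y, z) : Ph N)).trans (not_lt.1 hp)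
    rw [fderiv_fun_smul ((hd y).differentiable (by simp) z) J.differentiableAt]
    refine (norm_add_le _ _).trans ?_
    rw [norm_smul, ContinuousLinearMap.norm_smulRight_apply, ContinuousLinearMap.fderiv]
    gcongr
    · exact h2 _
    · exact hC _ _
    · exact (J.le_opNorm _).trans (by gcongr)

theorem clm_expand (A : E3 →L[ℝ] ℝ) (z : E3) : A z = z 0 * A (EuclideanSpace.single 0 1)
    + z 1 * A (EuclideanSpace.single 1 1) + z 2 * A (EuclideanSpace.single 2 1) := by
  simp only [← smul_eq_mul]
  rw [← map_smul, ← map_smul, ← map_smul, ← map_add, ← map_add]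
  congr 1
  ext i
  fin_cases i <;> simp

/-- A field `φ J z` is tangential, hence fixed by `Π`, and `J z` is divergence free. -/
theorem divPi_smul_gen {N : ℕ} {φ : Ph N → ℝ} (h : IsTest φ) (k l : Fin 3) (p : Ph N) :
    divPi N (fun p => φ p • gen k l p.2) p.1 p.2 = XD (gen k l) φ p := by
  obtain ⟨y, z⟩ := p
  have hd : ∀ v, fderiv ℝ (fun w => φ (y, w) • gen k l w) z v =
      φ (y, z) • gen k l v + (fderiv ℝ (fun w => φ (y, w)) z v) • gen k l z := fun v => by
    rw [fderiv_fun_smul ((h.2.2.1 y).differentiable (by simp) z) (gen k l).differentiableAt]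
    simp
  have h0 := gen_inner_self k l z
  have htr : ∑ i : Fin 3, gen k l (EuclideanSpace.single i 1) i = 0 := by
    simp only [gen_coord, Fin.sum_univ_three]
    fin_cases k <;> fin_cases l <;> simp
  simp only [divPi, XD, hd]
  rw [clm_expand _ (gen k l z)]
  simp only [map_smul, inner_add_right, inner_smul_left, inner_smul_right, h0,
    real_inner_comm z (gen k l z), PiLp.add_apply, PiLp.smul_apply, smul_eq_mul,
    Finset.sum_add_distrib, ← Finset.mul_sum, htr]
  simp [Fin.sum_univ_three]
  ring

theorem isTest_inner {N : ℕ} {Ψ : Ph N → E3} (h : TestC N Ψ) (J : E3 →L[ℝ] E3) :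
    IsTest (fun p => ⟪Ψ p, J p.2⟫) := by
  obtain ⟨hc, hs, -, hd, C, hC⟩ := h
  have hC0 : 0 ≤ C := (norm_nonneg _).trans (hC 0 0)
  obtain ⟨R, hR, h1⟩ := exists_radius hs
  obtain ⟨M, hM, h2⟩ := exists_bound hc hs
  refine ⟨by fun_prop, HasCompactSupport.intro (isCompact_closedBall 0 R) fun p hp => ?_,
    fun y => (hd y).inner ℝ J.contDiff, M * ‖J‖ + C * (‖J‖ * R), fun y z => ?_⟩
  · rw [h1 p (by simpa using hp), inner_zero_left]
  by_cases hp : R < ‖((y, z) : Ph N)‖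
  · have := fderiv_eq_zero_of_far (φ := fun p : Ph N => ⟪Ψ p, J p.2⟫) (R := R)
      (fun p hp => by simp [h1 p hp]) hp
    simp only at this
    rw [this, norm_zero]; positivity
  · have hz : ‖z‖ ≤ R := (norm_snd_le ((y, z) : Ph N)).trans (not_lt.1 hp)
    refine ContinuousLinearMap.opNorm_le_bound _ (by positivity) fun v => ?_
    rw [fderiv_inner_apply ℝ ((hd y).differentiable (by simp) z) J.differentiableAt,
      ContinuousLinearMap.fderiv]
    refine (norm_add_le _ _).trans ?_
    rw [add_mul]
    refine add_le_add ((norm_inner_le_norm _ _).trans ?_) ((norm_inner_le_norm _ _).trans ?_)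
    · rw [mul_assoc]
      gcongr
      · exact h2 _
      · exact J.le_opNorm _
    · calc _ ≤ (C * ‖v‖) * (‖J‖ * R) := by
            gcongr
            · exact (ContinuousLinearMap.le_opNorm _ _).trans (by gcongr; exact hC _ _)
            · exact (J.le_opNorm _).trans (by gcongr)
        _ = _ := by ring

/-- The coefficient `⟪Ψ, J z⟫ / (|z|² + ε)` of `ΠΨ` along the field `J z`, where `ε > 0` removes the
singularity at `z = 0`. -/
def coef {N : ℕ} (Ψ : Ph N → E3) (J : E3 →L[ℝ] E3) (ε : ℝ) (p : Ph N) : ℝ :=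
  (‖p.2‖ ^ 2 + ε)⁻¹ * ⟪Ψ p, J p.2⟫

theorem isTest_coef {N : ℕ} {Ψ : Ph N → E3} (h : TestC N Ψ) (J : E3 →L[ℝ] E3) {ε : ℝ}
    (hε : 0 < ε) : IsTest (coef Ψ J ε) := by
  obtain ⟨R, hR, h1⟩ := exists_radius h.2.1
  let f : ContDiffBump (0 : Ph N) := ⟨R, R + 1, hR, by linarith⟩
  have ha : ContDiff ℝ 1 fun p : Ph N => (‖p.2‖ ^ 2 + ε)⁻¹ := by
    refine ContDiff.inv ?_ fun p => by positivity
    exact (contDiff_snd.norm_sq ℝ).add contDiff_const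
  have hT : IsTest (fun p => f p * (‖p.2‖ ^ 2 + ε)⁻¹) :=
    isTest_of_contDiff (f.contDiff.mul ha) f.hasCompactSupport.mul_right
  have := hT.mul (isTest_inner h J)
  convert this using 1
  ext p
  by_cases hp : R < ‖p‖
  · simp [coef, h1 p hp]
  · have : f p = 1 := f.one_of_mem_closedBall (by simpa using hp)
    simp only [coef, this, one_mul]

/-- The radial factor of `coef` is constant along `J z`, so only `⟪Ψ, J z⟫` is differentiated. -/
theorem XD_coef {N : ℕ} {Ψ : Ph N → E3} (h : TestC N Ψ) {J : E3 →L[ℝ] E3}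
    (hJ : ∀ z, ⟪z, J z⟫ = 0) {ε : ℝ} (hε : 0 < ε) (p : Ph N) :
    XD J (coef Ψ J ε) p = (‖p.2‖ ^ 2 + ε)⁻¹ *
      (⟪Ψ p, J (J p.2)⟫ + ⟪fderiv ℝ (fun w => Ψ (p.1, w)) p.2 (J p.2), J p.2⟫) := by
  obtain ⟨y, z⟩ := p
  have hne : ‖z‖ ^ 2 + ε ≠ 0 := by positivity
  have ha := (hasDerivAt_inv hne).comp_hasFDerivAt z
    ((hasStrictFDerivAt_norm_sq z).hasFDerivAt.add_const ε)
  have hb := (((isTest_inner h J).2.2.1 y).differentiable (by simp) z).hasFDerivAt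
  have hab := congrArg (fun A : E3 →L[ℝ] ℝ => A (J z)) (ha.mul hb).fderiv
  refine Eq.trans hab ?_
  simp only [add_apply, smul_apply,
    fderiv_inner_apply ℝ ((h.2.2.2.1 y).differentiable (by simp) z) J.differentiableAt,
    ContinuousLinearMap.fderiv, innerSL_apply_apply, hJ]
  simp

/-- Summing over all generators recovers `∇·(ΠΨ)`, up to the weight `|z|² / (|z|² + ε)`. -/
theorem sum_XD_coef {N : ℕ} {Ψ : Ph N → E3} (h : TestC N Ψ) {ε : ℝ} (hε : 0 < ε) (p : Ph N) :
    ∑ k, ∑ l, XD (gen k l) (coef Ψ (gen k l) ε) p =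
      2 * (‖p.2‖ ^ 2 / (‖p.2‖ ^ 2 + ε) * divPi N Ψ p.1 p.2) := by
  simp only [XD_coef h (gen_inner_self _ _) hε, ← Finset.mul_sum, Finset.sum_add_distrib,
    sum_gen_gen, sum_gen_map]
  have hne : ‖p.2‖ ^ 2 + ε ≠ 0 := by positivity
  unfold divPi
  by_cases hz : p.2 = 0
  · simp [hz]
  · have hn : ‖p.2‖ ≠ 0 := norm_ne_zero_iff.2 hz
    simp only [map_smul, inner_smul_left, inner_smul_right]
    simp
    field_simp
    ring

/-- The term `⟪Ψ, n⟫ / |z|` of the divergence is bounded because `Ψ (y, 0) = 0` and `Ψ` is Lipschitz in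
`z`. -/
theorem bddSupp_divPi {N : ℕ} {Ψ : Ph N → E3} (h : TestC N Ψ) :
    BddSupp (fun p : Ph N => divPi N Ψ p.1 p.2) := by
  obtain ⟨hc, hs, h00, hd, C, hC⟩ := h
  have hC0 : 0 ≤ C := (norm_nonneg _).trans (hC 0 0)
  obtain ⟨R, hR, h1⟩ := exists_radius hs
  have hA := measurable_zderiv hc
  have hev : Continuous fun q : (E3 →L[ℝ] E3) × E3 => q.1 q.2 := by fun_prop
  have hn : Measurable fun p : Ph N => ‖p.2‖⁻¹ • p.2 := by fun_prop
  refine ⟨?_, 3 * C + C + 2 * C, R, by positivity, hR, fun p => ⟨?_, fun hp => ?_⟩⟩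
  · refine ((Finset.measurable_sum _ fun i _ => ?_).sub (hn.inner ?_)).sub
      (((hc.measurable.inner hn).const_mul 2).div (by fun_prop))
    · have h2 : Measurable fun p : Ph N => fderiv ℝ (fun w => Ψ (p.1, w)) p.2
          (EuclideanSpace.single i 1) := hev.measurable.comp (hA.prodMk measurable_const)
      exact (EuclideanSpace.proj i : E3 →L[ℝ] ℝ).continuous.measurable.comp h2
    · exact hev.measurable.comp (hA.prodMk hn)
  · obtain ⟨y, z⟩ := p
    have hn1 : ‖‖z‖⁻¹ • z‖ ≤ 1 := by
      rw [norm_smul, norm_inv, norm_norm]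
      exact inv_mul_le_one
    have hlip : ‖Ψ (y, z)‖ ≤ C * ‖z‖ := by
      have := Convex.norm_image_sub_le_of_norm_fderiv_le (𝕜 := ℝ) (f := fun w => Ψ (y, w))
        (s := Set.univ) (x := 0) (y := z) (C := C)
        (fun w _ => (hd y).differentiable (by simp) w) (fun w _ => hC y w) convex_univ
        (Set.mem_univ _) (Set.mem_univ _)
      simpa [h00] using this
    have t1 : |∑ i : Fin 3, fderiv ℝ (fun w => Ψ (y, w)) z (EuclideanSpace.single i 1) i|
        ≤ 3 * C := by
      refine (Finset.abs_sum_le_sum_abs _ _).trans ?_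
      calc _ ≤ ∑ i : Fin 3, C := Finset.sum_le_sum fun i _ => by
            refine (PiLp.norm_apply_le (p := 2)
              (fderiv ℝ (fun w => Ψ (y, w)) z (EuclideanSpace.single i 1)) i).trans ?_
            refine (ContinuousLinearMap.le_opNorm _ _).trans ?_
            simpa using hC y z
        _ = 3 * C := by simp
    have t2 : |⟪‖z‖⁻¹ • z, fderiv ℝ (fun w => Ψ (y, w)) z (‖z‖⁻¹ • z)⟫| ≤ C := by
      refine (abs_real_inner_le_norm _ _).trans ?_
      calc _ ≤ 1 * (C * 1) := by
            gcongr
            exact (ContinuousLinearMap.le_opNorm _ _).trans (by gcongr; exact hC y z)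
        _ = C := by ring
    have t3 : |2 * ⟪Ψ (y, z), ‖z‖⁻¹ • z⟫ / ‖z‖| ≤ 2 * C := by
      rw [abs_div, abs_mul, abs_norm, abs_two, mul_div_assoc]
      gcongr
      refine div_le_of_le_mul₀ (norm_nonneg _) hC0 ?_
      refine (abs_real_inner_le_norm _ _).trans ?_
      calc _ ≤ (C * ‖z‖) * 1 := by gcongr
        _ = _ := by ring
    unfold divPi
    exact (abs_sub _ _).trans (add_le_add ((abs_sub _ _).trans (add_le_add t1 t2)) t3)
  · have hz := fderiv_eq_zero_of_far h1 hp
    have h2 := h1 p hp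
    simp only [divPi, hz]
    simp [h2]

/-! ### The product rule for the projected gradient -/

/-- The weight `|z|² / (|z|² + ε)` disappears as `ε → 0`, the set `z = 0` being null. -/
theorem tendsto_weight {N : ℕ} {H : Ph N → ℝ} (hH : Integrable H) :
    Filter.Tendsto (fun n : ℕ => ∫ p, ‖p.2‖ ^ 2 / (‖p.2‖ ^ 2 + 1 / ((n : ℝ) + 1)) * H p)
      Filter.atTop (nhds (∫ p, H p)) := by
  have hnull : ∀ᵐ p : Ph N, p.2 ≠ 0 := by
    rw [ae_iff]
    have : {p : Ph N | ¬ p.2 ≠ 0} = Set.univ ×ˢ {0} := by ext p; simp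
    rw [this, Measure.volume_eq_prod, Measure.prod_prod, measure_singleton, mul_zero]
  refine tendsto_integral_of_dominated_convergence (fun p => ‖H p‖) (fun n => ?_) hH.norm
    (fun n => Filter.Eventually.of_forall fun p => ?_) ?_
  · refine AEStronglyMeasurable.mul ?_ hH.1
    refine Measurable.aestronglyMeasurable ?_
    fun_prop
  · rw [norm_mul]
    refine mul_le_of_le_one_left (norm_nonneg _) ?_
    have h1 : (0 : ℝ) < 1 / ((n : ℝ) + 1) := by positivity
    rw [Real.norm_of_nonneg (by positivity)]
    exact div_le_one_of_le₀ (by linarith) (by positivity)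
  · filter_upwards [hnull] with p hp
    have hn : ‖p.2‖ ^ 2 + 0 ≠ 0 := by simpa using hp
    have h1 : Filter.Tendsto (fun n : ℕ => ‖p.2‖ ^ 2 / (‖p.2‖ ^ 2 + 1 / ((n : ℝ) + 1)) * H p)
        Filter.atTop (nhds (‖p.2‖ ^ 2 / (‖p.2‖ ^ 2 + 0) * H p)) :=
      (tendsto_const_nhds.div (tendsto_const_nhds.add tendsto_one_div_add_atTop_nhds_zero_nat)
        hn).mul_const _
    rwa [add_zero, div_self (by simpa using hn), one_mul] at h1

/-- The hypothesis tested with `Ψ = ψ J z`. -/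
theorem weakPair_gen {N : ℕ} {F : Ph N → ℝ} {D : Ph N → E3}
    (hweak : ∀ Ψ, TestC N Ψ → ∫ p, ⟪Ψ p, D p⟫ = -∫ p, F p * divPi N Ψ p.1 p.2)
    (k l : Fin 3) : WeakPair (gen k l) F (fun p => ⟪gen k l p.2, D p⟫) := by
  intro ψ hψ
  have := hweak _ (testC_smul hψ (gen k l))
  simp only [divPi_smul_gen hψ, real_inner_smul_left] at this
  exact this

/-- The product rule for the projected gradient with a weight vanishing at `z = 0`, obtained by summing
`weak_sq` with `φ = coef Ψ (gen k l) ε` over `k, l`. -/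
theorem weak_sq_weighted {N : ℕ} {F : Ph N → ℝ} {D : Ph N → E3}
    (hFm : Measurable F) (hDm : Measurable D)
    (hF : ∀ R : ℝ, 0 < R → IntegrableOn (fun p => F p ^ 2) (Metric.closedBall 0 R))
    (hD : ∀ R : ℝ, 0 < R → IntegrableOn (fun p => ‖D p‖ ^ 2) (Metric.closedBall 0 R))
    (hperp : ∀ᵐ p, ⟪D p, p.2⟫ = 0)
    (hweak : ∀ Ψ, TestC N Ψ → ∫ p, ⟪Ψ p, D p⟫ = -∫ p, F p * divPi N Ψ p.1 p.2)
    {Ψ : Ph N → E3} (h : TestC N Ψ) {ε : ℝ} (hε : 0 < ε) :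
    ∫ p, ‖p.2‖ ^ 2 / (‖p.2‖ ^ 2 + ε) * ⟪Ψ p, (2 * F p) • D p⟫ =
      -∫ p, ‖p.2‖ ^ 2 / (‖p.2‖ ^ 2 + ε) * (F p ^ 2 * divPi N Ψ p.1 p.2) := by
  have hGm : ∀ k l : Fin 3, Measurable fun p : Ph N => ⟪gen k l p.2, D p⟫ := fun k l =>
    Measurable.inner (by fun_prop) hDm
  have hG : ∀ k l : Fin 3, ∀ R : ℝ, 0 < R →
      IntegrableOn (fun p : Ph N => ⟪gen k l p.2, D p⟫ ^ 2) (Metric.closedBall 0 R) := by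
    intro k l R hR
    refine Integrable.mono' ((hD R hR).const_mul ((‖gen k l‖ * R) ^ 2))
      ((hGm k l).pow_const 2).aestronglyMeasurable ?_
    refine ae_restrict_of_forall_mem Metric.isClosed_closedBall.measurableSet fun p hp => ?_
    have hz : ‖p.2‖ ≤ R := (norm_snd_le p).trans (by simpa using hp)
    rw [norm_pow, ← mul_pow]
    gcongr
    refine (norm_inner_le_norm _ _).trans ?_
    gcongr
    exact ((gen k l).le_opNorm _).trans (by gcongr)
  have hsq := fun k l => weak_sq (gen_skew k l) hFm (hGm k l) hF (hG k l)
    (weakPair_gen hweak k l) (isTest_coef h (gen k l) hε)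
  have i1 : ∀ k l : Fin 3, Integrable fun p : Ph N =>
      coef Ψ (gen k l) ε p * (2 * (F p * ⟪gen k l p.2, D p⟫)) := fun k l =>
    (isTest_coef h (gen k l) hε).bddSupp.integrable_mul fun R hR =>
      (integrable_mul_of_sq hFm (hGm k l) (hF R hR) (hG k l R hR)).const_mul 2
  have i2 : ∀ k l : Fin 3, Integrable fun p : Ph N =>
      XD (gen k l) (coef Ψ (gen k l) ε) p * F p ^ 2 := fun k l =>
    ((isTest_coef h (gen k l) hε).bddSupp_XD (gen k l)).integrable_mul hF
  have e := Finset.sum_congr rfl fun k (_ : k ∈ (Finset.univ : Finset (Fin 3))) =>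
    Finset.sum_congr rfl fun l (_ : l ∈ (Finset.univ : Finset (Fin 3))) => hsq k l
  simp only [Finset.sum_neg_distrib] at e
  simp_rw [← integral_finsetSum _ fun l _ => i1 _ l, ← integral_finsetSum _ fun l _ => i2 _ l]
    at e
  rw [← integral_finsetSum _ fun k _ => integrable_finsetSum _ fun l _ => i1 k l,
    ← integral_finsetSum _ fun k _ => integrable_finsetSum _ fun l _ => i2 k l] at e
  have l1 : ∫ p : Ph N, ∑ k, ∑ l, coef Ψ (gen k l) ε p * (2 * (F p * ⟪gen k l p.2, D p⟫)) =
      2 * ∫ p, ‖p.2‖ ^ 2 / (‖p.2‖ ^ 2 + ε) * ⟪Ψ p, (2 * F p) • D p⟫ := by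
    rw [← integral_const_mul]
    refine integral_congr_ae ?_
    filter_upwards [hperp] with p hp
    have hs := sum_gen_inner (Ψ p) (D p) p.2
    rw [real_inner_comm (D p) p.2, hp] at hs
    calc _ = (‖p.2‖ ^ 2 + ε)⁻¹ * (2 * F p) *
          ∑ k, ∑ l, ⟪Ψ p, gen k l p.2⟫ * ⟪gen k l p.2, D p⟫ := by
            simp only [Finset.mul_sum, coef]
            refine Finset.sum_congr rfl fun k _ => Finset.sum_congr rfl fun l _ => ?_
            ring
      _ = _ := by
            rw [hs, real_inner_smul_right]
            ring
  have l2 : ∫ p : Ph N, ∑ k, ∑ l, XD (gen k l) (coef Ψ (gen k l) ε) p * F p ^ 2 =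
      2 * ∫ p, ‖p.2‖ ^ 2 / (‖p.2‖ ^ 2 + ε) * (F p ^ 2 * divPi N Ψ p.1 p.2) := by
    rw [← integral_const_mul]
    refine integral_congr_ae (Filter.Eventually.of_forall fun p => ?_)
    simp only [← Finset.sum_mul, sum_XD_coef h hε]
    ring
  rw [l1, l2] at e
  linarith

/-- The statement for `Y` the whole parameter space. -/
theorem weak_sq_whole {N : ℕ} {F : Ph N → ℝ} {D : Ph N → E3}
    (hFm : Measurable F) (hDm : Measurable D)
    (hF : ∀ R : ℝ, 0 < R → IntegrableOn (fun p => F p ^ 2) (Metric.closedBall 0 R))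
    (hD : ∀ R : ℝ, 0 < R → IntegrableOn (fun p => ‖D p‖ ^ 2) (Metric.closedBall 0 R))
    (hperp : ∀ᵐ p, ⟪D p, p.2⟫ = 0)
    (hweak : ∀ Ψ, TestC N Ψ → ∫ p, ⟪Ψ p, D p⟫ = -∫ p, F p * divPi N Ψ p.1 p.2)
    {Ψ : Ph N → E3} (h : TestC N Ψ) :
    ∫ p, ⟪Ψ p, (2 * F p) • D p⟫ = -∫ p, F p ^ 2 * divPi N Ψ p.1 p.2 := by
  have hb : BddSupp fun p : Ph N => ‖Ψ p‖ := by
    obtain ⟨R, hR, h1⟩ := exists_radius h.2.1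
    obtain ⟨M, hM, h2⟩ := exists_bound h.1 h.2.1
    exact ⟨h.1.norm.measurable, M, R, hM, hR, fun p =>
      ⟨by simpa using h2 p, fun hp => by simp [h1 p hp]⟩⟩
  have i1 : Integrable fun p : Ph N => ⟪Ψ p, (2 * F p) • D p⟫ := by
    have := hb.integrable_mul fun R hR => (integrable_mul_of_sq hFm.norm hDm.norm
      (by simpa using hF R hR) (hD R hR)).const_mul 2
    refine this.mono' (h.1.measurable.inner (by fun_prop)).aestronglyMeasurable
      (Filter.Eventually.of_forall fun p => ?_)
    refine (norm_inner_le_norm _ _).trans_eq ?_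
    rw [norm_smul, norm_mul, Real.norm_two, mul_assoc]
  have i2 : Integrable fun p : Ph N => F p ^ 2 * divPi N Ψ p.1 p.2 := by
    simpa only [mul_comm] using (bddSupp_divPi h).integrable_mul hF
  refine tendsto_nhds_unique (tendsto_weight i1) ?_
  refine (tendsto_weight i2).neg.congr fun n => ?_
  exact (weak_sq_weighted hFm hDm hF hD hperp hweak h (by positivity)).symm

/-- If `F ∈ L²_loc` has weak projection gradient `D ∈ L²_loc` in `z ≠ 0`,
then `F²` has weak projection gradient `2FD` in `z ≠ 0`. -/
theorem stmt18 (N : ℕ) (Y : Set (EuclideanSpace ℝ (Fin N))) (hY : MeasurableSet Y)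
    (F : EuclideanSpace ℝ (Fin N) × E3 → ℝ) (D : EuclideanSpace ℝ (Fin N) × E3 → E3)
    (hFmeas : Measurable F) (hDmeas : Measurable D)
    (hFloc : ∀ R : ℝ, 0 < R →
      IntegrableOn (fun p => (F p) ^ 2) ((Y ×ˢ (Set.univ : Set E3)) ∩ Metric.closedBall 0 R)
        volume)
    (hDloc : ∀ R : ℝ, 0 < R →
      IntegrableOn (fun p => ‖D p‖ ^ 2) ((Y ×ˢ (Set.univ : Set E3)) ∩ Metric.closedBall 0 R)
        volume)
    (hperp : ∀ᵐ p ∂(volume.restrict (Y ×ˢ (Set.univ : Set E3))), ⟪D p, p.2⟫ = 0)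
    (hweak : ∀ Ψ, TestC N Ψ →
      (∫ p in Y ×ˢ (Set.univ : Set E3), ⟪Ψ p, D p⟫) =
        -∫ p in Y ×ˢ (Set.univ : Set E3), F p * divPi N Ψ p.1 p.2) :
    (∀ R : ℝ, 0 < R →
      IntegrableOn (fun p => (F p) ^ 2) ((Y ×ˢ (Set.univ : Set E3)) ∩ Metric.closedBall 0 R)
        volume) ∧
    (∀ R : ℝ, 0 < R →
      IntegrableOn (fun p => ‖(2 * F p) • D p‖)
        ((Y ×ˢ (Set.univ : Set E3)) ∩ Metric.closedBall 0 R) volume) ∧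
    ∀ Ψ, TestC N Ψ →
      (∫ p in Y ×ˢ (Set.univ : Set E3), ⟪Ψ p, (2 * F p) • D p⟫) =
        -∫ p in Y ×ˢ (Set.univ : Set E3), (F p) ^ 2 * divPi N Ψ p.1 p.2 := by
  refine ⟨hFloc, fun R hR => ?_, fun Ψ hΨ => ?_⟩
  · have := (integrable_mul_of_sq hFmeas.norm hDmeas.norm
      (by simpa using hFloc R hR) (hDloc R hR)).const_mul 2
    refine this.congr (Filter.Eventually.of_forall fun p => ?_)
    simp only [norm_smul, norm_mul, Real.norm_two, mul_assoc]
  · set S : Set (Ph N) := Y ×ˢ (Set.univ : Set E3) with hS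
    have hSm : MeasurableSet S := hY.prod MeasurableSet.univ
    -- Extending by zero turns integrals over `S` into integrals over the whole space.
    have hext : ∀ {H : Ph N → ℝ} {A : Set (Ph N)}, IntegrableOn H (S ∩ A) →
        IntegrableOn (S.indicator H) A := fun {H A} hH => by
      rw [IntegrableOn, integrable_indicator_iff hSm, IntegrableOn, Measure.restrict_restrict hSm]
      exact hH
    have hF1 : ∀ R : ℝ, 0 < R →
        IntegrableOn (fun p => S.indicator F p ^ 2) (Metric.closedBall 0 R) := fun R hR => by
      convert hext (hFloc R hR) using 1
      ext p
      by_cases hp : p ∈ S <;> simp [hp]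
    have hD1 : ∀ R : ℝ, 0 < R →
        IntegrableOn (fun p => ‖S.indicator D p‖ ^ 2) (Metric.closedBall 0 R) := fun R hR => by
      convert hext (hDloc R hR) using 1
      ext p
      by_cases hp : p ∈ S <;> simp [hp]
    have hp1 : ∀ᵐ p, ⟪S.indicator D p, p.2⟫ = 0 := by
      rw [ae_restrict_iff' hSm] at hperp
      filter_upwards [hperp] with p hp
      by_cases hpS : p ∈ S
      · rw [Set.indicator_of_mem hpS, hp hpS]
      · rw [Set.indicator_of_notMem hpS, inner_zero_left]
    have hw1 : ∀ Ψ, TestC N Ψ → ∫ p, ⟪Ψ p, S.indicator D p⟫ =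
        -∫ p, S.indicator F p * divPi N Ψ p.1 p.2 := fun Ψ hΨ => by
      convert hweak Ψ hΨ using 1
      · rw [← integral_indicator hSm]
        congr 1; ext p
        by_cases hp : p ∈ S <;> simp [hp]
      · rw [← integral_indicator hSm]
        congr 2; ext p
        by_cases hp : p ∈ S <;> simp [hp]
    have key := weak_sq_whole (hFmeas.indicator hSm) (hDmeas.indicator hSm) hF1 hD1 hp1 hw1 hΨ
    rw [← integral_indicator hSm, ← integral_indicator hSm]
    convert key using 1
    · congr 1; ext p
      by_cases hp : p ∈ S <;> simp [hp]
    · congr 2; ext p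
      by_cases hp : p ∈ S <;> simp [hp]

end
end
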